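/- Fix real numbers t, r with 0 < t < 1, 0 < r < 1 and r² + t² = 1. Suppose the absolutely continuous part of ν with respect to Haar measure on 𝕋 is a nonzero measure and the topological support of ν has nonempty interior. Then for ℙ-almost every ω ∈ Ω the unitary operator U_ω has pure point spectrum with exponentially decaying eigenfunctions; that is, the closed linear span of the eigenvectors of U_ω equals all of ℓ²(ℤ;ℂ), and for every eigenvector ψ of U_ω there exist constants C > 0 and λ > 0 such that |⟨e_k, ψ⟩| ≤ C e^{−λ|k|} for all k ∈ ℤ. -/

import Mathlib

open MeasureTheory Complex Filter

noncomputable section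

instance : Fact (0 < 2 * Real.pi) := ⟨by positivity⟩

/-- The torus `𝕋 = ℝ/2πℤ`. -/
abbrev Torus : Type := AddCircle (2 * Real.pi)

/-- `ec a = e^{ia}` for `a ∈ 𝕋`. -/
def ec (a : Torus) : ℂ := (AddCircle.toCircle a : ℂ)

/-- The topological support of a measure. -/
def measSupport (ν : Measure Torus) : Set Torus := {x | ∀ s ∈ nhds x, 0 < ν s}

/-- `ℓ²(ℤ;ℂ)`. -/
abbrev Hz : Type := lp (fun _ : ℤ => ℂ) 2

/-- Canonical orthonormal basis of `ℓ²(ℤ;ℂ)`. -/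
def ez (k : ℤ) : Hz := lp.single 2 k (1 : ℂ)

/-- Matrix entries of the operator `S(t)`: `Sent t r k j = ⟨e_k, S e_j⟩`. -/
def Sent (t r : ℝ) (k j : ℤ) : ℂ :=
  if k % 2 = 0 then
    (if j = k - 1 then (r*t : ℝ) else if j = k then (r^2 : ℝ)
     else if j = k + 1 then (r*t : ℝ) else if j = k + 2 then (-t^2 : ℝ) else 0)
  else
    (if j = k - 2 then (-t^2 : ℝ) else if j = k - 1 then (-(r*t) : ℝ)
     else if j = k then (r^2 : ℝ) else if j = k + 1 then (-(r*t) : ℝ) else 0)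

/-!
The transfer cocycle of the walk at a quasi-energy is conjugate to a product of independent random
Möbius maps. A spectral gap, which the absolutely continuous part of the law of the phases
provides, makes fractional moments of the inverse growth decay geometrically in the length of the
product. Hence, at each fixed quasi-energy, almost surely both half-line recursions have a decaying
direction, and by Fubini this holds for almost every quasi-energy. Averaging the spectral measure
of a basis vector over the phase of its own site gives Haar measure, so resampling that phase
carries this statement over from Haar measure to the spectral measures of two neighbouring sites,
and these two vectors are cyclic. Spectrally almost every quasi-energy has a generalized
eigenfunction of at most linear growth, which must then lie on the decaying directions; it is an
eigenvector, so the spectrum is pure point and all eigenvectors decay exponentially.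
-/

section Fourier

variable {T : ℝ} [Fact (0 < T)]

lemma integrable_of_continuous {X E : Type*} [TopologicalSpace X] [CompactSpace X]
    [MeasurableSpace X] [OpensMeasurableSpace X] [NormedAddCommGroup E]
    (μ : Measure X) [IsFiniteMeasureOnCompacts μ] {f : X → E} (hf : Continuous f) :
    Integrable f μ :=
  hf.integrable_of_hasCompactSupport (HasCompactSupport.of_compactSpace f)

@[elab_as_elim]
theorem fourier_induction {p : C(AddCircle T, ℂ) → Prop} (zero : p 0)
    (add : ∀ f g, p f → p g → p (f + g)) (smul : ∀ (c : ℂ) f, p f → p (c • f))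
    (fourier : ∀ n, p (fourier n)) (closed : IsClosed {f | p f}) (f : C(AddCircle T, ℂ)) :
    p f := by
  let S : Submodule ℂ C(AddCircle T, ℂ) :=
    { carrier := {f | p f}
      add_mem' := fun {f g} => add f g
      zero_mem' := zero
      smul_mem' := smul }
  have hspan : Submodule.span ℂ (Set.range (@_root_.fourier T)) ≤ S :=
    Submodule.span_le.2 (Set.range_subset_iff.2 fourier)
  have htop : ⊤ ≤ S :=
    span_fourier_closure_eq_top (T := T) ▸ Submodule.topologicalClosure_minimal _ hspan closed
  exact htop Submodule.mem_top

lemma continuous_integral_continuousMap {X : Type*} [TopologicalSpace X] [CompactSpace X]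
    [MeasurableSpace X] [BorelSpace X] [SecondCountableTopologyEither X ℂ] (μ : Measure X)
    [IsFiniteMeasure μ] : Continuous fun f : C(X, ℂ) => ∫ x, f x ∂μ := by
  have h : (fun f : C(X, ℂ) => ∫ x, f x ∂μ) =
      fun f => ∫ x, ContinuousMap.toLp (E := ℂ) 1 μ ℂ f x ∂μ :=
    funext fun f => (integral_congr_ae (ContinuousMap.coeFn_toLp μ f)).symm
  exact h ▸ continuous_integral.comp (ContinuousMap.toLp (E := ℂ) 1 μ ℂ).continuous

theorem integral_eq_of_integral_fourier_eq {μ₁ μ₂ : Measure (AddCircle T)} [IsFiniteMeasure μ₁]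
    [IsFiniteMeasure μ₂] (h : ∀ n : ℤ, ∫ x, fourier n x ∂μ₁ = ∫ x, fourier n x ∂μ₂)
    (f : C(AddCircle T, ℂ)) : ∫ x, f x ∂μ₁ = ∫ x, f x ∂μ₂ := by
  have hint (μ : Measure (AddCircle T)) [IsFiniteMeasure μ] (f : C(AddCircle T, ℂ)) :
      Integrable f μ := integrable_of_continuous μ f.continuous
  induction f using fourier_induction with
  | zero => simp
  | add f g hf hg => simp [integral_add (hint _ f) (hint _ g), hf, hg]
  | smul c f hf => simp [integral_const_mul, hf]
  | fourier n => exact h n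
  | closed =>
    exact isClosed_eq (continuous_integral_continuousMap μ₁) (continuous_integral_continuousMap μ₂)

theorem measure_ext_of_integral_fourier_eq {μ₁ μ₂ : Measure (AddCircle T)} [IsFiniteMeasure μ₁]
    [IsFiniteMeasure μ₂] (h : ∀ n : ℤ, ∫ x, fourier n x ∂μ₁ = ∫ x, fourier n x ∂μ₂) :
    μ₁ = μ₂ := by
  refine ext_of_forall_integral_eq_of_IsFiniteMeasure fun f => ?_
  have := integral_eq_of_integral_fourier_eq h ⟨fun x => (f x : ℂ), by fun_prop⟩
  simpa only [ContinuousMap.coe_mk, integral_complex_ofReal, Complex.ofReal_inj] using this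

lemma integral_fourier_haarAddCircle (n : ℤ) :
    ∫ y : AddCircle T, fourier n y ∂AddCircle.haarAddCircle = if n = 0 then 1 else 0 := by
  have h := congrFun (fourierCoeff_fourier (T := T) n) 0
  simpa [fourierCoeff, Pi.single_apply, eq_comm] using h

end Fourier

section Phases

@[fun_prop]
lemma continuous_ec : Continuous ec :=
  continuous_subtype_val.comp AddCircle.continuous_toCircle

lemma norm_ec (a : Torus) : ‖ec a‖ = 1 := Circle.norm_coe _

lemma ec_ne_zero (a : Torus) : ec a ≠ 0 := Circle.coe_ne_zero _

lemma ec_zero : ec 0 = 1 := by simp [ec]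

lemma ec_add (a b : Torus) : ec (a + b) = ec a * ec b := by simp [ec, AddCircle.toCircle_add]

lemma ec_neg (a : Torus) : ec (-a) = (ec a)⁻¹ := by simp [ec, AddCircle.toCircle_neg]

lemma conj_ec (a : Torus) : (starRingEnd ℂ) (ec a) = (ec a)⁻¹ := by
  rw [Complex.inv_def, Complex.normSq_eq_norm_sq, norm_ec]; simp

lemma fourier_eq_ec_zpow (n : ℤ) (a : Torus) : fourier n a = ec a ^ n := by
  simp [ec, fourier_apply, AddCircle.toCircle_zsmul]

lemma ec_injective : Function.Injective ec :=
  Subtype.val_injective.comp (AddCircle.injective_toCircle (by positivity))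

lemma ec_coe (x : ℝ) : ec (x : Torus) = Complex.exp (x * I) := by
  rw [ec, AddCircle.toCircle_apply_mk, Circle.coe_exp, div_self (by positivity), one_mul]

lemma ec_arg {w : ℂ} (hw : ‖w‖ = 1) : ec ((w.arg : ℝ) : Torus) = w := by
  simpa [ec_coe, hw] using Complex.norm_mul_exp_arg_mul_I w

lemma circleAverage_eq_integral_ec (φ : ℂ → ℂ) :
    Real.circleAverage φ 0 1 = ∫ y, φ (ec y) ∂AddCircle.haarAddCircle := by
  rw [AddCircle.integral_haarAddCircle, Real.circleAverage_def,
    ← AddCircle.intervalIntegral_preimage (2 * Real.pi) 0 fun y => φ (ec y)]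
  simp [circleMap, ec_coe]

end Phases

section Mobius

/-- The Möbius involution `w ↦ (rw - 1) / (w - r)` of the unit circle, in the angular variable: it
is the action of the transfer matrices on the relative phase of two neighbouring coefficients. -/
def mobius (r : ℝ) (y : Torus) : Torus :=
  ((Complex.arg ((r * ec y - 1) / (ec y - r)) : ℝ) : Torus)

/-- The factor by which a transfer matrix stretches a vector with relative phase `y`; here
`√(1 - r²)` is the transmission amplitude `|t|`. -/
def growth (r : ℝ) (y : Torus) : ℝ := ‖ec y - r‖ / √(1 - r ^ 2)

variable {r : ℝ}

@[fun_prop]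
lemma continuous_growth (r : ℝ) : Continuous (growth r) := by
  unfold growth
  fun_prop

lemma ec_sub_ne_zero (hr : |r| < 1) (y : Torus) : ec y - r ≠ 0 := fun h =>
  hr.ne' <| by simpa [norm_ec] using congrArg norm (sub_eq_zero.1 h)

lemma sqrt_one_sub_sq_pos (hr : |r| < 1) : 0 < √(1 - r ^ 2) :=
  Real.sqrt_pos.2 (sub_pos.2 ((sq_lt_one_iff_abs_lt_one r).2 hr))

lemma sq_sqrt_one_sub_sq (hr : |r| < 1) : √(1 - r ^ 2) ^ 2 = 1 - r ^ 2 :=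
  Real.sq_sqrt (sub_pos.2 ((sq_lt_one_iff_abs_lt_one r).2 hr)).le

lemma one_sub_sq_ne_zero (hr : |r| < 1) : (1 - r ^ 2 : ℂ) ≠ 0 := by
  exact_mod_cast (sub_pos.2 ((sq_lt_one_iff_abs_lt_one r).2 hr)).ne'

lemma growth_pos (hr : |r| < 1) (y : Torus) : 0 < growth r y :=
  div_pos (norm_pos_iff.2 (ec_sub_ne_zero hr y)) (sqrt_one_sub_sq_pos hr)

lemma continuous_inv_growth (hr : |r| < 1) : Continuous fun y => (growth r y)⁻¹ :=
  (continuous_growth r).inv₀ fun y => (growth_pos hr y).ne'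

lemma norm_mobius_quotient (hr : |r| < 1) (y : Torus) :
    ‖(r * ec y - 1) / (ec y - r)‖ = 1 := by
  have h : r * ec y - 1 = -ec y * (starRingEnd ℂ) (ec y - r) := by
    rw [map_sub, conj_ec, Complex.conj_ofReal]
    linear_combination mul_inv_cancel₀ (ec_ne_zero y)
  rw [norm_div, h, norm_mul, norm_neg, norm_ec, RCLike.norm_conj, one_mul,
    div_self (norm_ne_zero_iff.2 (ec_sub_ne_zero hr y))]

lemma ec_mobius (hr : |r| < 1) (y : Torus) :
    ec (mobius r y) = (r * ec y - 1) / (ec y - r) :=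
  ec_arg (norm_mobius_quotient hr y)

lemma continuous_mobius (hr : |r| < 1) : Continuous (mobius r) := by
  have hquot : Continuous fun y => (r * ec y - 1) / (ec y - r) := by
      exact Continuous.div (by fun_prop) (by fun_prop) (ec_sub_ne_zero hr)
  refine continuous_iff_continuousAt.2 fun y => ?_
  have hne : (r * ec y - 1) / (ec y - r) ≠ 0 :=
    norm_ne_zero_iff.1 ((norm_mobius_quotient hr y).trans_ne one_ne_zero)
  exact ContinuousAt.comp (f := fun y => (r * ec y - 1) / (ec y - r))
    (g := fun w : ℂ => ((w.arg : ℝ) : Torus)) (Complex.continuousAt_arg_coe_angle hne)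
    hquot.continuousAt

lemma ec_mobius_sub (hr : |r| < 1) (y : Torus) :
    ec (mobius r y) - r = -(1 - r ^ 2) / (ec y - r) := by
  have := ec_sub_ne_zero hr y
  rw [ec_mobius hr]
  field_simp
  ring

lemma mobius_mobius (hr : |r| < 1) (y : Torus) : mobius r (mobius r y) = y := by
  have := ec_sub_ne_zero hr y
  have := one_sub_sq_ne_zero hr
  apply ec_injective
  rw [ec_mobius hr, ec_mobius_sub hr, ec_mobius hr]
  field_simp
  ring

lemma growth_mobius_mul_growth (hr : |r| < 1) (y : Torus) :
    growth r (mobius r y) * growth r y = 1 := by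
  have hnum : ‖(1 - r ^ 2 : ℂ)‖ = √(1 - r ^ 2) ^ 2 := by
    rw [show (1 - r ^ 2 : ℂ) = (√(1 - r ^ 2) ^ 2 : ℝ) by rw [sq_sqrt_one_sub_sq hr]; norm_cast,
      Complex.norm_of_nonneg (sq_nonneg _)]
  have := norm_ne_zero_iff.2 (ec_sub_ne_zero hr y)
  have := (sqrt_one_sub_sq_pos hr).ne'
  rw [growth, growth, ec_mobius_sub hr, norm_div, norm_neg, hnum]
  field_simp

lemma growth_mobius (hr : |r| < 1) (y : Torus) : growth r (mobius r y) = (growth r y)⁻¹ :=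
  eq_inv_of_mul_eq_one_left (growth_mobius_mul_growth hr y)

lemma inv_growth_sq (hr : |r| < 1) (y : Torus) :
    (growth r y)⁻¹ ^ 2 = poissonKernel 0 r (ec y) := by
  simp [poissonKernel_def, growth, norm_ec, div_pow, sq_sqrt_one_sub_sq hr]

lemma integral_inv_growth_sq_smul_fourier_neg_mobius (hr : |r| < 1) (k : ℕ) :
    ∫ y, (growth r y)⁻¹ ^ 2 • fourier (-(k : ℤ)) (mobius r y) ∂AddCircle.haarAddCircle
      = if k = 0 then 1 else 0 := by
  let h : ℂ → ℂ := fun z => ((z - r) / (r * z - 1)) ^ k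
  have hdenom {z : ℂ} (hz : ‖z‖ ≤ 1) : r * z - 1 ≠ 0 := fun h0 => by
    have h1 : |r| * ‖z‖ = 1 := by simpa using congrArg norm (sub_eq_zero.1 h0)
    nlinarith [abs_nonneg r]
  have hdiff : DiffContOnCl ℂ h (Metric.ball 0 1) := by
    refine DifferentiableOn.diffContOnCl fun z hz => DifferentiableAt.differentiableWithinAt ?_
    have hz' := hdenom (by simpa using Metric.closure_ball_subset_closedBall hz)
    have hquot : DifferentiableAt ℂ (fun z : ℂ => (z - r) / (r * z - 1)) z :=
      DifferentiableAt.div (by fun_prop) (by fun_prop) hz'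
    exact hquot.pow k
  have hpoisson := hdiff.circleAverage_poissonKernel_smul (w := (r : ℂ)) (by simpa using hr)
  rw [circleAverage_eq_integral_ec] at hpoisson
  calc _ = h r := by
        rw [← hpoisson]
        congr 1 with y
        simp only [Pi.smul_apply', h, inv_growth_sq hr, fourier_eq_ec_zpow, ec_mobius hr, zpow_neg,
          zpow_natCast, ← inv_pow, inv_div]
    _ = if k = 0 then 1 else 0 := by simp [h, zero_pow_eq]

lemma integral_inv_growth_sq_smul_fourier_mobius (hr : |r| < 1) (n : ℤ) :
    ∫ y, (growth r y)⁻¹ ^ 2 • fourier n (mobius r y) ∂AddCircle.haarAddCircle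
      = ∫ y : Torus, fourier n y ∂AddCircle.haarAddCircle := by
  rw [integral_fourier_haarAddCircle]
  obtain ⟨k, rfl | rfl⟩ := n.eq_nat_or_neg
  · have h := congrArg (starRingEnd ℂ) (integral_inv_growth_sq_smul_fourier_neg_mobius hr k)
    rw [← integral_conj] at h
    simp_rw [fourier_neg] at h
    simpa [-fourier_apply, apply_ite (starRingEnd ℂ)] using h
  · simpa using integral_inv_growth_sq_smul_fourier_neg_mobius hr k

theorem map_mobius_withDensity (hr : |r| < 1) :
    (AddCircle.haarAddCircle.withDensity fun y => ENNReal.ofReal ((growth r y)⁻¹ ^ 2)).map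
      (mobius r) = AddCircle.haarAddCircle := by
  have hG := continuous_inv_growth hr
  have hm := continuous_mobius hr
  have : IsFiniteMeasure (AddCircle.haarAddCircle.withDensity
      fun y => ENNReal.ofReal ((growth r y)⁻¹ ^ 2)) :=
    isFiniteMeasure_withDensity_ofReal
      (integrable_of_continuous AddCircle.haarAddCircle (by fun_prop)).2
  refine measure_ext_of_integral_fourier_eq fun n => ?_
  rw [integral_map hm.aemeasurable (fourier n).continuous.aestronglyMeasurable,
    integral_withDensity_eq_integral_toReal_smul (by fun_prop) (by simp),
    ← integral_inv_growth_sq_smul_fourier_mobius hr n]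
  congr 1 with y
  rw [ENNReal.toReal_ofReal (by positivity)]

theorem integral_inv_growth_sq_mul_comp_mobius (hr : |r| < 1) {F : Torus → ℝ}
    (hF : Continuous F) :
    ∫ y, (growth r y)⁻¹ ^ 2 * F (mobius r y) ∂AddCircle.haarAddCircle
      = ∫ y, F y ∂AddCircle.haarAddCircle := by
  have hm := continuous_mobius hr
  conv_rhs => rw [← map_mobius_withDensity hr]
  rw [integral_map hm.aemeasurable hF.aestronglyMeasurable,
    integral_withDensity_eq_integral_toReal_smul (by fun_prop) (by simp)]
  congr 1 with y
  rw [ENNReal.toReal_ofReal (by positivity), smul_eq_mul]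

lemma integral_inv_growth_sq (hr : |r| < 1) :
    ∫ y, (growth r y)⁻¹ ^ 2 ∂AddCircle.haarAddCircle = 1 := by
  simpa using integral_inv_growth_sq_mul_comp_mobius hr (F := fun _ => 1) continuous_const

lemma inv_growth_zero_ne_one (hr0 : r ≠ 0) (hr : |r| < 1) : (growth r 0)⁻¹ ≠ 1 := by
  intro h
  have hnum : ‖(1 - r : ℂ)‖ = 1 - r := by
    exact_mod_cast Complex.norm_of_nonneg (sub_pos.2 (lt_of_abs_lt hr)).le
  have hpos : 1 - r ≠ 0 := (sub_pos.2 (lt_of_abs_lt hr)).ne'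
  have heq : √(1 - r ^ 2) = 1 - r := by
    simpa [growth, ec_zero, hnum, div_eq_iff hpos] using h
  have hsq := sq_sqrt_one_sub_sq hr
  rw [heq] at hsq
  exact mul_ne_zero hr0 hpos (by linarith)

theorem integral_inv_growth_lt_one (hr0 : r ≠ 0) (hr : |r| < 1) :
    ∫ y, (growth r y)⁻¹ ∂AddCircle.haarAddCircle < 1 := by
  have hG := continuous_inv_growth hr
  have hpos : 0 < ∫ y, ((growth r y)⁻¹ - 1) ^ 2 ∂AddCircle.haarAddCircle :=
    Continuous.integral_pos_of_hasCompactSupport_nonneg_nonzero (x := 0) (by fun_prop)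
      (HasCompactSupport.of_compactSpace _) (fun y => sq_nonneg _)
      (pow_ne_zero 2 (sub_ne_zero.2 (inv_growth_zero_ne_one hr0 hr)))
  have hint (f : Torus → ℝ) (hf : Continuous f) : Integrable f AddCircle.haarAddCircle :=
    integrable_of_continuous _ hf
  have hexpand : ∫ y, ((growth r y)⁻¹ - 1) ^ 2 ∂AddCircle.haarAddCircle
      = 2 - 2 * ∫ y, (growth r y)⁻¹ ∂AddCircle.haarAddCircle := by
    simp_rw [sub_sq, mul_one]
    rw [integral_add (hint _ (by fun_prop)) (hint _ (by fun_prop)),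
      integral_sub (hint _ (by fun_prop)) (hint _ (by fun_prop)), integral_inv_growth_sq hr,
      integral_const_mul]
    simp
    ring
  linarith

lemma exists_growth_le (hr : |r| < 1) :
    ∃ L, 1 ≤ L ∧ ∀ y, growth r y ≤ L ∧ (growth r y)⁻¹ ≤ L := by
  obtain ⟨L, hL⟩ := (isCompact_range (continuous_growth r)).bddAbove
  have hle (y) : growth r y ≤ max 1 L := (hL ⟨y, rfl⟩).trans (le_max_right _ _)
  exact ⟨max 1 L, le_max_left _ _, fun y => ⟨hle y, growth_mobius hr y ▸ hle (mobius r y)⟩⟩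

end Mobius

section FourierGap

lemma exists_forall_le_of_eventually_cofinite {ι α : Type*} [LinearOrder α] {f : ι → α} {a b : α}
    (hf : ∀ i, f i < a) (hb : b < a) (h : ∀ᶠ i in cofinite, f i ≤ b) :
    ∃ q < a, ∀ i, f i ≤ q := by
  rcases Set.eq_empty_or_nonempty {i | ¬ f i ≤ b} with hs | hs
  · exact ⟨b, hb, fun i => not_not.1 (Set.eq_empty_iff_forall_notMem.1 hs i)⟩
  · obtain ⟨i₀, -, hmax⟩ := Set.exists_max_image _ f h hs
    refine ⟨max b (f i₀), max_lt hb (hf i₀), fun i => ?_⟩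
    by_cases hi : f i ≤ b
    · exact le_max_of_le_left hi
    · exact le_max_of_le_right (hmax i hi)

lemma exists_eq_add_le_of_not_mutuallySingular {X : Type*} [MeasurableSpace X] {ν μ : Measure X}
    [IsFiniteMeasure ν] [SigmaFinite μ] (h : ¬ ν ⟂ₘ μ) :
    ∃ ν₁ ν₂ : Measure X, ν = ν₁ + ν₂ ∧ ν₁ ≤ μ ∧ ν₁ ≠ 0 := by
  have hd : Measurable (ν.rnDeriv μ) := Measure.measurable_rnDeriv ν μ
  set ν₁ : Measure X := μ.withDensity fun y => min (ν.rnDeriv μ y) 1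
  have hle : ν₁ ≤ ν :=
    (withDensity_mono (Eventually.of_forall fun y => min_le_left _ _)).trans
      (Measure.withDensity_rnDeriv_le _ _)
  have : IsFiniteMeasure ν₁ := isFiniteMeasure_of_le ν hle
  refine ⟨ν₁, ν - ν₁, ?_, ?_, fun h0 => h ?_⟩
  · rw [add_comm, Measure.sub_add_cancel_of_le hle]
  · exact (withDensity_mono (Eventually.of_forall fun y => min_le_right _ _)).trans_eq
      withDensity_one
  · rw [withDensity_eq_zero_iff (hd.min measurable_const).aemeasurable] at h0
    rw [← Measure.rnDeriv_eq_zero]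
    filter_upwards [h0] with y hy
    simpa using hy

variable {T : ℝ}

lemma norm_fourier_apply (n : ℤ) (y : AddCircle T) : ‖fourier n y‖ = 1 := by
  rw [fourier_apply, Circle.norm_coe]

lemma norm_integral_fourier_le (ν : Measure (AddCircle T)) [IsFiniteMeasure ν] (n : ℤ) :
    ‖∫ y, fourier n y ∂ν‖ ≤ ν.real Set.univ := by
  simpa using norm_integral_le_of_norm_le_const (μ := ν)
    (Eventually.of_forall fun y => (norm_fourier_apply n y).le)

variable [Fact (0 < T)]

theorem tendsto_integral_fourier_of_le_haarAddCircle {ν : Measure (AddCircle T)}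
    (hν : ν ≤ AddCircle.haarAddCircle) :
    Tendsto (fun n : ℤ => ‖∫ y, fourier n y ∂ν‖) cofinite (nhds 0) := by
  have : IsFiniteMeasure ν := isFiniteMeasure_of_le _ hν
  let F : AddCircle T → ℂ := fun y => (ν.rnDeriv AddCircle.haarAddCircle y).toReal
  have hF : MemLp F 2 AddCircle.haarAddCircle := by
    refine MemLp.of_bound
      (Measure.measurable_rnDeriv _ _).ennreal_toReal.complex_ofReal.aestronglyMeasurable 1 ?_
    filter_upwards [Measure.rnDeriv_le_one_of_le hν] with y hy
    simpa [F] using ENNReal.toReal_mono ENNReal.one_ne_top hy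
  have hcoeff (n : ℤ) : fourierCoeff (hF.toLp F) (-n) = ∫ y, fourier n y ∂ν := by
    rw [fourierCoeff_congr_ae hF.coeFn_toLp, fourierCoeff,
      ← integral_rnDeriv_smul (Measure.absolutelyContinuous_of_le hν)]
    simp [F, mul_comm]
  have hsq := (hasSum_sq_fourierCoeff (hF.toLp F)).summable.tendsto_cofinite_zero.comp
    (neg_injective (G := ℤ)).tendsto_cofinite
  simpa [Function.comp_def, hcoeff] using (Real.continuous_sqrt.tendsto 0).comp hsq

lemma norm_integral_fourier_lt_one {ν : Measure (AddCircle T)} [IsProbabilityMeasure ν]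
    (hν : ¬ ν ⟂ₘ AddCircle.haarAddCircle) {n : ℤ} (hn : n ≠ 0) :
    ‖∫ y, fourier n y ∂ν‖ < 1 := by
  obtain ⟨ν₁, ν₂, hsum, hle, hne⟩ := exists_eq_add_le_of_not_mutuallySingular hν
  have : IsFiniteMeasure ν₁ := isFiniteMeasure_of_le _ hle
  have : NeZero ν₁ := ⟨hne⟩
  have hac : ν₁ ≪ ν := Measure.absolutelyContinuous_of_le (hsum ▸ Measure.le_add_right le_rfl)
  refine (ae_eq_const_or_norm_integral_lt_of_norm_le_const (μ := ν) (C := 1) (f := fourier n)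
    (Eventually.of_forall fun y => (norm_fourier_apply n y).le)).elim (fun h => ?_) (by simp)
  -- If `fourier n` were a.e. constant, all the coefficients of `ν₁` along multiples of `n` would
  -- have modulus `ν₁ univ`, against the Riemann-Lebesgue lemma.
  set c := ⨍ y, fourier n y ∂ν
  have hc : ∀ᵐ y ∂ν₁, fourier n y = c := hac h
  have hnorm : ‖c‖ = 1 := by
    obtain ⟨y, hy⟩ := hc.exists
    rw [← hy, norm_fourier_apply]
  have hmul (k : ℕ) : ‖∫ y, fourier (n * k) y ∂ν₁‖ = ν₁.real Set.univ := by
    have : ∫ y, fourier (n * k) y ∂ν₁ = ∫ _, c ^ k ∂ν₁ := by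
      refine integral_congr_ae (hc.mono fun y hy => ?_)
      simp only [← hy, fourier_apply, mul_comm n, mul_zsmul, AddCircle.toCircle_zsmul]
      simp
    rw [this, integral_const, norm_smul, norm_pow, hnorm]
    simp
  have hinj : Function.Injective fun k : ℕ => n * (k : ℤ) := fun a b hab => by
    exact_mod_cast mul_left_cancel₀ hn hab
  have hlim := (tendsto_integral_fourier_of_le_haarAddCircle hle).comp hinj.tendsto_cofinite
  simp only [Function.comp_def, hmul] at hlim
  exact absurd (tendsto_nhds_unique hlim tendsto_const_nhds).symm measureReal_univ_ne_zero

theorem exists_norm_integral_fourier_le {ν : Measure (AddCircle T)} [IsProbabilityMeasure ν]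
    (hν : ¬ ν ⟂ₘ AddCircle.haarAddCircle) :
    ∃ q < 1, ∀ n : ℤ, n ≠ 0 → ‖∫ y, fourier n y ∂ν‖ ≤ q := by
  obtain ⟨ν₁, ν₂, rfl, hle, hne⟩ := exists_eq_add_le_of_not_mutuallySingular hν
  have : IsFiniteMeasure ν₁ := isFiniteMeasure_of_le (ν₁ + ν₂) (Measure.le_add_right le_rfl)
  have : IsFiniteMeasure ν₂ := isFiniteMeasure_of_le (ν₁ + ν₂) (Measure.le_add_left le_rfl)
  have : NeZero ν₁ := ⟨hne⟩
  have hmass : 0 < ν₁.real Set.univ := measureReal_univ_pos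
  have htotal : ν₁.real Set.univ + ν₂.real Set.univ = 1 := by
    rw [← measureReal_add_apply, probReal_univ]
  have hlarge : ∀ᶠ n : ℤ in cofinite,
      ‖∫ y, fourier n y ∂(ν₁ + ν₂)‖ ≤ 1 - ν₁.real Set.univ / 2 := by
    filter_upwards [(tendsto_integral_fourier_of_le_haarAddCircle hle).eventually
      (gt_mem_nhds (half_pos hmass))] with n hn
    rw [integral_add_measure (integrable_of_continuous ν₁ (fourier n).continuous)
      (integrable_of_continuous ν₂ (fourier n).continuous)]
    linarith [norm_add_le (∫ y, fourier n y ∂ν₁) (∫ y, fourier n y ∂ν₂),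
      norm_integral_fourier_le ν₂ n]
  obtain ⟨q, hq, h⟩ := exists_forall_le_of_eventually_cofinite
    (f := fun n : {n : ℤ // n ≠ 0} => ‖∫ y, fourier n y ∂(ν₁ + ν₂)‖)
    (fun n => norm_integral_fourier_lt_one hν n.2) (by linarith : 1 - ν₁.real Set.univ / 2 < 1)
    (Subtype.val_injective.tendsto_cofinite.eventually hlarge)
  exact ⟨q, hq, fun n hn => h ⟨n, hn⟩⟩

end FourierGap

section PhaseAverage

variable {T : ℝ}

/-- The average of `h` over random rotations by `β a`, where `a` has law `ν`. -/
def phaseAverage {X : Type*} [MeasurableSpace X] (ν : Measure X) (β : X → AddCircle T)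
    (h : AddCircle T → ℝ) (y : AddCircle T) : ℝ :=
  ∫ a, h (β a + y) ∂ν

lemma fourier_apply_add (n : ℤ) (x y : AddCircle T) :
    fourier n (x + y) = fourier n x * fourier n y := by
  simp [fourier_apply, smul_add, AddCircle.toCircle_add]

variable {X : Type*} [TopologicalSpace X] [CompactSpace X] [MeasurableSpace X] [BorelSpace X]
  {ν : Measure X} [IsProbabilityMeasure ν] {β : X → AddCircle T} {h : AddCircle T → ℝ}

lemma continuous_phaseAverage (ν : Measure X) [IsProbabilityMeasure ν] (hβ : Continuous β)
    (hh : Continuous h) : Continuous (phaseAverage ν β h) := by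
  have hcont : Continuous (Function.uncurry fun y a => h (β a + y)) := by
    unfold Function.uncurry
    fun_prop
  have hint := continuous_parametric_integral_of_continuous (μ := ν) hcont isCompact_univ
  rwa [Measure.restrict_univ] at hint

variable [Fact (0 < T)] [SecondCountableTopology X]

lemma hasSum_sq_fourierCoeff_ofReal {h : AddCircle T → ℝ} (hh : Continuous h) :
    HasSum (fun n : ℤ => ‖fourierCoeff (fun y => (h y : ℂ)) n‖ ^ 2)
      (∫ y, h y ^ 2 ∂AddCircle.haarAddCircle) := by
  let F : C(AddCircle T, ℂ) := ⟨fun y => (h y : ℂ), by fun_prop⟩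
  have hsum := hasSum_sq_fourierCoeff (ContinuousMap.toLp (E := ℂ) 2 AddCircle.haarAddCircle ℂ F)
  have hnorm : ∫ y, ‖ContinuousMap.toLp (E := ℂ) 2 AddCircle.haarAddCircle ℂ F y‖ ^ 2
      ∂AddCircle.haarAddCircle = ∫ y, h y ^ 2 ∂AddCircle.haarAddCircle := by
    refine integral_congr_ae ?_
    filter_upwards [ContinuousMap.coeFn_toLp (𝕜 := ℂ) (p := 2) AddCircle.haarAddCircle F] with y hy
    rw [hy]
    simp [F]
  rw [hnorm] at hsum
  simp_rw [fourierCoeff_toLp] at hsum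
  exact hsum

lemma integral_phaseAverage (ν : Measure X) [IsProbabilityMeasure ν] (hβ : Continuous β)
    (hh : Continuous h) :
    ∫ y, phaseAverage ν β h y ∂AddCircle.haarAddCircle = ∫ y, h y ∂AddCircle.haarAddCircle := by
  have hcont : Continuous (Function.uncurry fun (y : AddCircle T) (a : X) => h (β a + y)) := by
    unfold Function.uncurry
    fun_prop
  unfold phaseAverage
  rw [integral_integral_swap (integrable_of_continuous _ hcont)]
  simp [integral_add_left_eq_self h]

lemma fourierCoeff_phaseAverage (ν : Measure X) [IsProbabilityMeasure ν] (hβ : Continuous β)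
    (hh : Continuous h) (n : ℤ) :
    fourierCoeff (fun y => (phaseAverage ν β h y : ℂ)) n
      = fourierCoeff (fun y => (h y : ℂ)) n * ∫ a, fourier n (β a) ∂ν := by
  let f (y : AddCircle T) (a : X) : ℂ := fourier (-n) y * (h (β a + y) : ℂ)
  have hcont : Continuous (Function.uncurry f) := by
    simp only [f, Function.uncurry_def]
    fun_prop
  have hshift (a : X) (y : AddCircle T) :
      f y a = fourier n (β a) * (fourier (-n) (β a + y) * (h (β a + y) : ℂ)) := by
    have hinv : fourier n (β a) * fourier (-n) (β a) = 1 := by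
      rw [← fourier_add, add_neg_cancel, fourier_zero]
    rw [fourier_apply_add, ← mul_assoc, ← mul_assoc, hinv, one_mul]
  calc fourierCoeff (fun y => (phaseAverage ν β h y : ℂ)) n
      = ∫ y, ∫ a, f y a ∂ν ∂AddCircle.haarAddCircle := by
        simp_rw [fourierCoeff, phaseAverage, f, integral_const_mul, integral_complex_ofReal,
          smul_eq_mul]
    _ = ∫ a, ∫ y, f y a ∂AddCircle.haarAddCircle ∂ν :=
        integral_integral_swap (integrable_of_continuous _ hcont)
    _ = ∫ a, fourier n (β a) * fourierCoeff (fun y => (h y : ℂ)) n ∂ν := by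
        simp_rw [hshift, integral_const_mul, fourierCoeff, smul_eq_mul,
          integral_add_left_eq_self fun y => fourier (-n) y * (h y : ℂ)]
    _ = _ := by rw [integral_mul_const, mul_comm]

theorem integral_sq_phaseAverage_le (hβ : Continuous β) {q : ℝ}
    (hq : ∀ n : ℤ, n ≠ 0 → ‖∫ a, fourier n (β a) ∂ν‖ ≤ q) (hh : Continuous h) :
    ∫ y, phaseAverage ν β h y ^ 2 ∂AddCircle.haarAddCircle ≤
      (∫ y, h y ∂AddCircle.haarAddCircle) ^ 2 +
        q ^ 2 * (∫ y, h y ^ 2 ∂AddCircle.haarAddCircle -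
          (∫ y, h y ∂AddCircle.haarAddCircle) ^ 2) := by
  have hzero : ‖fourierCoeff (fun y => (h y : ℂ)) 0‖ = |∫ y, h y ∂AddCircle.haarAddCircle| := by
    simp [fourierCoeff, integral_complex_ofReal]
  have hle := hasSum_le (fun n => ?_)
    (hasSum_sq_fourierCoeff_ofReal (continuous_phaseAverage ν hβ hh))
    (((hasSum_sq_fourierCoeff_ofReal hh).mul_left (q ^ 2)).add
      (hasSum_ite_eq (0 : ℤ) ((1 - q ^ 2) * (∫ y, h y ∂AddCircle.haarAddCircle) ^ 2)))
  · linarith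
  rw [fourierCoeff_phaseAverage ν hβ hh, norm_mul, mul_pow]
  split_ifs with hn
  · subst hn
    rw [hzero, sq_abs]
    simp
    linarith
  · rw [add_zero, mul_comm]
    gcongr
    exact hq n hn

end PhaseAverage

section TransferOperator

/-- The transfer operator of the `s`-th negative power of the growth along the Möbius dynamics. -/
def transferOp (r s : ℝ) (F : Torus → ℝ) (y : Torus) : ℝ :=
  (growth r y)⁻¹ ^ s * F (mobius r y)

variable {r : ℝ} {F : Torus → ℝ}

lemma continuous_transferOp (hr : |r| < 1) (s : ℝ) (hF : Continuous F) :
    Continuous (transferOp r s F) :=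
  ((continuous_inv_growth hr).rpow_const fun y => Or.inl (inv_pos.2 (growth_pos hr y)).ne').mul
    (hF.comp (continuous_mobius hr))

lemma transferOp_nonneg (hr : |r| < 1) (s : ℝ) (hF : ∀ y, 0 ≤ F y) (y : Torus) :
    0 ≤ transferOp r s F y :=
  mul_nonneg (Real.rpow_nonneg (inv_pos.2 (growth_pos hr y)).le s) (hF _)

lemma integral_transferOp_one_sq (hr : |r| < 1) (hF : Continuous F) :
    ∫ y, transferOp r 1 F y ^ 2 ∂AddCircle.haarAddCircle
      = ∫ y, F y ^ 2 ∂AddCircle.haarAddCircle := by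
  simp_rw [transferOp, Real.rpow_one, mul_pow]
  exact integral_inv_growth_sq_mul_comp_mobius hr (F := fun y => F y ^ 2) (by fun_prop)

lemma integral_sq_sub_integral {X : Type*} [MeasurableSpace X] {μ : Measure X}
    [IsProbabilityMeasure μ] {f : X → ℝ} (hf : MemLp f 2 μ) :
    ∫ x, (f x - ∫ x, f x ∂μ) ^ 2 ∂μ = ∫ x, f x ^ 2 ∂μ - (∫ x, f x ∂μ) ^ 2 :=
  (ProbabilityTheory.variance_eq_integral hf.aemeasurable).symm.trans
    (ProbabilityTheory.variance_eq_sub hf)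

lemma sq_integral_le {X : Type*} [MeasurableSpace X] {μ : Measure X} [IsProbabilityMeasure μ]
    {f : X → ℝ} (hf : MemLp f 2 μ) : (∫ x, f x ∂μ) ^ 2 ≤ ∫ x, f x ^ 2 ∂μ :=
  sub_nonneg.1 <| integral_sq_sub_integral hf ▸ integral_nonneg fun _ => sq_nonneg _

lemma memLp_two_of_continuous {f : Torus → ℝ} (hf : Continuous f) :
    MemLp f 2 (AddCircle.haarAddCircle (T := 2 * Real.pi)) :=
  hf.memLp_of_hasCompactSupport (HasCompactSupport.of_compactSpace f)

lemma sq_integral_transferOp_sub_le (hr : |r| < 1) (hF : Continuous F) :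
    (∫ y, transferOp r 1 F y ∂AddCircle.haarAddCircle -
        (∫ y, F y ∂AddCircle.haarAddCircle) * ∫ y, (growth r y)⁻¹ ∂AddCircle.haarAddCircle) ^ 2
      ≤ ∫ y, F y ^ 2 ∂AddCircle.haarAddCircle - (∫ y, F y ∂AddCircle.haarAddCircle) ^ 2 := by
  set c := ∫ y, F y ∂AddCircle.haarAddCircle
  have hcent : Continuous fun y => F y - c := hF.sub continuous_const
  have hsub : ∫ y, transferOp r 1 (fun y => F y - c) y ∂AddCircle.haarAddCircle =
      ∫ y, transferOp r 1 F y ∂AddCircle.haarAddCircle -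
        c * ∫ y, (growth r y)⁻¹ ∂AddCircle.haarAddCircle := by
    rw [← integral_const_mul, ← integral_sub
      (integrable_of_continuous _ (continuous_transferOp hr 1 hF))
      (integrable_of_continuous _ ((continuous_inv_growth hr).const_mul c))]
    congr 1 with y
    simp only [transferOp, Real.rpow_one]
    ring
  calc _ ≤ ∫ y, transferOp r 1 (fun y => F y - c) y ^ 2 ∂AddCircle.haarAddCircle :=
        hsub ▸ sq_integral_le (memLp_two_of_continuous (continuous_transferOp hr 1 hcent))
    _ = ∫ y, (F y - c) ^ 2 ∂AddCircle.haarAddCircle := integral_transferOp_one_sq hr hcent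
    _ = _ := integral_sq_sub_integral (memLp_two_of_continuous hF)

/- If both means `c`, `c'` were close to the `L²` norms then `N₁ - c²` would be small, so `c'` would
be close to `c κ`, hence noticeably smaller than `√N`. -/
lemma two_step_bound {q κ N N₁ N₂ c c' : ℝ} (hq0 : 0 ≤ q) (hq1 : q < 1) (hκ0 : 0 ≤ κ) (hκ1 : κ < 1)
    (hc' : 0 ≤ c') (hN₁ : N₁ ≤ c ^ 2 + q ^ 2 * (N - c ^ 2))
    (hN₂ : N₂ ≤ c' ^ 2 + q ^ 2 * (N₁ - c' ^ 2)) (hcN : c ^ 2 ≤ N) (hcN₁ : c' ^ 2 ≤ N₁)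
    (hvar : (c' - c * κ) ^ 2 ≤ N₁ - c ^ 2) :
    N₂ ≤ (1 - (1 - q ^ 2) * ((1 - κ) / 2) ^ 2) * N := by
  obtain ⟨d, rfl⟩ : ∃ d, κ = 1 - 2 * d := ⟨(1 - κ) / 2, by ring⟩
  rw [show (1 - (1 - 2 * d)) / 2 = d by ring]
  have hd0 : 0 < d := by linarith
  have hd1 : d ≤ 1 / 2 := by linarith
  have hqq : 0 < 1 - q ^ 2 := by nlinarith
  have hN : N₁ ≤ N := by nlinarith [mul_nonneg hqq.le (sub_nonneg.2 hcN)]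
  have hN0 : 0 ≤ N := (sq_nonneg c).trans hcN
  by_contra! hcon
  have hc'_large : (1 - d ^ 2) * N < c' ^ 2 := by
    refine lt_of_mul_lt_mul_left ?_ hqq.le
    nlinarith [mul_nonneg (sq_nonneg q) (sub_nonneg.2 hN)]
  have hc_large : (1 - d ^ 2) * N < c ^ 2 := by
    refine lt_of_mul_lt_mul_left ?_ hqq.le
    nlinarith [mul_nonneg (sq_nonneg q) (sub_nonneg.2 hN),
      mul_nonneg hqq.le (sub_nonneg.2 hcN₁)]
  obtain ⟨m, hm0, rfl⟩ : ∃ m, 0 ≤ m ∧ N = m ^ 2 := ⟨√N, Real.sqrt_nonneg _, (Real.sq_sqrt hN0).symm⟩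
  have hcm : c ≤ m := (abs_le_of_sq_le_sq' hcN hm0).2
  have hclose : c' - c * (1 - 2 * d) ≤ d * m :=
    (abs_le_of_sq_le_sq' (by rw [mul_pow]; linarith) (by positivity)).2
  have hc'_small : c' ≤ (1 - d) * m := by nlinarith [mul_nonneg hκ0 (sub_nonneg.2 hcm)]
  have : c' ^ 2 ≤ ((1 - d) * m) ^ 2 := by gcongr
  nlinarith [mul_nonneg (mul_nonneg hd0.le (sub_nonneg.2 hd1)) (sq_nonneg m)]

variable {X : Type*} [TopologicalSpace X] [CompactSpace X] [MeasurableSpace X] [BorelSpace X]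
  [SecondCountableTopology X] {ν : Measure X} [IsProbabilityMeasure ν] {β β' : X → Torus} {q : ℝ}

lemma integral_sq_phaseAverage_transferOp_le (hr : |r| < 1) (hβ : Continuous β) (hq1 : q ^ 2 ≤ 1)
    (hq : ∀ n : ℤ, n ≠ 0 → ‖∫ a, fourier n (β a) ∂ν‖ ≤ q) (hF : Continuous F) :
    ∫ y, phaseAverage ν β (transferOp r 1 F) y ^ 2 ∂AddCircle.haarAddCircle
      ≤ ∫ y, F y ^ 2 ∂AddCircle.haarAddCircle := by
  have hK := continuous_transferOp hr 1 hF
  have hle := integral_sq_phaseAverage_le hβ hq hK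
  have hmean := sq_integral_le (memLp_two_of_continuous hK)
  rw [integral_transferOp_one_sq hr hF] at hle hmean
  nlinarith

theorem integral_sq_two_step_le (hr0 : r ≠ 0) (hr : |r| < 1) (hβ : Continuous β)
    (hβ' : Continuous β') (hq0 : 0 ≤ q) (hq1 : q < 1)
    (hq : ∀ n : ℤ, n ≠ 0 → ‖∫ a, fourier n (β a) ∂ν‖ ≤ q)
    (hq' : ∀ n : ℤ, n ≠ 0 → ‖∫ a, fourier n (β' a) ∂ν‖ ≤ q)
    (hF : Continuous F) (hF0 : ∀ y, 0 ≤ F y) :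
    ∫ y, phaseAverage ν β' (transferOp r 1 (phaseAverage ν β (transferOp r 1 F))) y ^ 2
        ∂AddCircle.haarAddCircle ≤
      (1 - (1 - q ^ 2) * ((1 - ∫ y, (growth r y)⁻¹ ∂AddCircle.haarAddCircle) / 2) ^ 2) *
        ∫ y, F y ^ 2 ∂AddCircle.haarAddCircle := by
  have hK := continuous_transferOp hr 1 hF
  set F₁ := phaseAverage ν β (transferOp r 1 F) with hF₁def
  have hF₁ : Continuous F₁ := continuous_phaseAverage ν hβ hK
  have hF₁0 (y : Torus) : 0 ≤ F₁ y := integral_nonneg fun _ => transferOp_nonneg hr 1 hF0 _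
  have hK₁ := continuous_transferOp hr 1 hF₁
  have hN₁ := integral_sq_phaseAverage_le hβ hq hK
  have hN₂ := integral_sq_phaseAverage_le hβ' hq' hK₁
  have hcN := sq_integral_le (memLp_two_of_continuous hK)
  have hcN₁ := sq_integral_le (memLp_two_of_continuous hK₁)
  rw [integral_transferOp_one_sq hr hF, ← integral_phaseAverage ν hβ hK, ← hF₁def] at hN₁ hcN
  rw [integral_transferOp_one_sq hr hF₁] at hN₂ hcN₁
  exact two_step_bound hq0 hq1 (integral_nonneg fun y => (inv_pos.2 (growth_pos hr y)).le)
    (integral_inv_growth_lt_one hr0 hr) (integral_nonneg (transferOp_nonneg hr 1 hF₁0))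
    hN₁ hN₂ hcN hcN₁ (sq_integral_transferOp_sub_le hr hF₁)

end TransferOperator

section MeanTransfer

/-- The mean over `n` independent phases with law `ν` of the `s`-th negative power of the growth
along an orbit of length `n`, as a function of its end point; the `n`-th phase `a` enters through
the rotation by `β n a`. -/
def meanTransfer {X : Type*} [MeasurableSpace X] (r : ℝ) (ν : Measure X) (β : ℕ → X → Torus)
    (s : ℝ) : ℕ → Torus → ℝ
  | 0 => fun _ => 1
  | n + 1 => phaseAverage ν (β n) (transferOp r s (meanTransfer r ν β s n))

variable {X : Type*} [MeasurableSpace X] {r s : ℝ} {ν : Measure X} {β : ℕ → X → Torus}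

lemma meanTransfer_nonneg (hr : |r| < 1) (ν : Measure X) (β : ℕ → X → Torus) (s : ℝ) (n : ℕ)
    (y : Torus) : 0 ≤ meanTransfer r ν β s n y := by
  induction n generalizing y with
  | zero => exact zero_le_one
  | succ n ih => exact integral_nonneg fun _ => transferOp_nonneg hr s ih _

lemma exists_sq_eq_of_mem_Ioo {q κ : ℝ} (hq0 : 0 ≤ q) (hq1 : q < 1) (hκ0 : 0 ≤ κ) (hκ1 : κ < 1) :
    ∃ ρ ∈ Set.Ioo (0 : ℝ) 1, ρ ^ 2 = 1 - (1 - q ^ 2) * ((1 - κ) / 2) ^ 2 := by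
  have hq : 0 < 1 - q ^ 2 := by nlinarith
  have hd0 : 0 < ((1 - κ) / 2) ^ 2 := by nlinarith
  have hd1 : ((1 - κ) / 2) ^ 2 < 1 := by nlinarith
  have hpos : 0 < 1 - (1 - q ^ 2) * ((1 - κ) / 2) ^ 2 := by nlinarith [sq_nonneg q]
  have hlt : 1 - (1 - q ^ 2) * ((1 - κ) / 2) ^ 2 < 1 := by nlinarith
  exact ⟨√_, ⟨Real.sqrt_pos.2 hpos, (Real.sqrt_lt' one_pos).2 (by rwa [one_pow])⟩,
    Real.sq_sqrt hpos.le⟩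

variable [TopologicalSpace X] [CompactSpace X] [BorelSpace X] [IsProbabilityMeasure ν]

lemma continuous_meanTransfer (hr : |r| < 1) (ν : Measure X) [IsProbabilityMeasure ν]
    (hβ : ∀ n, Continuous (β n)) (s : ℝ) (n : ℕ) : Continuous (meanTransfer r ν β s n) := by
  induction n with
  | zero => exact continuous_const
  | succ n ih => exact continuous_phaseAverage ν (hβ n) (continuous_transferOp hr s ih)

section SecondCountable

variable [SecondCountableTopology X]

lemma integral_sq_meanTransfer_one_le (hr0 : r ≠ 0) (hr : |r| < 1) (hβ : ∀ n, Continuous (β n))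
    {q : ℝ} (hq0 : 0 ≤ q) (hq1 : q < 1)
    (hq : ∀ k, ∀ n : ℤ, n ≠ 0 → ‖∫ a, fourier n (β k a) ∂ν‖ ≤ q) {ρ : ℝ} (hρ : ρ ∈ Set.Ioo 0 1)
    (hρ2 : ρ ^ 2 =
      1 - (1 - q ^ 2) * ((1 - ∫ y, (growth r y)⁻¹ ∂AddCircle.haarAddCircle) / 2) ^ 2) (n : ℕ) :
    ∫ y, meanTransfer r ν β 1 n y ^ 2 ∂AddCircle.haarAddCircle ≤ ρ⁻¹ * ρ ^ n := by
  have hzero : ∫ y, meanTransfer r ν β 1 0 y ^ 2 ∂AddCircle.haarAddCircle = 1 := by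
    simp [meanTransfer]
  have hcont := continuous_meanTransfer hr ν hβ 1
  induction n using Nat.twoStepInduction with
  | zero =>
    rw [hzero, pow_zero, mul_one]
    exact (one_le_inv₀ hρ.1).2 hρ.2.le
  | one =>
    rw [pow_one, inv_mul_cancel₀ hρ.1.ne']
    exact (integral_sq_phaseAverage_transferOp_le hr (hβ 0) (pow_le_one₀ hq0 hq1.le) (hq 0)
      (hcont 0)).trans_eq hzero
  | more n ih _ =>
    calc _ ≤ ρ ^ 2 * ∫ y, meanTransfer r ν β 1 n y ^ 2 ∂AddCircle.haarAddCircle :=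
          hρ2 ▸ integral_sq_two_step_le hr0 hr (hβ n) (hβ (n + 1)) hq0 hq1 (hq n) (hq (n + 1))
            (hcont n) (meanTransfer_nonneg hr ν β 1 n)
      _ ≤ ρ ^ 2 * (ρ⁻¹ * ρ ^ n) := by gcongr
      _ = ρ⁻¹ * ρ ^ (n + 2) := by ring

theorem exists_integral_meanTransfer_one_le (hr0 : r ≠ 0) (hr : |r| < 1) {q : ℝ} (hq0 : 0 ≤ q)
    (hq1 : q < 1) (ν : Measure X) [IsProbabilityMeasure ν] :
    ∃ C > (0 : ℝ), ∃ σ ∈ Set.Ioo (0 : ℝ) 1, ∀ β : ℕ → X → Torus, (∀ n, Continuous (β n)) →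
      (∀ k, ∀ n : ℤ, n ≠ 0 → ‖∫ a, fourier n (β k a) ∂ν‖ ≤ q) →
      ∀ n, ∫ y, meanTransfer r ν β 1 n y ∂AddCircle.haarAddCircle ≤ C * σ ^ n := by
  obtain ⟨ρ, hρ, hρ2⟩ := exists_sq_eq_of_mem_Ioo hq0 hq1
    (integral_nonneg fun y => (inv_pos.2 (growth_pos hr y)).le) (integral_inv_growth_lt_one hr0 hr)
  have hσ0 : 0 < √ρ := Real.sqrt_pos.2 hρ.1
  refine ⟨(√ρ)⁻¹, by positivity, √ρ, ⟨hσ0, (Real.sqrt_lt' one_pos).2 (by simpa using hρ.2)⟩, ?_⟩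
  intro β hβ hq n
  refine (abs_le_of_sq_le_sq' ?_ (by positivity)).2
  calc _ ≤ ∫ y, meanTransfer r ν β 1 n y ^ 2 ∂AddCircle.haarAddCircle :=
        sq_integral_le (memLp_two_of_continuous (continuous_meanTransfer hr ν hβ 1 n))
    _ ≤ ρ⁻¹ * ρ ^ n := integral_sq_meanTransfer_one_le hr0 hr hβ hq0 hq1 hq hρ hρ2 n
    _ = ((√ρ)⁻¹ * √ρ ^ n) ^ 2 := by
        rw [mul_pow, inv_pow, ← pow_mul, mul_comm n, pow_mul, Real.sq_sqrt hρ.1.le]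

end SecondCountable

lemma integral_rpow_le_rpow_integral {Y : Type*} [TopologicalSpace Y] [CompactSpace Y]
    [MeasurableSpace Y] [BorelSpace Y] (μ : Measure Y) [IsProbabilityMeasure μ] (hs0 : 0 < s)
    (hs1 : s ≤ 1) {f : Y → ℝ} (hf : Continuous f) (hf0 : ∀ y, 0 ≤ f y) :
    ∫ y, f y ^ s ∂μ ≤ (∫ y, f y ∂μ) ^ s :=
  (Real.concaveOn_rpow hs0.le hs1).le_map_integral
    (Real.continuous_rpow_const hs0.le).continuousOn isClosed_Ici (Eventually.of_forall hf0)
    (integrable_of_continuous _ hf)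
    (integrable_of_continuous _ ((Real.continuous_rpow_const hs0.le).comp hf))

lemma meanTransfer_le_rpow (hr : |r| < 1) (hβ : ∀ n, Continuous (β n)) (hs0 : 0 < s) (hs1 : s ≤ 1)
    (n : ℕ) (y : Torus) : meanTransfer r ν β s n y ≤ meanTransfer r ν β 1 n y ^ s := by
  induction n generalizing y with
  | zero => simp [meanTransfer]
  | succ n ih =>
    have hrot : Continuous fun a => β n a + y := by have := hβ n; fun_prop
    have hK : Continuous fun a => transferOp r 1 (meanTransfer r ν β 1 n) (β n a + y) :=
      (continuous_transferOp hr 1 (continuous_meanTransfer hr ν hβ 1 n)).comp hrot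
    have hKs := (continuous_transferOp hr s (continuous_meanTransfer hr ν hβ s n)).comp hrot
    refine le_trans ?_ (integral_rpow_le_rpow_integral ν hs0 hs1 hK fun a =>
      transferOp_nonneg hr 1 (meanTransfer_nonneg hr ν β 1 n) _)
    refine integral_mono (integrable_of_continuous _ hKs)
      (integrable_of_continuous _ ((Real.continuous_rpow_const hs0.le).comp hK)) fun a => ?_
    have hpos := inv_pos.2 (growth_pos hr (β n a + y))
    simp only [transferOp, Real.rpow_one]
    rw [Real.mul_rpow hpos.le (meanTransfer_nonneg hr ν β 1 n _)]
    exact mul_le_mul_of_nonneg_left (ih _) (Real.rpow_nonneg hpos.le _)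

lemma integral_meanTransfer_le (hr : |r| < 1) (hβ : ∀ n, Continuous (β n)) (hs0 : 0 < s)
    (hs1 : s ≤ 1) (n : ℕ) :
    ∫ y, meanTransfer r ν β s n y ∂AddCircle.haarAddCircle
      ≤ (∫ y, meanTransfer r ν β 1 n y ∂AddCircle.haarAddCircle) ^ s := by
  have hcont := continuous_meanTransfer hr ν hβ 1 n
  exact (integral_mono (integrable_of_continuous _ (continuous_meanTransfer hr ν hβ s n))
    (integrable_of_continuous _ ((Real.continuous_rpow_const hs0.le).comp hcont))
    (meanTransfer_le_rpow hr hβ hs0 hs1 n)).trans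
    (integral_rpow_le_rpow_integral _ hs0 hs1 hcont (meanTransfer_nonneg hr ν β 1 n))

lemma integral_transferOp_le (hr : |r| < 1) {L : ℝ} (hL : 1 ≤ L)
    (hgrowth : ∀ y, growth r y ≤ L ∧ (growth r y)⁻¹ ≤ L) (hs0 : 0 ≤ s) (hs1 : s ≤ 1)
    {F : Torus → ℝ} (hF : Continuous F) (hF0 : ∀ y, 0 ≤ F y) :
    ∫ y, transferOp r s F y ∂AddCircle.haarAddCircle
      ≤ L ^ 3 * ∫ y, F y ∂AddCircle.haarAddCircle := by
  have hweight (y : Torus) : (growth r y)⁻¹ ^ s ≤ L ^ 3 * (growth r y)⁻¹ ^ 2 := by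
    have hpos := growth_pos hr y
    calc (growth r y)⁻¹ ^ s ≤ L ^ s :=
          Real.rpow_le_rpow (inv_pos.2 hpos).le (hgrowth y).2 hs0
      _ ≤ L := by simpa using Real.rpow_le_rpow_of_exponent_le hL hs1
      _ = L * (growth r y ^ 2 * (growth r y)⁻¹ ^ 2) := by
          rw [← mul_pow, mul_inv_cancel₀ hpos.ne', one_pow, mul_one]
      _ ≤ L * (L ^ 2 * (growth r y)⁻¹ ^ 2) := by gcongr; exact (hgrowth y).1
      _ = _ := by ring
  calc _ ≤ ∫ y, L ^ 3 * ((growth r y)⁻¹ ^ 2 * F (mobius r y)) ∂AddCircle.haarAddCircle := by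
        refine integral_mono (integrable_of_continuous _ (continuous_transferOp hr s hF))
          (integrable_of_continuous _ ((((continuous_inv_growth hr).pow 2).mul
            (hF.comp (continuous_mobius hr))).const_mul _)) fun y => ?_
        simp only [transferOp]
        rw [← mul_assoc]
        exact mul_le_mul_of_nonneg_right (hweight y) (hF0 _)
    _ = _ := by rw [integral_const_mul, integral_inv_growth_sq_mul_comp_mobius hr hF]

theorem meanTransfer_succ_le (hr : |r| < 1) {L : ℝ} (hL : 1 ≤ L)
    (hgrowth : ∀ y, growth r y ≤ L ∧ (growth r y)⁻¹ ≤ L) (hs0 : 0 ≤ s) (hs1 : s ≤ 1)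
    {μ ν₁ ν₂ : Measure X} [IsFiniteMeasure μ] (hν : ν = ν₁ + ν₂) (hν₁ : ν₁ ≤ μ)
    (hβ : ∀ n, Continuous (β n))
    (hμ : ∀ n, MeasurePreserving (β n) μ AddCircle.haarAddCircle) {n : ℕ} {M : ℝ}
    (hM : ∀ y, meanTransfer r ν β s n y ≤ M) (y : Torus) :
    meanTransfer r ν β s (n + 1) y
      ≤ L ^ 3 * ∫ y, meanTransfer r ν β s n y ∂AddCircle.haarAddCircle
        + ν₂.real Set.univ * L ^ s * M := by
  have hfin₁ : IsFiniteMeasure ν₁ := isFiniteMeasure_of_le μ hν₁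
  have hfin₂ : IsFiniteMeasure ν₂ :=
    isFiniteMeasure_of_le ν (hν ▸ Measure.le_add_left le_rfl)
  have hF0 := meanTransfer_nonneg hr ν β s n
  have hF := continuous_meanTransfer hr ν hβ s n
  have hK := continuous_transferOp hr s hF
  set K := transferOp r s (meanTransfer r ν β s n)
  have hK0 : ∀ z, 0 ≤ K z := transferOp_nonneg hr s hF0
  have hKβ : Continuous fun a => K (β n a + y) := hK.comp (by have := hβ n; fun_prop)
  have hsplit : meanTransfer r ν β s (n + 1) y
      = ∫ a, K (β n a + y) ∂ν₁ + ∫ a, K (β n a + y) ∂ν₂ := by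
    rw [← integral_add_measure (integrable_of_continuous _ hKβ) (integrable_of_continuous _ hKβ),
      ← hν]
    rfl
  have hle₁ : ∫ a, K (β n a + y) ∂ν₁
      ≤ L ^ 3 * ∫ y, meanTransfer r ν β s n y ∂AddCircle.haarAddCircle :=
    calc _ ≤ ∫ a, K (β n a + y) ∂μ := integral_mono_measure hν₁
          (Eventually.of_forall fun _ => hK0 _) (integrable_of_continuous _ hKβ)
      _ = ∫ z, K (z + y) ∂AddCircle.haarAddCircle := by
          rw [← (hμ n).map_eq, integral_map (hβ n).aemeasurable
            (f := fun z => K (z + y)) (hK.comp (by fun_prop)).aestronglyMeasurable]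
      _ = ∫ z, K z ∂AddCircle.haarAddCircle := integral_add_right_eq_self K y
      _ ≤ _ := integral_transferOp_le hr hL hgrowth hs0 hs1 hF hF0
  have hle₂ : ∫ a, K (β n a + y) ∂ν₂ ≤ ν₂.real Set.univ * L ^ s * M :=
    calc _ ≤ ∫ _, L ^ s * M ∂ν₂ :=
          integral_mono (integrable_of_continuous _ hKβ) (integrable_const _) fun a =>
            mul_le_mul (Real.rpow_le_rpow (inv_pos.2 (growth_pos hr _)).le (hgrowth _).2 hs0)
              (hM _) (hF0 _) (by positivity)
      _ = _ := by rw [integral_const, smul_eq_mul, mul_assoc]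
  exact hsplit ▸ add_le_add hle₁ hle₂

lemma exists_mul_rpow_lt_one {m L : ℝ} (hm : m < 1) (hL : 0 < L) :
    ∃ s : ℝ, 0 < s ∧ s ≤ 1 ∧ m * L ^ s < 1 := by
  have hcont : ContinuousAt (fun s : ℝ => m * L ^ s) 0 :=
    ((Real.continuous_const_rpow hL.ne').const_mul _).continuousAt
  have hev : ∀ᶠ s : ℝ in nhdsWithin 0 (Set.Ioi 0), m * L ^ s < 1 :=
    (hcont.eventually_lt_const (by simpa using hm)).filter_mono nhdsWithin_le_nhds
  obtain ⟨s, hs, hs'⟩ := (hev.and (Ioc_mem_nhdsGT zero_lt_one)).exists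
  exact ⟨s, hs'.1, hs'.2, hs⟩

lemma exists_geometric_supersolution {θ p : ℝ} (hθ0 : 0 ≤ θ) (hθ1 : θ < 1) (hp0 : 0 ≤ p)
    (hp1 : p < 1) (D : ℝ) :
    ∃ A ≥ (1 : ℝ), ∃ q ∈ Set.Ioo (0 : ℝ) 1,
      ∀ n : ℕ, D * p ^ n + θ * (A * q ^ n) ≤ A * q ^ (n + 1) := by
  obtain ⟨q, hq, hq1⟩ := exists_between (max_lt hθ1 hp1)
  obtain ⟨hθq, hpq⟩ := max_lt_iff.1 hq
  have hq0 : 0 < q := hθ0.trans_lt hθq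
  have hgap : 0 < q - θ := sub_pos.2 hθq
  refine ⟨max 1 (|D| / (q - θ)), le_max_left _ _, q, ⟨hq0, hq1⟩, fun n => ?_⟩
  set A := max 1 (|D| / (q - θ))
  have hA : |D| ≤ A * (q - θ) := (div_le_iff₀ hgap).1 (le_max_right _ _)
  calc D * p ^ n + θ * (A * q ^ n) ≤ |D| * q ^ n + θ * (A * q ^ n) := by
        gcongr
        exact le_abs_self D
    _ ≤ A * (q - θ) * q ^ n + θ * (A * q ^ n) := by gcongr
    _ = A * q ^ (n + 1) := by ring

end MeanTransfer

section AlternatingRotation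

/-- The sign `(-1)^(k+1)` with which the `k`-th phase rotates the Möbius dynamics. -/
def alternate (k : ℕ) (z : Torus) : Torus := if Even k then -z else z

lemma continuous_alternate (k : ℕ) : Continuous (alternate k) := by
  unfold alternate
  split_ifs <;> fun_prop

lemma measurePreserving_alternate_add (k : ℕ) (x : Torus) :
    MeasurePreserving (fun a => alternate k (x + a))
      AddCircle.haarAddCircle AddCircle.haarAddCircle := by
  have hadd := measurePreserving_add_left (AddCircle.haarAddCircle (T := 2 * Real.pi)) x
  unfold alternate
  split_ifs
  · exact (Measure.measurePreserving_neg _).comp hadd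
  · exact hadd

lemma norm_integral_fourier_alternate_add_le {ν : Measure Torus} {q : ℝ}
    (hq : ∀ n : ℤ, n ≠ 0 → ‖∫ a, fourier n a ∂ν‖ ≤ q) (k : ℕ) (x : Torus) {n : ℤ} (hn : n ≠ 0) :
    ‖∫ a, fourier n (alternate k (x + a)) ∂ν‖ ≤ q := by
  have hadd {m : ℤ} (hm : m ≠ 0) : ‖∫ a, fourier m (x + a) ∂ν‖ ≤ q := by
    simp_rw [fourier_apply_add, integral_const_mul, norm_mul, norm_fourier_apply, one_mul]
    exact hq m hm
  unfold alternate
  split_ifs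
  · have hneg (z : Torus) : (fourier n (-z) : ℂ) = fourier (-n) z := by
      simp [fourier_apply]
    simp_rw [hneg]
    exact hadd (neg_ne_zero.2 hn)
  · exact hadd hn

theorem exists_meanTransfer_alternate_le {r : ℝ} (hr0 : r ≠ 0) (hr : |r| < 1) {ν : Measure Torus}
    [IsProbabilityMeasure ν] (hν : ¬ ν ⟂ₘ AddCircle.haarAddCircle) :
    ∃ s > (0 : ℝ), ∃ A > (0 : ℝ), ∃ q ∈ Set.Ioo (0 : ℝ) 1, ∀ (x y : Torus) (n : ℕ),
      meanTransfer r ν (fun k a => alternate k (x + a)) s n y ≤ A * q ^ n := by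
  obtain ⟨q, hq1, hq⟩ := exists_norm_integral_fourier_le hν
  obtain ⟨C, hC, σ, hσ, hdecay⟩ := exists_integral_meanTransfer_one_le hr0 hr
    ((norm_nonneg _).trans (hq 1 one_ne_zero)) hq1 ν
  obtain ⟨ν₁, ν₂, hsum, hle, hne⟩ := exists_eq_add_le_of_not_mutuallySingular hν
  obtain ⟨L, hL, hgrowth⟩ := exists_growth_le hr
  have hfin₁ : IsFiniteMeasure ν₁ := isFiniteMeasure_of_le _ hle
  have hfin₂ : IsFiniteMeasure ν₂ := isFiniteMeasure_of_le ν (hsum ▸ Measure.le_add_left le_rfl)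
  have hmass : ν₂.real Set.univ < 1 := by
    have htotal : ν₁.real Set.univ + ν₂.real Set.univ = 1 := by
      rw [← measureReal_add_apply, ← hsum, probReal_univ]
    have : NeZero ν₁ := ⟨hne⟩
    linarith [measureReal_univ_pos (μ := ν₁)]
  obtain ⟨s, hs0, hs1, hs⟩ := exists_mul_rpow_lt_one hmass (zero_lt_one.trans_le hL)
  obtain ⟨A, hA, p, hp, hstep⟩ := exists_geometric_supersolution (by positivity) hs
    (Real.rpow_pos_of_pos hσ.1 s).le (Real.rpow_lt_one hσ.1.le hσ.2 hs0) (L ^ 3 * C ^ s)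
  refine ⟨s, hs0, A, by positivity, p, hp, fun x y n => ?_⟩
  have hβ (k : ℕ) : Continuous fun a => alternate k (x + a) :=
    (continuous_alternate k).comp (continuous_const_add x)
  have hmean (n : ℕ) : ∫ y, meanTransfer r ν (fun k a => alternate k (x + a)) s n y
      ∂AddCircle.haarAddCircle ≤ C ^ s * (σ ^ s) ^ n := by
    refine (integral_meanTransfer_le hr hβ hs0 hs1 n).trans ?_
    rw [Real.rpow_pow_comm hσ.1.le, ← Real.mul_rpow hC.le (pow_nonneg hσ.1.le n)]
    exact Real.rpow_le_rpow (integral_nonneg (meanTransfer_nonneg hr ν _ 1 n))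
      (hdecay _ hβ (fun k m => norm_integral_fourier_alternate_add_le hq k x) n) hs0.le
  induction n generalizing y with
  | zero => simpa [meanTransfer] using hA
  | succ n ih =>
    refine (meanTransfer_succ_le hr hL hgrowth hs0.le hs1 hsum hle hβ
      (measurePreserving_alternate_add · x) ih y).trans (le_trans ?_ (hstep n))
    rw [mul_assoc (L ^ 3)]
    gcongr
    exact hmean n

end AlternatingRotation

section Resampling

variable {ι : Type*} [DecidableEq ι] {X : ι → Type*} [∀ i, MeasurableSpace (X i)]
  (μ : ∀ i, Measure (X i)) [∀ i, IsProbabilityMeasure (μ i)]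

lemma map_update_infinitePi_prod (j : ι) :
    ((Measure.infinitePi μ).prod (μ j)).map (fun p => Function.update p.1 j p.2)
      = Measure.infinitePi μ := by
  refine Measure.eq_infinitePi μ fun s A hA => ?_
  have hpre : (fun p : (∀ i, X i) × X j => Function.update p.1 j p.2) ⁻¹' Set.pi s A
      = Set.pi (s.erase j) A ×ˢ (if j ∈ s then A j else Set.univ) := by
    ext ⟨ω, a⟩
    simp only [Set.mem_preimage, Set.mem_pi, Finset.mem_coe, Set.mem_prod, Finset.mem_erase]
    refine ⟨fun h => ⟨fun i hi => by simpa [hi.1] using h i hi.2, ?_⟩, fun h i hi => ?_⟩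
    · split_ifs with hj
      · simpa using h j hj
      · trivial
    · rcases eq_or_ne i j with rfl | hij
      · simpa [hi] using h.2
      · simpa [hij] using h.1 i ⟨hij, hi⟩
  rw [Measure.map_apply measurable_update' (.pi s.countable_toSet fun i _ => hA i), hpre,
    Measure.prod_prod, Measure.infinitePi_pi _ fun i _ => hA i]
  split_ifs with hj
  · exact Finset.prod_erase_mul _ _ hj
  · simp [Finset.erase_eq_of_notMem hj]

theorem lintegral_infinitePi_update (j : ι) {H : (∀ i, X i) → ENNReal} (hH : Measurable H) :
    ∫⁻ ω, H ω ∂Measure.infinitePi μ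
      = ∫⁻ ω, ∫⁻ a, H (Function.update ω j a) ∂μ j ∂Measure.infinitePi μ := by
  conv_lhs => rw [← map_update_infinitePi_prod μ j]
  rw [lintegral_map hH measurable_update']
  exact lintegral_prod _ (hH.comp measurable_update').aemeasurable

end Resampling

section Orbits

/-- The orbit of `y` under the Möbius dynamics followed at time `k` by the rotation by `-b k`. -/
def forwardOrbit (r : ℝ) (b : ℕ → Torus) (y : Torus) : ℕ → Torus
  | 0 => y
  | k + 1 => mobius r (forwardOrbit r b y k) - b k

/-- The product of the growth factors along the first `n` points of an orbit. -/
def forwardGrowth (r : ℝ) (b : ℕ → Torus) (y : Torus) (n : ℕ) : ℝ :=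
  ∏ k ∈ Finset.range n, growth r (forwardOrbit r b y k)

/-- The initial point of the orbit which is at `y` at time `n`. -/
def initialPoint (r : ℝ) (b : ℕ → Torus) : ℕ → Torus → Torus
  | 0, y => y
  | n + 1, y => initialPoint r b n (mobius r (b n + y))

/-- Some orbit has exponentially decaying growth. -/
def HasDecayingOrbit (r : ℝ) (b : ℕ → Torus) : Prop :=
  ∃ y : Torus, ∃ C : ℝ, ∃ η ∈ Set.Ioo (0 : ℝ) 1, ∀ n, forwardGrowth r b y n ≤ C * η ^ n

/-- A partial sum of the weighted `s`-th moments of the growth along the orbit which ends at `0` at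
time `N`; its boundedness in `N` forces exponential decay along a limiting orbit. -/
def growthSum (r s w : ℝ) (b : ℕ → Torus) (N : ℕ) : ENNReal :=
  ∑ n ∈ Finset.range (N + 1),
    ENNReal.ofReal (w ^ n * forwardGrowth r b (initialPoint r b N 0) n ^ s)

variable {r : ℝ}

lemma forwardOrbit_initialPoint (hr : |r| < 1) (b : ℕ → Torus) (n : ℕ) (y : Torus) :
    forwardOrbit r b (initialPoint r b n y) n = y := by
  induction n generalizing y with
  | zero => rfl
  | succ n ih => rw [initialPoint, forwardOrbit, ih, mobius_mobius hr, add_sub_cancel_left]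

lemma initialPoint_add (r : ℝ) (b : ℕ → Torus) (n m : ℕ) (y : Torus) :
    initialPoint r b (n + m) y = initialPoint r b n (initialPoint r (fun k => b (n + k)) m y) := by
  induction m generalizing y with
  | zero => rfl
  | succ m ih => exact ih _

lemma initialPoint_congr {b b' : ℕ → Torus} {n : ℕ} (h : ∀ k < n, b k = b' k) (y : Torus) :
    initialPoint r b n y = initialPoint r b' n y := by
  induction n generalizing y with
  | zero => rfl
  | succ n ih => rw [initialPoint, initialPoint, h n n.lt_succ_self, ih fun k hk => h k (by omega)]

lemma forwardGrowth_initialPoint_succ (hr : |r| < 1) (b : ℕ → Torus) (n : ℕ) (y : Torus) :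
    forwardGrowth r b (initialPoint r b (n + 1) y) (n + 1) =
      (growth r (b n + y))⁻¹ *
        forwardGrowth r b (initialPoint r b n (mobius r (b n + y))) n := by
  rw [forwardGrowth, Finset.prod_range_succ, initialPoint, forwardOrbit_initialPoint hr,
    growth_mobius hr, mul_comm, forwardGrowth]

lemma forwardGrowth_pos (hr : |r| < 1) (b : ℕ → Torus) (y : Torus) (n : ℕ) :
    0 < forwardGrowth r b y n :=
  Finset.prod_pos fun _ _ => growth_pos hr _

lemma continuous_forwardOrbit (hr : |r| < 1) (n : ℕ) :
    Continuous fun p : (ℕ → Torus) × Torus => forwardOrbit r p.1 p.2 n := by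
  induction n with
  | zero => exact continuous_snd
  | succ n ih => exact ((continuous_mobius hr).comp ih).sub (by fun_prop)

lemma continuous_forwardGrowth (hr : |r| < 1) (n : ℕ) :
    Continuous fun p : (ℕ → Torus) × Torus => forwardGrowth r p.1 p.2 n :=
  continuous_finsetProd _ fun k _ => (continuous_growth r).comp (continuous_forwardOrbit hr k)

lemma continuous_initialPoint (hr : |r| < 1) (n : ℕ) :
    Continuous fun p : (ℕ → Torus) × Torus => initialPoint r p.1 n p.2 := by
  induction n with
  | zero => exact continuous_snd
  | succ n ih =>
    exact ih.comp (continuous_fst.prodMk ((continuous_mobius hr).comp (by fun_prop)))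

lemma measurable_growthSum_term (hr : |r| < 1) (s w : ℝ) (N n : ℕ) :
    Measurable fun b : ℕ → Torus =>
      ENNReal.ofReal (w ^ n * forwardGrowth r b (initialPoint r b N 0) n ^ s) := by
  have hinit : Continuous fun b : ℕ → Torus => initialPoint r b N 0 :=
    (continuous_initialPoint hr N).comp (Continuous.prodMk_left (0 : Torus))
  have hgrowth : Measurable fun b : ℕ → Torus => forwardGrowth r b (initialPoint r b N 0) n :=
    ((continuous_forwardGrowth hr n).comp (continuous_id.prodMk hinit)).measurable
  exact ((hgrowth.pow_const s).const_mul (w ^ n)).ennreal_ofReal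

lemma measurable_growthSum (hr : |r| < 1) (s w : ℝ) (N : ℕ) :
    Measurable fun b => growthSum r s w b N :=
  Finset.measurable_sum _ fun n _ => measurable_growthSum_term hr s w N n

theorem measurableSet_hasDecayingOrbit (hr : |r| < 1) :
    MeasurableSet {b | HasDecayingOrbit r b} := by
  let F (m : ℕ) : Set ((ℕ → Torus) × Torus) :=
    {p | ∀ n, forwardGrowth r p.1 p.2 n ≤ m * (1 - 1 / (m + 2 : ℝ)) ^ n}
  have hF (m : ℕ) : IsClosed (F m) := by
    simp only [F, Set.ofPred_forall]
    exact isClosed_iInter fun n => isClosed_le (continuous_forwardGrowth hr n) continuous_const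
  have hunion : {b | HasDecayingOrbit r b} = ⋃ m, Prod.fst '' F m := by
    ext b
    simp only [Set.mem_ofPred_eq, Set.mem_iUnion, Set.mem_image, Prod.exists, exists_and_right,
      exists_eq_right]
    constructor
    · rintro ⟨y, C, η, hη, hdecay⟩
      obtain ⟨m, hm⟩ := exists_nat_ge (max C (1 / (1 - η)))
      have hη1 : 0 < 1 - η := sub_pos.2 hη.2
      have hrate : η ≤ 1 - 1 / (m + 2 : ℝ) := by
        have : 1 / (m + 2 : ℝ) ≤ 1 - η :=
          (one_div_le (by positivity) hη1).2 (by linarith [(le_max_right _ _).trans hm])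
        linarith
      refine ⟨m, y, fun n => (hdecay n).trans ?_⟩
      exact mul_le_mul ((le_max_left _ _).trans hm) (pow_le_pow_left₀ hη.1.le hrate n)
        (pow_nonneg hη.1.le n) (Nat.cast_nonneg m)
    · rintro ⟨m, y, hdecay⟩
      have hm : (1 : ℝ) < m + 2 := by linarith [(Nat.cast_nonneg m : (0 : ℝ) ≤ m)]
      exact ⟨y, m, _, ⟨sub_pos.2 ((div_lt_one (by positivity)).2 hm),
        sub_lt_self 1 (by positivity)⟩, hdecay⟩
  rw [hunion]
  exact .iUnion fun m => (isClosedMap_fst_of_compactSpace _ (hF m)).measurableSet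

lemma exists_forall_le_of_liminf_growthSum_lt_top (hr : |r| < 1) {s w : ℝ} (hs : 0 < s)
    {b : ℕ → Torus} (h : liminf (growthSum r s w b) atTop < ⊤) :
    ∃ y, ∃ M : ℝ, ∀ n, w ^ n * forwardGrowth r b y n ^ s ≤ M := by
  obtain ⟨M, hM, hMtop⟩ := exists_between h
  set l := atTop ⊓ 𝓟 {N | growthSum r s w b N < M}
  have : NeBot l := frequently_mem_iff_neBot.1 (frequently_lt_of_liminf_lt (by isBoundedDefault) hM)
  obtain ⟨y, hy⟩ := exists_clusterPt_of_compactSpace (map (fun N => initialPoint r b N 0) l)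
  refine ⟨y, M.toReal, fun n => ?_⟩
  have hcont : Continuous fun y => w ^ n * forwardGrowth r b y n ^ s :=
    (((continuous_forwardGrowth hr n).comp (by fun_prop : Continuous fun y => (b, y))).rpow_const
      fun _ => Or.inr hs.le).const_mul _
  refine isClosed_iff_clusterPt.1 (isClosed_le hcont continuous_const) y
    (hy.mono (le_principal_iff.2 ?_))
  change ∀ᶠ N in l, w ^ n * forwardGrowth r b (initialPoint r b N 0) n ^ s ≤ M.toReal
  filter_upwards [mem_inf_of_left (mem_atTop n),
    mem_inf_of_right (mem_principal_self {N | growthSum r s w b N < M})] with N hN hlt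
  refine (ENNReal.ofReal_le_iff_le_toReal hMtop.ne).1 (le_trans ?_ (le_of_lt hlt))
  exact Finset.single_le_sum
    (f := fun n => ENNReal.ofReal (w ^ n * forwardGrowth r b (initialPoint r b N 0) n ^ s))
    (fun _ _ => zero_le) (Finset.mem_range.2 (Nat.lt_succ_of_le hN))

theorem hasDecayingOrbit_of_liminf_growthSum_lt_top (hr : |r| < 1) {s w : ℝ} (hs : 0 < s)
    (hw : 1 < w) {b : ℕ → Torus} (h : liminf (growthSum r s w b) atTop < ⊤) :
    HasDecayingOrbit r b := by
  obtain ⟨y, M, hM⟩ := exists_forall_le_of_liminf_growthSum_lt_top hr hs h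
  have hM0 : 0 < M := by
    have h0 := hM 0
    rw [forwardGrowth, Finset.prod_range_zero, Real.one_rpow, pow_zero, one_mul] at h0
    linarith
  refine ⟨y, M ^ s⁻¹, w⁻¹ ^ s⁻¹, ⟨by positivity,
    Real.rpow_lt_one (by positivity) (inv_lt_one_of_one_lt₀ hw) (by positivity)⟩, fun n => ?_⟩
  have hpos := forwardGrowth_pos hr b y n
  have hle : forwardGrowth r b y n ^ s ≤ M * w⁻¹ ^ n := by
    rw [inv_pow, ← div_eq_mul_inv, le_div_iff₀ (by positivity), mul_comm]
    exact hM n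
  calc forwardGrowth r b y n = (forwardGrowth r b y n ^ s) ^ s⁻¹ :=
        (Real.rpow_rpow_inv hpos.le hs.ne').symm
    _ ≤ (M * w⁻¹ ^ n) ^ s⁻¹ := by gcongr
    _ = M ^ s⁻¹ * (w⁻¹ ^ s⁻¹) ^ n := by
        rw [Real.mul_rpow hM0.le (by positivity), Real.rpow_pow_comm (by positivity)]

section Random

variable {X : Type*} [TopologicalSpace X] [CompactSpace X] [MeasurableSpace X] [BorelSpace X]
  {ν : Measure X} [IsProbabilityMeasure ν] {β : ℕ → X → Torus}

lemma lintegral_mul_meanTransfer_mobius (hr : |r| < 1) (hβ : ∀ k, Continuous (β k)) (s : ℝ)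
    (n : ℕ) {W : (ℕ → X) → ENNReal} {Y : (ℕ → X) → Torus} (hW : Measurable W) (hY : Measurable Y)
    (hWdep : DependsOn W (Set.Ici (n + 1))) (hYdep : DependsOn Y (Set.Ici (n + 1))) :
    ∫⁻ ω, W ω * ENNReal.ofReal
        (transferOp r s (meanTransfer r ν β s n) (β n (ω n) + Y ω)) ∂Measure.infinitePi (fun _ => ν)
      = ∫⁻ ω, W ω * ENNReal.ofReal (meanTransfer r ν β s (n + 1) (Y ω))
        ∂Measure.infinitePi (fun _ => ν) := by
  set T := transferOp r s (meanTransfer r ν β s n)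
  have hT : Continuous T := continuous_transferOp hr s (continuous_meanTransfer hr ν hβ s n)
  have hmeas : Measurable fun ω : ℕ → X => W ω * ENNReal.ofReal (T (β n (ω n) + Y ω)) := by
    have hrot := (hβ n).measurable
    have hTm := hT.measurable
    fun_prop
  rw [lintegral_infinitePi_update _ n hmeas]
  refine lintegral_congr fun ω => ?_
  have hagree (a : X) (i : ℕ) (hi : i ∈ Set.Ici (n + 1)) : Function.update ω n a i = ω i :=
    Function.update_of_ne (Nat.lt_of_succ_le hi).ne' _ _
  have hK : Continuous fun a => T (β n a + Y ω) := hT.comp (by have := hβ n; fun_prop)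
  simp_rw [Function.update_self, hWdep (hagree _), hYdep (hagree _)]
  rw [lintegral_const_mul _ hK.measurable.ennreal_ofReal,
    ← ofReal_integral_eq_lintegral_ofReal (integrable_of_continuous _ hK)
      (Eventually.of_forall fun a => transferOp_nonneg hr s (meanTransfer_nonneg hr ν β s n) _)]
  rfl

lemma lintegral_mul_forwardGrowth_initialPoint (hr : |r| < 1) (hβ : ∀ k, Continuous (β k)) (s : ℝ)
    (n : ℕ) {W : (ℕ → X) → ENNReal} {Y : (ℕ → X) → Torus} (hW : Measurable W) (hY : Measurable Y)
    (hWdep : DependsOn W (Set.Ici n)) (hYdep : DependsOn Y (Set.Ici n)) :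
    ∫⁻ ω, W ω * ENNReal.ofReal (forwardGrowth r (fun k => β k (ω k))
        (initialPoint r (fun k => β k (ω k)) n (Y ω)) n ^ s) ∂Measure.infinitePi (fun _ => ν)
      = ∫⁻ ω, W ω * ENNReal.ofReal (meanTransfer r ν β s n (Y ω))
        ∂Measure.infinitePi (fun _ => ν) := by
  induction n generalizing W Y with
  | zero => simp [forwardGrowth, meanTransfer]
  | succ n ih =>
    let Z (ω : ℕ → X) : Torus := β n (ω n) + Y ω
    let V (ω : ℕ → X) : ENNReal := W ω * ENNReal.ofReal ((growth r (Z ω))⁻¹ ^ s)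
    have hweight (y : Torus) : 0 ≤ (growth r y)⁻¹ ^ s :=
      Real.rpow_nonneg (inv_pos.2 (growth_pos hr y)).le s
    have hZ : Measurable Z := by have := (hβ n).measurable; fun_prop
    have hV : Measurable V :=
      hW.mul (((continuous_inv_growth hr).measurable.comp hZ).pow_const s).ennreal_ofReal
    have hsub : Set.Ici (n + 1) ⊆ Set.Ici n := Set.Ici_subset_Ici.2 n.le_succ
    have hZdep : DependsOn Z (Set.Ici n) := fun ω ω' h => by
      simp only [Z, h n Set.self_mem_Ici, hYdep fun i hi => h i (hsub hi)]
    have hVdep : DependsOn V (Set.Ici n) := fun ω ω' h => by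
      simp only [V, hZdep h, hWdep fun i hi => h i (hsub hi)]
    calc _ = ∫⁻ ω, V ω * ENNReal.ofReal (forwardGrowth r (fun k => β k (ω k))
          (initialPoint r (fun k => β k (ω k)) n (mobius r (Z ω))) n ^ s)
          ∂Measure.infinitePi (fun _ => ν) := by
          refine lintegral_congr fun ω => ?_
          rw [forwardGrowth_initialPoint_succ hr, Real.mul_rpow (inv_pos.2 (growth_pos hr _)).le
            (forwardGrowth_pos hr _ _ _).le, ENNReal.ofReal_mul (hweight _), ← mul_assoc]
      _ = ∫⁻ ω, V ω * ENNReal.ofReal (meanTransfer r ν β s n (mobius r (Z ω)))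
          ∂Measure.infinitePi (fun _ => ν) :=
          ih hV ((continuous_mobius hr).measurable.comp hZ) hVdep
            fun ω ω' h => congrArg (mobius r) (hZdep h)
      _ = _ := by
          rw [← lintegral_mul_meanTransfer_mobius hr hβ s n hW hY hWdep hYdep]
          refine lintegral_congr fun ω => ?_
          rw [transferOp, ENNReal.ofReal_mul (hweight _), ← mul_assoc]

lemma lintegral_growthSum_term_le (hr : |r| < 1) (hβ : ∀ k, Continuous (β k)) {s w A q : ℝ}
    (hw : 0 ≤ w) (hle : ∀ n y, meanTransfer r ν β s n y ≤ A * q ^ n) {N n : ℕ} (hn : n ≤ N) :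
    ∫⁻ ω, ENNReal.ofReal (w ^ n * forwardGrowth r (fun k => β k (ω k))
        (initialPoint r (fun k => β k (ω k)) N 0) n ^ s) ∂Measure.infinitePi (fun _ => ν)
      ≤ ENNReal.ofReal (A * (w * q) ^ n) := by
  obtain ⟨m, rfl⟩ := Nat.exists_eq_add_of_le hn
  let Y (ω : ℕ → X) : Torus := initialPoint r (fun k => β (n + k) (ω (n + k))) m 0
  have hY : Measurable Y := by
    have hrot (k : ℕ) := (hβ k).measurable
    exact ((continuous_initialPoint hr m).comp (Continuous.prodMk_left (0 : Torus))).measurable.comp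
      (by fun_prop)
  have hYdep : DependsOn Y (Set.Ici n) := fun ω ω' h =>
    initialPoint_congr (fun k _ => by rw [h (n + k) (Set.mem_Ici.2 (n.le_add_right k))]) _
  simp_rw [initialPoint_add, ENNReal.ofReal_mul (pow_nonneg hw n)]
  rw [lintegral_mul_forwardGrowth_initialPoint hr hβ s n measurable_const hY
    (fun _ _ _ => rfl) hYdep]
  calc _ ≤ ∫⁻ _, ENNReal.ofReal (w ^ n) * ENNReal.ofReal (A * q ^ n)
        ∂Measure.infinitePi (fun _ : ℕ => ν) := by
        gcongr with ω
        exact hle n _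
    _ = ENNReal.ofReal (A * (w * q) ^ n) := by
        rw [lintegral_const, measure_univ, mul_one, ← ENNReal.ofReal_mul (pow_nonneg hw n), mul_pow]
        ring_nf

lemma lintegral_growthSum_le (hr : |r| < 1) (hβ : ∀ k, Continuous (β k)) {s w A q : ℝ}
    (hw : 0 ≤ w) (hA : 0 ≤ A) (hq : 0 ≤ q) (hwq : w * q < 1)
    (hle : ∀ n y, meanTransfer r ν β s n y ≤ A * q ^ n) (N : ℕ) :
    ∫⁻ ω, growthSum r s w (fun k => β k (ω k)) N ∂Measure.infinitePi (fun _ => ν)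
      ≤ ENNReal.ofReal (A * (1 - w * q)⁻¹) := by
  have hwq0 : 0 ≤ w * q := mul_nonneg hw hq
  have hrot : Measurable fun (ω : ℕ → X) k => β k (ω k) := by
    have (k : ℕ) := (hβ k).measurable
    fun_prop
  have hmeas (n : ℕ) : Measurable fun ω : ℕ → X => ENNReal.ofReal (w ^ n * forwardGrowth r
      (fun k => β k (ω k)) (initialPoint r (fun k => β k (ω k)) N 0) n ^ s) :=
    (measurable_growthSum_term hr s w N n).comp hrot
  unfold growthSum
  rw [lintegral_finsetSum _ fun n _ => hmeas n]
  calc _ ≤ ∑ n ∈ Finset.range (N + 1), ENNReal.ofReal (A * (w * q) ^ n) :=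
        Finset.sum_le_sum fun n hn => lintegral_growthSum_term_le hr hβ hw hle
          (Nat.lt_succ_iff.1 (Finset.mem_range.1 hn))
    _ = ENNReal.ofReal (A * ∑ n ∈ Finset.range (N + 1), (w * q) ^ n) := by
        rw [Finset.mul_sum, ENNReal.ofReal_sum_of_nonneg fun n _ => by positivity]
    _ ≤ _ := by
        rw [← tsum_geometric_of_lt_one hwq0 hwq]
        gcongr
        exact (summable_geometric_of_lt_one hwq0 hwq).sum_le_tsum _ fun n _ => by positivity

theorem ae_hasDecayingOrbit_of_meanTransfer_le (hr : |r| < 1) (hβ : ∀ k, Continuous (β k))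
    {s A q : ℝ} (hs : 0 < s) (hA : 0 ≤ A) (hq : q ∈ Set.Ioo 0 1)
    (hle : ∀ n y, meanTransfer r ν β s n y ≤ A * q ^ n) :
    ∀ᵐ ω ∂Measure.infinitePi (fun _ : ℕ => ν), HasDecayingOrbit r fun k => β k (ω k) := by
  obtain ⟨w, hw1, hw⟩ := exists_between (one_lt_inv_iff₀.2 hq)
  have hw0 : 0 ≤ w := zero_le_one.trans hw1.le
  have hwq : w * q < 1 := (lt_div_iff₀ hq.1).1 (by rwa [one_div])
  have hrot : Measurable fun (ω : ℕ → X) k => β k (ω k) := by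
    have (k : ℕ) := (hβ k).measurable
    fun_prop
  have hmeas (N : ℕ) : Measurable fun ω : ℕ → X => growthSum r s w (fun k => β k (ω k)) N :=
    (measurable_growthSum hr s w N).comp hrot
  have hfin : ∫⁻ ω, liminf (fun N => growthSum r s w (fun k => β k (ω k)) N) atTop
      ∂Measure.infinitePi (fun _ => ν) ≠ ⊤ := by
    refine ne_top_of_le_ne_top (ENNReal.ofReal_ne_top (r := A * (1 - w * q)⁻¹))
      ((lintegral_liminf_le hmeas).trans ?_)
    exact (liminf_le_liminf (Eventually.of_forall
      (lintegral_growthSum_le hr hβ hw0 hA hq.1.le hwq hle))).trans (liminf_const _).le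
  filter_upwards [ae_lt_top (Measurable.liminf hmeas) hfin] with ω hω
  exact hasDecayingOrbit_of_liminf_growthSum_lt_top hr hs hw1 hω

end Random

theorem ae_hasDecayingOrbit_alternate (hr0 : r ≠ 0) (hr : |r| < 1) {ν : Measure Torus}
    [IsProbabilityMeasure ν] (hν : ¬ ν ⟂ₘ AddCircle.haarAddCircle) (x : Torus) :
    ∀ᵐ ω ∂Measure.infinitePi (fun _ : ℕ => ν),
      HasDecayingOrbit r fun k => alternate k (x + ω k) := by
  obtain ⟨s, hs, A, hA, q, hq, hle⟩ := exists_meanTransfer_alternate_le hr0 hr hν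
  exact ae_hasDecayingOrbit_of_meanTransfer_le (β := fun k a => alternate k (x + a)) hr
    (fun k => (continuous_alternate k).comp (continuous_const_add x)) hs hA.le hq
    fun n y => hle x y n

end Orbits

section HalfLine

variable {t r : ℝ} {b : ℕ → Torus} {p q : ℕ → ℂ}

lemma abs_lt_one_of_sq_add_sq_eq_one (hrt : r ^ 2 + t ^ 2 = 1) (ht : t ≠ 0) : |r| < 1 :=
  (sq_lt_one_iff_abs_lt_one r).1 (by linarith [sq_pos_of_ne_zero ht])

/-- The half-line recursion satisfied by the pair of fields `p`, `q` of a generalized eigenfunction;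
its projective action on `p / q` is the Möbius dynamics of `forwardOrbit`. -/
def IsTransferSolution (t r : ℝ) (b : ℕ → Torus) (p q : ℕ → ℂ) : Prop :=
  ∀ k, p (k + 1) = ec (-b k) * (r * p k - q k) / t ∧ q (k + 1) = (p k - r * q k) / t

namespace IsTransferSolution

lemma sub_succ (h : IsTransferSolution t r b p q) (hrt : r ^ 2 + t ^ 2 = 1) (ht : t ≠ 0)
    (y : Torus) (n : ℕ) :
    p (n + 1) - q (n + 1) * ec (forwardOrbit r b y (n + 1)) =
      ec (-b n) * (t / (ec (forwardOrbit r b y n) - r)) *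
        (p n - q n * ec (forwardOrbit r b y n)) := by
  have hr := abs_lt_one_of_sq_add_sq_eq_one hrt ht
  have hne := ec_sub_ne_zero hr (forwardOrbit r b y n)
  have htc : (t : ℂ) ≠ 0 := ofReal_ne_zero.2 ht
  have hrtc : (r : ℂ) ^ 2 + (t : ℂ) ^ 2 = 1 := mod_cast hrt
  have horbit : ec (forwardOrbit r b y (n + 1)) = (r * ec (forwardOrbit r b y n) - 1) /
      (ec (forwardOrbit r b y n) - r) * ec (-b n) := by
    rw [forwardOrbit, sub_eq_add_neg, ec_add, ec_mobius hr]
  rw [(h n).1, (h n).2, horbit]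
  field_simp
  linear_combination ec (-b n) * (-p n + q n * ec (forwardOrbit r b y n)) * hrtc

lemma norm_sub_mul_forwardGrowth (h : IsTransferSolution t r b p q) (hrt : r ^ 2 + t ^ 2 = 1)
    (ht : t ≠ 0) (y : Torus) (n : ℕ) :
    ‖p n - q n * ec (forwardOrbit r b y n)‖ * forwardGrowth r b y n = ‖p 0 - q 0 * ec y‖ := by
  have hr := abs_lt_one_of_sq_add_sq_eq_one hrt ht
  induction n with
  | zero => simp [forwardGrowth, forwardOrbit]
  | succ n ih =>
    have hne : ‖ec (forwardOrbit r b y n) - r‖ ≠ 0 := norm_ne_zero_iff.2 (ec_sub_ne_zero hr _)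
    have hst : √(1 - r ^ 2) = |t| := by rw [← hrt, add_sub_cancel_left, Real.sqrt_sq_eq_abs]
    have ht' : |t| ≠ 0 := abs_ne_zero.2 ht
    rw [← ih, h.sub_succ hrt ht, forwardGrowth, Finset.prod_range_succ, ← forwardGrowth, growth,
      hst]
    simp only [norm_mul, norm_ec, norm_div, norm_real, Real.norm_eq_abs]
    field_simp

lemma norm_snd_eq (h : IsTransferSolution t r b p q) (hrt : r ^ 2 + t ^ 2 = 1) (y : Torus)
    (hpq : ∀ n, p n = q n * ec (forwardOrbit r b y n)) (n : ℕ) :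
    ‖q n‖ = ‖q 0‖ * forwardGrowth r b y n := by
  induction n with
  | zero => simp [forwardGrowth]
  | succ n ih =>
    have hst : √(1 - r ^ 2) = |t| := by rw [← hrt, add_sub_cancel_left, Real.sqrt_sq_eq_abs]
    rw [(h n).2, hpq n, mul_comm (r : ℂ), ← mul_sub, norm_div, norm_mul, ih, norm_real,
      Real.norm_eq_abs, forwardGrowth, forwardGrowth, Finset.prod_range_succ, growth, hst]
    ring

-- A solution off the decaying direction would grow exponentially.
theorem exists_norm_le_mul_pow (h : IsTransferSolution t r b p q) (hrt : r ^ 2 + t ^ 2 = 1)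
    (ht : t ≠ 0) (hb : HasDecayingOrbit r b) {M : ℝ} (hp : ∀ n : ℕ, ‖p n‖ ≤ M * (1 + n))
    (hq : ∀ n : ℕ, ‖q n‖ ≤ M * (1 + n)) :
    ∃ C, ∃ η ∈ Set.Ioo (0 : ℝ) 1, ∀ n, ‖p n‖ ≤ C * η ^ n := by
  have hr := abs_lt_one_of_sq_add_sq_eq_one hrt ht
  obtain ⟨y, C, η, hη, hdecay⟩ := hb
  have hM : 0 ≤ M := by simpa using (norm_nonneg _).trans (hp 0)
  have hbound (n : ℕ) : ‖p 0 - q 0 * ec y‖ ≤ 2 * M * C * (η ^ n + n * η ^ n) :=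
    calc ‖p 0 - q 0 * ec y‖
        = ‖p n - q n * ec (forwardOrbit r b y n)‖ * forwardGrowth r b y n :=
          (h.norm_sub_mul_forwardGrowth hrt ht y n).symm
      _ ≤ (M * (1 + n) + M * (1 + n)) * (C * η ^ n) := by
          refine mul_le_mul ((norm_sub_le _ _).trans (add_le_add (hp n) ?_)) (hdecay n)
            (forwardGrowth_pos hr _ _ _).le (by positivity)
          rw [norm_mul, norm_ec, mul_one]
          exact hq n
      _ = 2 * M * C * (η ^ n + n * η ^ n) := by ring
  have hlim : Tendsto (fun n : ℕ => 2 * M * C * (η ^ n + n * η ^ n)) atTop (nhds 0) := by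
    simpa using ((tendsto_pow_atTop_nhds_zero_of_lt_one hη.1.le hη.2).add
      (tendsto_self_mul_const_pow_of_lt_one hη.1.le hη.2)).const_mul (2 * M * C)
  have h0 : ‖p 0 - q 0 * ec y‖ = 0 := le_antisymm (ge_of_tendsto' hlim hbound) (norm_nonneg _)
  have hpq (n : ℕ) : p n = q n * ec (forwardOrbit r b y n) := by
    have hn := h.norm_sub_mul_forwardGrowth hrt ht y n
    rw [h0] at hn
    exact sub_eq_zero.1 <| norm_eq_zero.1 <|
      (mul_eq_zero.1 hn).resolve_right (forwardGrowth_pos hr _ _ _).ne'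
  refine ⟨‖q 0‖ * C, η, hη, fun n => ?_⟩
  rw [hpq n, norm_mul, norm_ec, mul_one, h.norm_snd_eq hrt y hpq n, mul_assoc]
  exact mul_le_mul_of_nonneg_left (hdecay n) (norm_nonneg _)

end IsTransferSolution

end HalfLine

section PairRotations

/-- Rotation of each pair `(h (2n), h (2n+1))`, the first of the two factors of `S`. -/
def evenRotation (t r : ℝ) (h : ℤ → ℂ) (k : ℤ) : ℂ :=
  if Even k then r * h k + t * h (k + 1) else r * h k - t * h (k - 1)

/-- Rotation of each pair `(h (2n-1), h (2n))`, the second of the two factors of `S`. -/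
def oddRotation (t r : ℝ) (h : ℤ → ℂ) (k : ℤ) : ℂ :=
  if Even k then r * h k + t * h (k - 1) else r * h k - t * h (k + 1)

variable {t r : ℝ} {h : ℤ → ℂ} {k : ℤ}

lemma evenRotation_of_even (hk : Even k) : evenRotation t r h k = r * h k + t * h (k + 1) :=
  if_pos hk

lemma evenRotation_of_odd (hk : Odd k) : evenRotation t r h k = r * h k - t * h (k - 1) :=
  if_neg (Int.not_even_iff_odd.2 hk)

lemma oddRotation_of_even (hk : Even k) : oddRotation t r h k = r * h k + t * h (k - 1) :=
  if_pos hk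

lemma oddRotation_of_odd (hk : Odd k) : oddRotation t r h k = r * h k - t * h (k + 1) :=
  if_neg (Int.not_even_iff_odd.2 hk)

lemma evenRotation_neg_evenRotation (hrt : r ^ 2 + t ^ 2 = 1) (h : ℤ → ℂ) :
    evenRotation (-t) r (evenRotation t r h) = h := by
  have hrtc : (r : ℂ) ^ 2 + (t : ℂ) ^ 2 = 1 := mod_cast hrt
  ext k
  rcases Int.even_or_odd k with hk | hk
  · rw [evenRotation_of_even hk, evenRotation_of_even hk, evenRotation_of_odd hk.add_one,
      add_sub_cancel_right, ofReal_neg]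
    linear_combination h k * hrtc
  · rw [evenRotation_of_odd hk, evenRotation_of_odd hk, evenRotation_of_even (hk.sub_odd odd_one),
      sub_add_cancel, ofReal_neg]
    linear_combination h k * hrtc

lemma oddRotation_neg_oddRotation (hrt : r ^ 2 + t ^ 2 = 1) (h : ℤ → ℂ) :
    oddRotation (-t) r (oddRotation t r h) = h := by
  have hrtc : (r : ℂ) ^ 2 + (t : ℂ) ^ 2 = 1 := mod_cast hrt
  ext k
  rcases Int.even_or_odd k with hk | hk
  · rw [oddRotation_of_even hk, oddRotation_of_even hk, oddRotation_of_odd (hk.sub_odd odd_one),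
      sub_add_cancel, ofReal_neg]
    linear_combination h k * hrtc
  · rw [oddRotation_of_odd hk, oddRotation_of_odd hk, oddRotation_of_even hk.add_one,
      add_sub_cancel_right, ofReal_neg]
    linear_combination h k * hrtc

lemma evenRotation_comp_one_sub (t r : ℝ) (h : ℤ → ℂ) (k : ℤ) :
    evenRotation (-t) r (fun j => h (1 - j)) k = evenRotation t r h (1 - k) := by
  rcases Int.even_or_odd k with hk | hk
  · rw [evenRotation_of_even hk, evenRotation_of_odd (odd_one.sub_even hk), ofReal_neg,
      ← sub_sub, sub_right_comm]
    ring_nf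
  · rw [evenRotation_of_odd hk, evenRotation_of_even (odd_one.sub_odd hk), ofReal_neg,
      ← sub_add]
    ring_nf

lemma oddRotation_comp_one_sub (t r : ℝ) (h : ℤ → ℂ) (k : ℤ) :
    oddRotation (-t) r (fun j => h (1 - j)) k = oddRotation t r h (1 - k) := by
  rcases Int.even_or_odd k with hk | hk
  · rw [oddRotation_of_even hk, oddRotation_of_odd (odd_one.sub_even hk), ofReal_neg, ← sub_add]
    ring
  · rw [oddRotation_of_odd hk, oddRotation_of_even (odd_one.sub_odd hk), ofReal_neg, sub_sub]
    ring_nf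

lemma sum_Icc_sub_two_add_two {E : Type*} [AddCommMonoid E] (f : ℤ → E) (k : ℤ) :
    ∑ j ∈ Finset.Icc (k - 2) (k + 2), f j =
      f (k + -2) + (f (k + -1) + (f k + (f (k + 1) + f (k + 2)))) := by
  have hIcc : Finset.Icc (k - 2) (k + 2) = {k + -2, k + -1, k, k + 1, k + 2} := by
    ext j
    simp only [Finset.mem_Icc, Finset.mem_insert, Finset.mem_singleton]
    omega
  rw [hIcc, Finset.sum_insert (by simp), Finset.sum_insert (by simp),
    Finset.sum_insert (by simp), Finset.sum_insert (by simp), Finset.sum_singleton]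

lemma sum_Sent_mul (t r : ℝ) (h : ℤ → ℂ) (k : ℤ) :
    ∑ j ∈ Finset.Icc (k - 2) (k + 2), Sent t r k j * h j =
      evenRotation t r (oddRotation t r h) k := by
  rw [sum_Icc_sub_two_add_two]
  rcases Int.even_or_odd k with hk | hk
  · rw [evenRotation_of_even hk, oddRotation_of_even hk, oddRotation_of_odd hk.add_one]
    simp only [Sent, Int.even_iff.1 hk, sub_eq_add_neg, add_right_inj, add_eq_left, left_eq_add,
      add_assoc]
    norm_num
    ring
  · rw [evenRotation_of_odd hk, oddRotation_of_odd hk, oddRotation_of_even (hk.sub_odd odd_one)]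
    simp only [Sent, Int.odd_iff.1 hk, sub_eq_add_neg, add_right_inj, add_eq_left, left_eq_add,
      add_assoc]
    norm_num
    ring

end PairRotations

section Growth

/-- At most linear growth of a two-sided sequence, the a priori bound on generalized
eigenfunctions. -/
def HasLinearGrowth (h : ℤ → ℂ) : Prop :=
  ∃ M : ℝ, ∀ k : ℤ, ‖h k‖ ≤ M * (1 + |(k : ℝ)|)

/-- Exponential decay of a two-sided sequence, in the form required of localized eigenfunctions. -/
def HasExpDecay (h : ℤ → ℂ) : Prop :=
  ∃ C > (0 : ℝ), ∃ lam > (0 : ℝ), ∀ k : ℤ, ‖h k‖ ≤ C * Real.exp (-lam * |(k : ℝ)|)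

variable {h : ℤ → ℂ}

lemma HasLinearGrowth.comp_one_sub (hh : HasLinearGrowth h) :
    HasLinearGrowth fun k => h (1 - k) := by
  obtain ⟨M, hM⟩ := hh
  have hM0 : 0 ≤ M := by simpa using (norm_nonneg _).trans (hM 0)
  refine ⟨2 * M, fun k => (hM (1 - k)).trans ?_⟩
  have hk : |((1 - k : ℤ) : ℝ)| ≤ 1 + |(k : ℝ)| := by
    simpa using abs_sub (1 : ℝ) (k : ℝ)
  rw [mul_comm 2, mul_assoc]
  gcongr
  linarith [abs_nonneg (k : ℝ)]

lemma HasExpDecay.memℓp_two (hh : HasExpDecay h) : Memℓp h 2 := by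
  obtain ⟨C, _, lam, hlam, hle⟩ := hh
  have hgeom : Summable fun n : ℕ => Real.exp (n * (-(2 * lam))) :=
    Real.summable_exp_nat_mul_iff.2 (by linarith)
  have hexp : Summable fun k : ℤ => Real.exp (-(2 * lam) * |(k : ℝ)|) := by
    refine summable_int_iff_summable_nat_and_neg.2 ⟨?_, ?_⟩ <;>
      simpa [mul_comm] using hgeom
  refine memℓp_gen ((hexp.mul_left (C ^ 2)).of_nonneg_of_le (fun k => by positivity) fun k => ?_)
  calc ‖h k‖ ^ ENNReal.toReal 2 = ‖h k‖ ^ 2 := by simp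
    _ ≤ (C * Real.exp (-lam * |(k : ℝ)|)) ^ 2 := by gcongr; exact hle k
    _ = C ^ 2 * Real.exp (-(2 * lam) * |(k : ℝ)|) := by
      rw [mul_pow, ← Real.exp_nat_mul]
      ring_nf

lemma pow_le_exp_mul_exp {η : ℝ} (hη : η ∈ Set.Ioo 0 1) {n : ℕ} {d k : ℝ} (hk : |k| ≤ d + n) :
    η ^ n ≤ Real.exp (-Real.log η * d) * Real.exp (Real.log η * |k|) := by
  rw [← Real.exp_add, ← Real.exp_log hη.1, ← Real.exp_nat_mul, Real.exp_log hη.1]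
  gcongr
  nlinarith [Real.log_neg hη.1 hη.2]

lemma hasExpDecay_of_half_lines {a : ℤ} {C η D ξ : ℝ} (hη : η ∈ Set.Ioo 0 1)
    (hξ : ξ ∈ Set.Ioo 0 1) (hright : ∀ n : ℕ, ‖h (a + 1 + n)‖ ≤ C * η ^ n)
    (hleft : ∀ n : ℕ, ‖h (a - n)‖ ≤ D * ξ ^ n) : HasExpDecay h := by
  set ρ := max η ξ
  have hρ : ρ ∈ Set.Ioo 0 1 := ⟨lt_max_of_lt_left hη.1, max_lt hη.2 hξ.2⟩
  set B := max 1 (max C D)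
  have hB : 0 < B := zero_lt_one.trans_le (le_max_left _ _)
  have hexp {n : ℕ} {k : ℤ} (hk : |(k : ℝ)| ≤ (1 + |(a : ℝ)|) + n) (hkn : ‖h k‖ ≤ B * ρ ^ n) :
      ‖h k‖ ≤ B * Real.exp (-Real.log ρ * (1 + |(a : ℝ)|)) *
        Real.exp (-(-Real.log ρ) * |(k : ℝ)|) := by
    rw [neg_neg, mul_assoc]
    exact hkn.trans (mul_le_mul_of_nonneg_left (pow_le_exp_mul_exp hρ hk) hB.le)
  refine ⟨_, mul_pos hB (Real.exp_pos (-Real.log ρ * (1 + |(a : ℝ)|))), -Real.log ρ,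
    neg_pos.2 (Real.log_neg hρ.1 hρ.2), fun k => ?_⟩
  rcases le_or_gt (a + 1) k with hk | hk
  · obtain ⟨n, rfl⟩ := Int.le.dest hk
    refine hexp (n := n) ?_ ((hright n).trans ?_)
    · push_cast
      linarith [abs_add_three (a : ℝ) 1 n, abs_one (α := ℝ), Nat.abs_cast (R := ℝ) n]
    · exact mul_le_mul ((le_max_left _ _).trans (le_max_right _ _))
        (pow_le_pow_left₀ hη.1.le (le_max_left _ _) n) (pow_nonneg hη.1.le n) hB.le
  · obtain ⟨n, hn⟩ := Int.le.dest (Int.lt_add_one_iff.1 hk)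
    obtain rfl : k = a - n := by omega
    refine hexp (n := n) ?_ ((hleft n).trans ?_)
    · push_cast
      linarith [abs_sub (a : ℝ) n, Nat.abs_cast (R := ℝ) n]
    · exact mul_le_mul ((le_max_right _ _).trans (le_max_right _ _))
        (pow_le_pow_left₀ hξ.1.le (le_max_right _ _) n) (pow_nonneg hξ.1.le n) hB.le

end Growth

section GeneralizedEigenfunctions

variable {t r : ℝ} {ω : ℤ → Torus} {x : Torus} {h : ℤ → ℂ} {m : ℤ}

/-- `h` solves `U_ω h = e^{ix} h` as a formal recurrence, without any summability. -/
def IsGeneralizedEigenfunction (t r : ℝ) (ω : ℤ → Torus) (x : Torus) (h : ℤ → ℂ) : Prop :=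
  ∀ k, ec (x + ω k) * h k = evenRotation t r (oddRotation t r h) k

/-- The quasi-energy `x` is regular for `ω` if the transfer recursions on both sides of the pair of
sites `2m, 2m+1` have a decaying direction. -/
def IsRegularEnergy (r : ℝ) (m : ℤ) (ω : ℤ → Torus) (x : Torus) : Prop :=
  HasDecayingOrbit r (fun k => alternate k (x + ω (2 * m + 2 + k))) ∧
    HasDecayingOrbit r (fun k => alternate k (x + ω (2 * m - 1 - k)))

/-- The incoming field at `2m+1+k`, whose partner in the transfer recursion is `oddRotation h`. -/
def incomingField (ω : ℤ → Torus) (x : Torus) (h : ℤ → ℂ) (m : ℤ) (k : ℕ) : ℂ :=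
  if Even k then h (2 * m + 1 + k) else ec (x + ω (2 * m + 1 + k)) * h (2 * m + 1 + k)

lemma norm_incomingField (ω : ℤ → Torus) (x : Torus) (h : ℤ → ℂ) (m : ℤ) (k : ℕ) :
    ‖incomingField ω x h m k‖ = ‖h (2 * m + 1 + k)‖ := by
  unfold incomingField
  split_ifs <;> simp [norm_ec]

lemma norm_oddRotation_le (hrt : r ^ 2 + t ^ 2 = 1) (h : ℤ → ℂ) {k : ℤ} {M : ℝ}
    (hM : ∀ j, |j - k| ≤ 1 → ‖h j‖ ≤ M) : ‖oddRotation t r h k‖ ≤ 2 * M := by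
  have hr : ‖(r : ℂ)‖ ≤ 1 := by
    rw [norm_real]; exact (sq_le_one_iff_abs_le_one r).1 (by linarith [sq_nonneg t])
  have ht : ‖(t : ℂ)‖ ≤ 1 := by
    rw [norm_real]; exact (sq_le_one_iff_abs_le_one t).1 (by linarith [sq_nonneg r])
  have hmul {c : ℂ} (hc : ‖c‖ ≤ 1) {j : ℤ} (hj : |j - k| ≤ 1) : ‖c * h j‖ ≤ M := by
    rw [norm_mul]
    exact (mul_le_of_le_one_left (norm_nonneg _) hc).trans (hM j hj)
  rw [two_mul]
  rcases Int.even_or_odd k with hk | hk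
  · rw [oddRotation_of_even hk]
    exact norm_add_le_of_le (hmul hr (by simp)) (hmul ht (by simp))
  · rw [oddRotation_of_odd hk]
    exact norm_sub_le_of_le (hmul hr (by simp)) (hmul ht (by simp))

namespace IsGeneralizedEigenfunction

lemma comp_one_sub (hh : IsGeneralizedEigenfunction t r ω x h) :
    IsGeneralizedEigenfunction (-t) r (fun k => ω (1 - k)) x (fun k => h (1 - k)) := by
  intro k
  rw [funext (oddRotation_comp_one_sub t r h), evenRotation_comp_one_sub, hh]

lemma oddRotation_eq (hh : IsGeneralizedEigenfunction t r ω x h) (hrt : r ^ 2 + t ^ 2 = 1) :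
    oddRotation t r h = evenRotation (-t) r (fun k => ec (x + ω k) * h k) := by
  rw [funext hh, evenRotation_neg_evenRotation hrt]

lemma isTransferSolution (hh : IsGeneralizedEigenfunction t r ω x h) (hrt : r ^ 2 + t ^ 2 = 1)
    (ht : t ≠ 0) (m : ℤ) :
    IsTransferSolution t r (fun k => alternate k (x + ω (2 * m + 2 + k))) (incomingField ω x h m)
      (fun k => oddRotation t r h (2 * m + 1 + k)) := by
  intro k
  have htc : (t : ℂ) ≠ 0 := ofReal_ne_zero.2 ht
  have hrtc : (r : ℂ) ^ 2 + (t : ℂ) ^ 2 = 1 := mod_cast hrt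
  have hsucc : 2 * m + 1 + ((k + 1 : ℕ) : ℤ) = 2 * m + 1 + k + 1 := by push_cast; ring
  have hsite : 2 * m + 2 + (k : ℤ) = 2 * m + 1 + k + 1 := by ring
  have hodd : Odd (2 * m + 1) := odd_two_mul_add_one m
  simp only [incomingField, hsucc, hsite]
  rcases Nat.even_or_odd k with hk | hk
  · have hj : Odd (2 * m + 1 + (k : ℤ)) := hodd.add_even (mod_cast hk)
    rw [if_pos hk, if_neg (Nat.not_even_iff_odd.2 hk.add_one), alternate, if_pos hk, neg_neg,
      oddRotation_of_odd hj, oddRotation_of_even hj.add_one, add_sub_cancel_right]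
    constructor <;> field_simp
    · ring
    · linear_combination h (2 * m + 1 + k) * hrtc
  · have hj : Even (2 * m + 1 + (k : ℤ)) := hodd.add_odd (mod_cast hk)
    rw [if_neg (Nat.not_even_iff_odd.2 hk), if_pos hk.add_one, alternate,
      if_neg (Nat.not_even_iff_odd.2 hk), ec_neg, hh.oddRotation_eq hrt, evenRotation_of_even hj,
      evenRotation_of_odd hj.add_one, add_sub_cancel_right, ofReal_neg]
    have hec := ec_ne_zero (x + ω (2 * m + 1 + k + 1))
    constructor <;> field_simp
    · ring
    · linear_combination ec (x + ω (2 * m + 1 + k)) * h (2 * m + 1 + k) * hrtc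

lemma exists_norm_right_le (hh : IsGeneralizedEigenfunction t r ω x h) (hrt : r ^ 2 + t ^ 2 = 1)
    (ht : t ≠ 0) (hgrowth : HasLinearGrowth h)
    (hreg : HasDecayingOrbit r (fun k => alternate k (x + ω (2 * m + 2 + k)))) :
    ∃ C, ∃ η ∈ Set.Ioo (0 : ℝ) 1, ∀ n : ℕ, ‖h (2 * m + 1 + n)‖ ≤ C * η ^ n := by
  obtain ⟨M, hM⟩ := hgrowth
  have hM0 : 0 ≤ M := by simpa using (norm_nonneg _).trans (hM 0)
  set D : ℝ := 2 + |2 * (m : ℝ) + 1|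
  have hnear (n : ℕ) (j : ℤ) (hj : |j - (2 * m + 1 + n)| ≤ 1) : ‖h j‖ ≤ M * D * (1 + n) := by
    have hj' : |(j : ℝ) - (2 * m + 1 + n)| ≤ 1 := mod_cast hj
    have habs : |(j : ℝ)| ≤ 1 + |2 * (m : ℝ) + 1| + n := by
      have h1 := abs_add_three ((j : ℝ) - (2 * m + 1 + n)) (2 * m + 1) n
      rw [Nat.abs_cast, show (j : ℝ) - (2 * m + 1 + n) + (2 * m + 1) + n = j by ring] at h1
      linarith
    have hD : 1 + |(j : ℝ)| ≤ D * (1 + n) := by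
      nlinarith [mul_nonneg (abs_nonneg (2 * (m : ℝ) + 1)) n.cast_nonneg, n.cast_nonneg (α := ℝ)]
    rw [mul_assoc]
    exact (hM j).trans (mul_le_mul_of_nonneg_left hD hM0)
  have hp (n : ℕ) : ‖incomingField ω x h m n‖ ≤ 2 * (M * D) * (1 + n) := by
    rw [norm_incomingField, mul_assoc]
    exact (hnear n _ (by simp)).trans (le_mul_of_one_le_left (by positivity) one_le_two)
  have hq (n : ℕ) : ‖oddRotation t r h (2 * m + 1 + n)‖ ≤ 2 * (M * D) * (1 + n) := by
    rw [mul_assoc]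
    exact norm_oddRotation_le hrt h (hnear n)
  obtain ⟨C, η, hη, hle⟩ :=
    (hh.isTransferSolution hrt ht m).exists_norm_le_mul_pow hrt ht hreg hp hq
  exact ⟨C, η, hη, fun n => norm_incomingField ω x h m n ▸ hle n⟩

theorem hasExpDecay (hh : IsGeneralizedEigenfunction t r ω x h) (hrt : r ^ 2 + t ^ 2 = 1)
    (ht : t ≠ 0) (hgrowth : HasLinearGrowth h) (hreg : IsRegularEnergy r m ω x) :
    HasExpDecay h := by
  obtain ⟨C, η, hη, hright⟩ := hh.exists_norm_right_le hrt ht hgrowth hreg.1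
  have hleftreg : HasDecayingOrbit r
      (fun k => alternate k (x + ω (1 - (2 * -m + 2 + (k : ℤ))))) := by
    convert hreg.2 using 5
    ring
  obtain ⟨D, ξ, hξ, hleft⟩ := hh.comp_one_sub.exists_norm_right_le (by rwa [neg_sq])
    (neg_ne_zero.2 ht) hgrowth.comp_one_sub hleftreg
  refine hasExpDecay_of_half_lines (D := D) hη hξ hright fun n => ?_
  convert hleft n using 3
  ring

end IsGeneralizedEigenfunction

end GeneralizedEigenfunctions

section Basis

lemma inner_ez (k : ℤ) (x : Hz) : inner ℂ (ez k) x = x k := by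
  simp [ez, lp.inner_single_left]

lemma ez_apply (j k : ℤ) : (ez j : Hz) k = if k = j then 1 else 0 := by
  simp [ez, lp.single_apply, Pi.single_apply]

lemma norm_ez (k : ℤ) : ‖ez k‖ = 1 := by
  simp [ez, lp.norm_single]

variable (A : Hz →L[ℂ] Hz) {F : Finset ℤ} {k : ℤ}

lemma star_apply_ez_eq_sum (hF : ∀ j ∉ F, inner ℂ (ez k) (A (ez j)) = 0) :
    star A (ez k) = ∑ j ∈ F, (starRingEnd ℂ) (inner ℂ (ez k) (A (ez j))) • ez j := by
  ext i
  have hentry : star A (ez k) i = (starRingEnd ℂ) (inner ℂ (ez k) (A (ez i))) := by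
    rw [← inner_ez, ContinuousLinearMap.star_eq_adjoint, ContinuousLinearMap.adjoint_inner_right,
      inner_conj_symm]
  rw [hentry, lp.coeFn_sum, Finset.sum_apply]
  simp only [lp.coeFn_smul, Pi.smul_apply, ez_apply, smul_eq_mul, mul_ite, mul_one, mul_zero,
    Finset.sum_ite_eq]
  split_ifs with hi
  · rfl
  · rw [hF i hi, map_zero]

lemma apply_eq_sum_inner_mul (hF : ∀ j ∉ F, inner ℂ (ez k) (A (ez j)) = 0) (x : Hz) :
    A x k = ∑ j ∈ F, inner ℂ (ez k) (A (ez j)) * x j := by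
  rw [← inner_ez, ← ContinuousLinearMap.adjoint_inner_left, ← ContinuousLinearMap.star_eq_adjoint,
    star_apply_ez_eq_sum A hF, sum_inner]
  simp only [inner_smul_left, conj_conj, inner_ez]

end Basis

section UnitaryEigenvectors

variable {H : Type*} [NormedAddCommGroup H] [InnerProductSpace ℂ H] [CompleteSpace H]
  {A : H →L[ℂ] H} {ψ : H} {c : ℂ}

lemma norm_eigenvalue_eq_one_of_mem_unitary (hA : A ∈ unitary (H →L[ℂ] H)) (hψ : ψ ≠ 0)
    (h : A ψ = c • ψ) : ‖c‖ = 1 := by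
  have hnorm := ContinuousLinearMap.norm_map_of_mem_unitary hA ψ
  rw [h, norm_smul] at hnorm
  exact (mul_eq_right₀ (norm_ne_zero_iff.2 hψ)).1 hnorm

lemma star_apply_eigenvector_of_mem_unitary (hA : A ∈ unitary (H →L[ℂ] H)) (hψ : ψ ≠ 0)
    (h : A ψ = c • ψ) : star A ψ = (starRingEnd ℂ) c • ψ := by
  have hc := norm_eigenvalue_eq_one_of_mem_unitary hA hψ h
  have hψ' : c • star A ψ = ψ := by
    rw [← map_smul, ← h, ← mul_apply_eq_comp, Unitary.star_mul_self_of_mem hA,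
      one_apply_eq_self]
  rw [← hψ', smul_smul, conj_mul', hc, ofReal_one, one_pow, one_smul, hψ']

end UnitaryEigenvectors

section WalkOperator

variable {t r : ℝ}

lemma Sent_eq_zero {k j : ℤ} (hj : j ∉ Finset.Icc (k - 2) (k + 2)) : Sent t r k j = 0 := by
  rw [Finset.mem_Icc] at hj
  unfold Sent
  split_ifs <;> first | rfl | omega

lemma conj_Sent (k j : ℤ) : (starRingEnd ℂ) (Sent t r k j) = Sent t r k j := by
  unfold Sent
  split_ifs <;> simp only [conj_ofReal, map_zero]

lemma sum_Sent_transpose_mul (t r : ℝ) (h : ℤ → ℂ) (k : ℤ) :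
    ∑ j ∈ Finset.Icc (k - 2) (k + 2), Sent t r j k * h j =
      oddRotation (-t) r (evenRotation (-t) r h) k := by
  rw [sum_Icc_sub_two_add_two]
  rcases Int.even_or_odd k with hk | hk
  · have h1 : (k + -2) % 2 = 0 := by grind
    have h2 : (k + -1) % 2 = 1 := by grind
    have h3 : (k + 1) % 2 = 1 := by grind
    have h4 : (k + 2) % 2 = 0 := by grind
    rw [oddRotation_of_even hk, evenRotation_of_even hk,
      evenRotation_of_odd (hk.sub_odd odd_one)]
    simp only [Sent, Int.even_iff.1 hk, sub_eq_add_neg, left_eq_add, add_assoc,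
      h1, h2, h3, h4]
    norm_num
    ring
  · have h1 : (k + -2) % 2 = 1 := by grind
    have h2 : (k + -1) % 2 = 0 := by grind
    have h3 : (k + 1) % 2 = 0 := by grind
    have h4 : (k + 2) % 2 = 1 := by grind
    rw [oddRotation_of_odd hk, evenRotation_of_odd hk, evenRotation_of_even hk.add_one]
    simp only [Sent, Int.odd_iff.1 hk, sub_eq_add_neg, left_eq_add, add_assoc,
      h1, h2, h3, h4]
    norm_num
    ring

variable {ω : ℤ → Torus} {A : Hz →L[ℂ] Hz}
  (hA : ∀ k j : ℤ, inner ℂ (ez k) (A (ez j)) = ec (-(ω k)) * Sent t r k j)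
include hA

lemma star_apply_ez (k : ℤ) : star A (ez k) =
    ∑ j ∈ Finset.Icc (k - 2) (k + 2), (starRingEnd ℂ) (ec (-(ω k)) * Sent t r k j) • ez j := by
  simp only [← hA]
  exact star_apply_ez_eq_sum A fun j hj => by rw [hA, Sent_eq_zero hj, mul_zero]

lemma walk_apply (x : Hz) (k : ℤ) :
    A x k = ec (-(ω k)) * evenRotation t r (oddRotation t r x) k := by
  rw [apply_eq_sum_inner_mul A (F := Finset.Icc (k - 2) (k + 2)) fun j hj => by
    rw [hA, Sent_eq_zero hj, mul_zero]]
  simp only [hA, ← sum_Sent_mul, Finset.mul_sum, mul_assoc]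

lemma star_walk_apply (x : Hz) (k : ℤ) :
    star A x k = oddRotation (-t) r (evenRotation (-t) r fun j => ec (ω j) * x j) k := by
  have hstar (i j : ℤ) : inner ℂ (ez i) (star A (ez j)) = ec (ω j) * Sent t r j i := by
    rw [ContinuousLinearMap.star_eq_adjoint, ContinuousLinearMap.adjoint_inner_right,
      ← inner_conj_symm, hA, map_mul, conj_Sent, conj_ec, ec_neg, inv_inv]
  rw [apply_eq_sum_inner_mul (star A) (F := Finset.Icc (k - 2) (k + 2)) fun j hj => by
    rw [hstar, Sent_eq_zero (by simp only [Finset.mem_Icc] at hj ⊢; omega), mul_zero]]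
  simp only [hstar, ← sum_Sent_transpose_mul]
  exact Finset.sum_congr rfl fun j _ => by ring

lemma walk_mem_unitary (hrt : r ^ 2 + t ^ 2 = 1) : A ∈ unitary (Hz →L[ℂ] Hz) := by
  have hrt' : r ^ 2 + (-t) ^ 2 = 1 := by rwa [neg_sq]
  refine Unitary.mem_iff.2 ⟨?_, ?_⟩ <;> ext x k <;>
    rw [mul_apply_eq_comp, one_apply_eq_self]
  · have hphase : (fun j => ec (ω j) * A x j) = evenRotation t r (oddRotation t r x) :=
      funext fun j => by rw [walk_apply hA, ec_neg, mul_inv_cancel_left₀ (ec_ne_zero _)]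
    rw [star_walk_apply hA, hphase, evenRotation_neg_evenRotation hrt,
      oddRotation_neg_oddRotation hrt]
  · have hO := oddRotation_neg_oddRotation hrt' (evenRotation (-t) r fun j => ec (ω j) * x j)
    have hE := evenRotation_neg_evenRotation hrt' fun j => ec (ω j) * x j
    rw [neg_neg] at hO hE
    rw [walk_apply hA, funext (star_walk_apply hA x), hO, hE, ec_neg,
      inv_mul_cancel_left₀ (ec_ne_zero _)]

lemma walk_apply_eq_smul_iff {ψ : Hz} {x : Torus} :
    A ψ = ec x • ψ ↔ IsGeneralizedEigenfunction t r ω x ψ := by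
  rw [lp.ext_iff, funext_iff]
  refine forall_congr' fun k => ?_
  rw [walk_apply hA, lp.coeFn_smul, Pi.smul_apply, smul_eq_mul, ec_neg,
    inv_mul_eq_iff_eq_mul₀ (ec_ne_zero _), ec_add, eq_comm, mul_left_comm, mul_assoc]

end WalkOperator

section Cyclicity

variable {t r : ℝ} {ω : ℤ → Torus} {A : Hz →L[ℂ] Hz} {V : Submodule ℂ Hz} {m : ℤ}

lemma evenRotation_eq_zero {h : ℤ → ℂ} (h0 : h (2 * m) = 0) (h1 : h (2 * m + 1) = 0) :
    evenRotation t r h (2 * m) = 0 ∧ evenRotation t r h (2 * m + 1) = 0 := by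
  rw [evenRotation_of_even (even_two_mul m), evenRotation_of_odd (odd_two_mul_add_one m),
    add_sub_cancel_right, h0, h1]
  simp

lemma oddRotation_eq_zero {h : ℤ → ℂ} (h0 : h (2 * m - 1) = 0) (h1 : h (2 * m) = 0) :
    oddRotation t r h (2 * m - 1) = 0 ∧ oddRotation t r h (2 * m) = 0 := by
  rw [oddRotation_of_even (even_two_mul m), oddRotation_of_odd ((even_two_mul m).sub_odd odd_one),
    sub_add_cancel, h0, h1]
  simp

variable (hA : ∀ k j : ℤ, inner ℂ (ez k) (A (ez j)) = ec (-(ω k)) * Sent t r k j)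
  (hrt : r ^ 2 + t ^ 2 = 1) (ht : t ≠ 0)
include hA hrt ht

lemma forall_mem_eq_zero_of_even_pair (hV : ∀ v ∈ V, A v ∈ V)
    (h0 : ∀ v ∈ V, v (2 * m) = 0 ∧ v (2 * m + 1) = 0) {v : Hz} (hv : v ∈ V) :
    v (2 * m - 1) = 0 ∧ v (2 * m + 2) = 0 := by
  have htc : (t : ℂ) ≠ 0 := ofReal_ne_zero.2 ht
  have hE {k : ℤ} (hk : A v k = 0) : evenRotation t r (oddRotation t r v) k = 0 :=
    (mul_eq_zero.1 (walk_apply hA v k ▸ hk)).resolve_left (ec_ne_zero _)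
  have hO : oddRotation t r v (2 * m) = 0 ∧ oddRotation t r v (2 * m + 1) = 0 := by
    rw [← evenRotation_neg_evenRotation hrt (oddRotation t r v)]
    exact evenRotation_eq_zero (hE (h0 _ (hV v hv)).1) (hE (h0 _ (hV v hv)).2)
  rw [oddRotation_of_even (even_two_mul m), oddRotation_of_odd (odd_two_mul_add_one m),
    (h0 v hv).1, (h0 v hv).2, add_assoc] at hO
  exact ⟨by simpa [htc] using hO.1, by simpa [htc] using hO.2⟩

lemma forall_mem_eq_zero_of_odd_pair (hV : ∀ v ∈ V, star A v ∈ V)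
    (h0 : ∀ v ∈ V, v (2 * m - 1) = 0 ∧ v (2 * m) = 0) {v : Hz} (hv : v ∈ V) :
    v (2 * m - 2) = 0 ∧ v (2 * m + 1) = 0 := by
  have htc : (t : ℂ) ≠ 0 := ofReal_ne_zero.2 ht
  have hO {k : ℤ} (hk : star A v k = 0) :
      oddRotation (-t) r (evenRotation (-t) r fun j => ec (ω j) * v j) k = 0 :=
    star_walk_apply hA v k ▸ hk
  have hE : evenRotation (-t) r (fun j => ec (ω j) * v j) (2 * m - 1) = 0 ∧
      evenRotation (-t) r (fun j => ec (ω j) * v j) (2 * m) = 0 := by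
    rw [← oddRotation_neg_oddRotation (t := -t) (r := r) (by rwa [neg_sq])
      (evenRotation (-t) r fun j => ec (ω j) * v j)]
    exact oddRotation_eq_zero (hO (h0 _ (hV v hv)).1) (hO (h0 _ (hV v hv)).2)
  rw [evenRotation_of_even (even_two_mul m), evenRotation_of_odd ((even_two_mul m).sub_odd odd_one),
    (h0 v hv).1, (h0 v hv).2, sub_sub] at hE
  exact ⟨by simpa [htc, ec_ne_zero] using hE.1, by simpa [htc, ec_ne_zero] using hE.2⟩

theorem eq_bot_of_forall_mem_eq_zero (hV : ∀ v ∈ V, A v ∈ V) (hV' : ∀ v ∈ V, star A v ∈ V)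
    (h0 : ∀ v ∈ V, v (2 * m) = 0 ∧ v (2 * m + 1) = 0) : V = ⊥ := by
  have hall (n : ℤ) : ∀ v ∈ V, v (2 * n) = 0 ∧ v (2 * n + 1) = 0 := by
    induction n using Int.inductionOn' (b := m) with
    | zero => exact h0
    | succ n _ ih =>
      have hodd : ∀ v ∈ V, v (2 * (n + 1) - 1) = 0 ∧ v (2 * (n + 1)) = 0 := fun v hv => by
        rw [show 2 * (n + 1) - 1 = 2 * n + 1 by ring, show 2 * (n + 1) = 2 * n + 2 by ring]
        exact ⟨(ih v hv).2, (forall_mem_eq_zero_of_even_pair hA hrt ht hV ih hv).2⟩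
      exact fun v hv => ⟨(hodd v hv).2, (forall_mem_eq_zero_of_odd_pair hA hrt ht hV' hodd hv).2⟩
    | pred n _ ih =>
      have hodd : ∀ v ∈ V, v (2 * n - 1) = 0 ∧ v (2 * n) = 0 := fun v hv =>
        ⟨(forall_mem_eq_zero_of_even_pair hA hrt ht hV ih hv).1, (ih v hv).1⟩
      intro v hv
      rw [show 2 * (n - 1) + 1 = 2 * n - 1 by ring, show 2 * (n - 1) = 2 * n - 2 by ring]
      exact ⟨(forall_mem_eq_zero_of_odd_pair hA hrt ht hV' hodd hv).1, (hodd v hv).1⟩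
  refine (Submodule.eq_bot_iff _).2 fun v hv => lp.ext (funext fun k => ?_)
  rcases Int.even_or_odd' k with ⟨n, rfl | rfl⟩
  exacts [(hall n v hv).1, (hall n v hv).2]

end Cyclicity

lemma of_ae_of_singleton_ne_zero {X : Type*} [MeasurableSpace X] {μ : Measure X} {p : X → Prop}
    {x : X} (h : ∀ᵐ y ∂μ, p y) (hx : μ {x} ≠ 0) : p x := by
  by_contra hpx
  exact hx (measure_mono_null (Set.singleton_subset_iff.2 hpx) (ae_iff.1 h))

section SquareIntegrable

variable {X : Type*} [TopologicalSpace X] [CompactSpace X] [MeasurableSpace X] [BorelSpace X]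
  {μ : Measure X} [IsFiniteMeasure μ]

lemma integrable_continuousMap_mul {g : X → ℂ} (hg : MemLp g 2 μ) (f : C(X, ℂ)) :
    Integrable (fun x => f x * g x) μ :=
  (hg.integrable one_le_two).bdd_mul f.continuous.aestronglyMeasurable
    (Eventually.of_forall f.norm_coe_le_norm)

lemma inner_toLp_left (f : C(X, ℂ)) (g : Lp ℂ 2 μ) :
    inner ℂ (ContinuousMap.toLp 2 μ ℂ f) g = ∫ x, (starRingEnd ℂ) (f x) * g x ∂μ := by
  rw [L2.inner_def]
  refine integral_congr_ae ?_
  filter_upwards [ContinuousMap.coeFn_toLp (p := 2) μ (𝕜 := ℂ) f] with x hx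
  rw [hx, RCLike.inner_apply, mul_comm]

theorem ae_eq_of_forall_integral_continuousMap_mul_eq [NormalSpace X] [μ.WeaklyRegular]
    {g h : X → ℂ} (hg : MemLp g 2 μ) (hh : MemLp h 2 μ)
    (heq : ∀ f : C(X, ℂ), ∫ x, f x * g x ∂μ = ∫ x, f x * h x ∂μ) : g =ᵐ[μ] h := by
  have hsub := hg.sub hh
  have hzero : hsub.toLp (g - h) = 0 := by
    refine (ContinuousMap.toLp_denseRange ℂ μ ℂ (p := 2) (by norm_num)).eq_zero_of_inner_right ℂ ?_
    intro f
    calc inner ℂ (ContinuousMap.toLp 2 μ ℂ f) (hsub.toLp (g - h))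
        = ∫ x, star f x * g x - star f x * h x ∂μ := by
          rw [inner_toLp_left]
          refine integral_congr_ae ?_
          filter_upwards [hsub.coeFn_toLp] with x hx
          rw [hx, Pi.sub_apply, ← mul_sub]
          rfl
      _ = 0 := by
          rw [integral_sub (integrable_continuousMap_mul hg _)
            (integrable_continuousMap_mul hh _), heq, sub_self]
  filter_upwards [hsub.coeFn_toLp, Lp.coeFn_zero ℂ 2 μ] with x hx hx0
  rw [hzero, hx0] at hx
  exact sub_eq_zero.1 hx.symm

end SquareIntegrable

section SpectralMeasure

variable {X H : Type*} [TopologicalSpace X]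

/-- The inclusion of real-valued into complex-valued continuous functions. -/
def complexify : C(X, ℝ) →ₗ[ℝ] C(X, ℂ) :=
  (ofRealCLM.compLeftContinuous ℝ X).toLinearMap

lemma complexify_apply (f : C(X, ℝ)) (x : X) : complexify f x = f x := rfl

lemma star_complexify (f : C(X, ℝ)) : star (complexify f) = complexify f :=
  ContinuousMap.ext fun x => conj_ofReal (f x)

variable [NormedAddCommGroup H] [InnerProductSpace ℂ H] [CompleteSpace H]
  (Φ : C(X, ℂ) →⋆ₐ[ℂ] (H →L[ℂ] H)) (φ : H)

lemma inner_map_apply_map_apply (f g : C(X, ℂ)) :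
    inner ℂ (Φ f φ) (Φ g φ) = inner ℂ φ (Φ (star f * g) φ) := by
  rw [map_mul, map_star, mul_apply_eq_comp, ContinuousLinearMap.star_eq_adjoint,
    ContinuousLinearMap.adjoint_inner_right]

lemma inner_map_complexify_nonneg {f : C(X, ℝ)} (hf : 0 ≤ f) :
    0 ≤ (inner ℂ φ (Φ (complexify f) φ)).re := by
  let g : C(X, ℝ) := ⟨fun x => √(f x), by fun_prop⟩
  have hfg : complexify f = star (complexify g) * complexify g := by
    rw [star_complexify]
    ext x
    rw [ContinuousMap.mul_apply, complexify_apply, complexify_apply, ← ofReal_mul]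
    exact congrArg _ (Real.mul_self_sqrt (hf x)).symm
  rw [hfg, ← inner_map_apply_map_apply]
  exact inner_self_nonneg (𝕜 := ℂ)

lemma ofReal_re_inner_map_complexify (f : C(X, ℝ)) :
    ((inner ℂ φ (Φ (complexify f) φ)).re : ℂ) = inner ℂ φ (Φ (complexify f) φ) := by
  rw [← conj_eq_iff_re, inner_conj_symm, ← ContinuousLinearMap.adjoint_inner_right,
    ← ContinuousLinearMap.star_eq_adjoint, ← map_star, star_complexify]

variable [T2Space X] [CompactSpace X] [MeasurableSpace X] [BorelSpace X]

/-- The functional `f ↦ ⟨φ, Φ(f) φ⟩` on real-valued functions, whose representing measure is the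
spectral measure of `φ`. -/
def spectralFunctional : CompactlySupportedContinuousMap X ℝ →ₚ[ℝ] ℝ :=
  PositiveLinearMap.mk₀
    { toFun := fun f => (inner ℂ φ (Φ (complexify f.toContinuousMap) φ)).re
      map_add' := fun f g => by
        rw [← add_re, ← inner_add_right, ← add_apply, ← map_add, ← map_add]
        rfl
      map_smul' := fun c f => by
        have hsmul : complexify (c • f).toContinuousMap =
            (c : ℂ) • complexify f.toContinuousMap :=
          map_smul complexify c f.toContinuousMap
        rw [hsmul, map_smul, smul_apply, inner_smul_right, re_ofReal_mul]
        rfl }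
    fun _ hf => inner_map_complexify_nonneg Φ φ hf

/-- The spectral measure of the vector `φ` with respect to the functional calculus `Φ`. -/
def spectralMeasure : Measure X := RealRMK.rieszMeasure (spectralFunctional Φ φ)

instance : IsFiniteMeasure (spectralMeasure Φ φ) :=
  inferInstanceAs (IsFiniteMeasure (RealRMK.rieszMeasure _))

instance : (spectralMeasure Φ φ).Regular := RealRMK.regular_rieszMeasure _

lemma integral_complexify_spectralMeasure (f : C(X, ℝ)) :
    ∫ x, (f x : ℂ) ∂spectralMeasure Φ φ = inner ℂ φ (Φ (complexify f) φ) := by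
  have hreal : ∫ x, f x ∂spectralMeasure Φ φ = (inner ℂ φ (Φ (complexify f) φ)).re :=
    RealRMK.integral_rieszMeasure (spectralFunctional Φ φ)
      ⟨f, HasCompactSupport.of_compactSpace _⟩
  rw [integral_complex_ofReal, hreal, ofReal_re_inner_map_complexify]

theorem integral_spectralMeasure (f : C(X, ℂ)) :
    ∫ x, f x ∂spectralMeasure Φ φ = inner ℂ φ (Φ f φ) := by
  let u : C(X, ℝ) := ⟨fun x => (f x).re, by fun_prop⟩
  let v : C(X, ℝ) := ⟨fun x => (f x).im, by fun_prop⟩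
  have hf (x : X) : (u x : ℂ) + v x * I = f x := re_add_im (f x)
  have hf' : f = complexify u + I • complexify v :=
    ContinuousMap.ext fun x => by rw [← hf x, mul_comm]; rfl
  simp only [← hf]
  rw [integral_add (integrable_of_continuous _ (by fun_prop))
      (integrable_of_continuous _ (by fun_prop)), integral_mul_const,
    integral_complexify_spectralMeasure, integral_complexify_spectralMeasure, hf', map_add,
    map_smul, add_apply, smul_apply, inner_add_right, inner_smul_right, mul_comm]

lemma norm_map_apply (f : C(X, ℂ)) :
    ‖Φ f φ‖ = ‖ContinuousMap.toLp 2 (spectralMeasure Φ φ) ℂ f‖ := by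
  have hinner : inner ℂ (Φ f φ) (Φ f φ) =
      inner ℂ (ContinuousMap.toLp 2 (spectralMeasure Φ φ) ℂ f)
        (ContinuousMap.toLp 2 (spectralMeasure Φ φ) ℂ f) := by
    rw [inner_map_apply_map_apply, ← integral_spectralMeasure, inner_toLp_left]
    refine integral_congr_ae ?_
    filter_upwards [ContinuousMap.coeFn_toLp (p := 2) (spectralMeasure Φ φ) (𝕜 := ℂ) f] with x hx
    rw [hx]
    rfl
  rw [norm_eq_sqrt_re_inner (𝕜 := ℂ), hinner, ← norm_eq_sqrt_re_inner]

lemma isProbabilityMeasure_spectralMeasure (hφ : ‖φ‖ = 1) :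
    IsProbabilityMeasure (spectralMeasure Φ φ) := by
  have hone := integral_spectralMeasure Φ φ 1
  rw [map_one, one_apply_eq_self, inner_self_eq_norm_sq_to_K, hφ] at hone
  simp only [ContinuousMap.one_apply, integral_const, real_smul, mul_one, coe_algebraMap,
    ofReal_one, one_pow, ofReal_eq_one] at hone
  exact isProbabilityMeasure_iff_real.2 hone

/-- The isometry from `L²(spectralMeasure Φ φ)` to `H` that extends `f ↦ Φ(f) φ`. -/
def cyclicEmbedding : Lp ℂ 2 (spectralMeasure Φ φ) →L[ℂ] H :=
  ((ContinuousLinearMap.apply ℂ H φ).toLinearMap ∘ₗ Φ.toLinearMap).extendOfNorm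
    (ContinuousMap.toLp 2 (spectralMeasure Φ φ) ℂ).toLinearMap

lemma denseRange_toLp_spectralMeasure :
    DenseRange (ContinuousMap.toLp (E := ℂ) 2 (spectralMeasure Φ φ) ℂ) :=
  ContinuousMap.toLp_denseRange ℂ _ ℂ (by norm_num)

lemma cyclicEmbedding_toLp (f : C(X, ℂ)) :
    cyclicEmbedding Φ φ (ContinuousMap.toLp 2 (spectralMeasure Φ φ) ℂ f) = Φ f φ :=
  LinearMap.extendOfNorm_eq (denseRange_toLp_spectralMeasure Φ φ)
    ⟨1, fun f => (norm_map_apply Φ φ f).le.trans_eq (one_mul _).symm⟩ f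

lemma norm_cyclicEmbedding_le : ‖cyclicEmbedding Φ φ‖ ≤ 1 :=
  LinearMap.opNorm_extendOfNorm_le (denseRange_toLp_spectralMeasure Φ φ) zero_le_one
    fun f => (norm_map_apply Φ φ f).le.trans_eq (one_mul _).symm

/-- The density of the complex spectral measure of the pair `y, φ` with respect to the spectral
measure of `φ`, so that `⟨y, Φ(f) φ⟩ = ∫ f · spectralDensity Φ φ y`. -/
def spectralDensity (y : H) (x : X) : ℂ :=
  (starRingEnd ℂ) (ContinuousLinearMap.adjoint (cyclicEmbedding Φ φ) y x)

lemma memLp_spectralDensity (y : H) : MemLp (spectralDensity Φ φ y) 2 (spectralMeasure Φ φ) :=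
  (Lp.memLp _).star

lemma integral_mul_spectralDensity (y : H) (f : C(X, ℂ)) :
    ∫ x, f x * spectralDensity Φ φ y x ∂spectralMeasure Φ φ = inner ℂ y (Φ f φ) := by
  rw [← cyclicEmbedding_toLp, ← ContinuousLinearMap.adjoint_inner_left, ← inner_conj_symm,
    inner_toLp_left, ← integral_conj]
  simp only [map_mul, conj_conj]
  rfl

lemma lintegral_enorm_spectralDensity_sq_le (y : H) :
    ∫⁻ x, ‖spectralDensity Φ φ y x‖ₑ ^ 2 ∂spectralMeasure Φ φ ≤ ‖y‖ₑ ^ 2 := by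
  set g := ContinuousLinearMap.adjoint (cyclicEmbedding Φ φ) y with hg
  have hnorm : ‖g‖ ≤ ‖y‖ := (ContinuousLinearMap.le_opNorm _ _).trans <| mul_le_of_le_one_left
    (norm_nonneg _) ((LinearIsometryEquiv.norm_map _ _).trans_le (norm_cyclicEmbedding_le Φ φ))
  calc ∫⁻ x, ‖spectralDensity Φ φ y x‖ₑ ^ 2 ∂spectralMeasure Φ φ
      = ∫⁻ x, ‖g x‖ₑ ^ 2 ∂spectralMeasure Φ φ := by
        simp only [spectralDensity, ← hg, ← ofReal_norm, RCLike.norm_conj]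
    _ = ‖g‖ₑ ^ 2 := by
        rw [Lp.enorm_def]
        simpa using (eLpNorm_nnreal_pow_eq_lintegral (p := 2) (f := g) two_ne_zero).symm
    _ ≤ ‖y‖ₑ ^ 2 := by gcongr; exact enorm_le_iff_norm_le.2 hnorm

lemma spectralDensity_eq_of_forall {y : H} {g : X → ℂ} (hg : MemLp g 2 (spectralMeasure Φ φ))
    (h : ∀ f : C(X, ℂ), ∫ x, f x * g x ∂spectralMeasure Φ φ = inner ℂ y (Φ f φ)) :
    spectralDensity Φ φ y =ᵐ[spectralMeasure Φ φ] g :=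
  ae_eq_of_forall_integral_continuousMap_mul_eq (memLp_spectralDensity Φ φ y) hg fun f => by
    rw [integral_mul_spectralDensity, h]

lemma spectralDensity_self : spectralDensity Φ φ φ =ᵐ[spectralMeasure Φ φ] 1 :=
  spectralDensity_eq_of_forall Φ φ (memLp_const 1) fun f => by
    simp only [Pi.one_apply, mul_one, integral_spectralMeasure]

lemma spectralDensity_sum {ι : Type*} (s : Finset ι) (c : ι → ℂ) (y : ι → H) :
    spectralDensity Φ φ (∑ i ∈ s, c i • y i) =ᵐ[spectralMeasure Φ φ]
      fun x => ∑ i ∈ s, (starRingEnd ℂ) (c i) * spectralDensity Φ φ (y i) x := by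
  have hmem (i : ι) := memLp_spectralDensity Φ φ (y i)
  refine spectralDensity_eq_of_forall Φ φ
    (memLp_finsetSum s fun i _ => (hmem i).const_mul _) fun f => ?_
  simp only [Finset.mul_sum, mul_left_comm (f _)]
  rw [integral_finsetSum s fun i _ => (integrable_continuousMap_mul (hmem i) f).const_mul _]
  simp only [integral_const_mul, integral_mul_spectralDensity, sum_inner, inner_smul_left]

lemma spectralDensity_star_map_apply (a : C(X, ℂ)) (y : H) :
    spectralDensity Φ φ (star (Φ a) y) =ᵐ[spectralMeasure Φ φ]
      fun x => a x * spectralDensity Φ φ y x :=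
  spectralDensity_eq_of_forall Φ φ
    (MemLp.of_le_mul (memLp_spectralDensity Φ φ y)
      (a.continuous.aestronglyMeasurable.mul (memLp_spectralDensity Φ φ y).1)
      (Eventually.of_forall fun x => (norm_mul_le _ _).trans
        (mul_le_mul_of_nonneg_right (a.norm_coe_le_norm x) (norm_nonneg _))))
    fun f => by
      rw [ContinuousLinearMap.star_eq_adjoint, ContinuousLinearMap.adjoint_inner_left,
        ← mul_apply_eq_comp, ← map_mul, ← integral_mul_spectralDensity]
      simp only [ContinuousMap.mul_apply, mul_left_comm, mul_assoc]

theorem spectralMeasure_preimage_ne_zero {a : C(X, ℂ)} {ψ : H} {c : ℂ}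
    (hψ : star (Φ a) ψ = (starRingEnd ℂ) c • ψ) (hψφ : inner ℂ ψ φ ≠ 0) :
    spectralMeasure Φ φ (a ⁻¹' {c}) ≠ 0 := by
  intro hnull
  have hne : ∀ᵐ x ∂spectralMeasure Φ φ, a x ≠ c := measure_eq_zero_iff_ae_notMem.1 hnull
  refine hψφ ?_
  have h1 := integral_mul_spectralDensity Φ φ ψ 1
  rw [map_one, one_apply_eq_self] at h1
  rw [← h1]
  refine integral_eq_zero_of_ae ?_
  have hsmul := spectralDensity_sum Φ φ {()} (fun _ => (starRingEnd ℂ) c) fun _ => ψ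
  simp only [Finset.sum_singleton, ← hψ, conj_conj] at hsmul
  filter_upwards [hne, hsmul, spectralDensity_star_map_apply Φ φ a ψ] with x hx hc ha
  have hzero : (a x - c) * spectralDensity Φ φ ψ x = 0 := by rw [sub_mul, ← ha, hc, sub_self]
  rw [(mul_eq_zero.1 hzero).resolve_left (sub_ne_zero.2 hx), mul_zero, Pi.zero_apply]

/-- The component of `φ` in the joint eigenspace of the operators `Φ a` belonging to the point
`x` of the spectrum; it vanishes unless `x` is an atom of the spectral measure. -/
def spectralAtom (x : X) : H :=
  cyclicEmbedding Φ φ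
    (indicatorConstLp 2 (measurableSet_singleton x) (measure_ne_top (spectralMeasure Φ φ) _) 1)

lemma inner_spectralAtom (x : X) (y : H) :
    inner ℂ y (spectralAtom Φ φ x) =
      (spectralMeasure Φ φ).real {x} * spectralDensity Φ φ y x := by
  rw [spectralAtom, ← ContinuousLinearMap.adjoint_inner_left, ← inner_conj_symm,
    L2.inner_indicatorConstLp_one, integral_singleton, real_smul, map_mul, conj_ofReal]
  rfl

lemma map_spectralAtom (a : C(X, ℂ)) (x : X) :
    Φ a (spectralAtom Φ φ x) = a x • spectralAtom Φ φ x := by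
  refine ext_inner_left ℂ fun y => ?_
  rw [← ContinuousLinearMap.adjoint_inner_left, ← ContinuousLinearMap.star_eq_adjoint,
    inner_smul_right, inner_spectralAtom, inner_spectralAtom, mul_left_comm]
  by_cases hx : spectralMeasure Φ φ {x} = 0
  · simp [Measure.real, hx]
  · rw [of_ae_of_singleton_ne_zero (spectralDensity_star_map_apply Φ φ a y) hx]

theorem mem_closure_span_eigenvectors (a : C(X, ℂ))
    (hatom : ∀ᵐ x ∂spectralMeasure Φ φ, spectralMeasure Φ φ {x} ≠ 0) :
    φ ∈ (Submodule.span ℂ {ψ | ψ ≠ 0 ∧ ∃ c : ℂ, Φ a ψ = c • ψ}).topologicalClosure := by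
  rw [← Submodule.orthogonal_orthogonal_eq_closure, Submodule.mem_orthogonal]
  intro y hy
  have h1 := integral_mul_spectralDensity Φ φ y 1
  rw [map_one, one_apply_eq_self] at h1
  rw [← h1]
  refine integral_eq_zero_of_ae ?_
  filter_upwards [hatom] with x hx
  have horth : inner ℂ y (spectralAtom Φ φ x) = 0 := by
    by_cases h0 : spectralAtom Φ φ x = 0
    · rw [h0, inner_zero_right]
    · exact Submodule.inner_left_of_mem_orthogonal
        (Submodule.subset_span (by exact ⟨h0, a x, map_spectralAtom Φ φ a x⟩)) hy
  rw [inner_spectralAtom] at horth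
  have hx' : ((spectralMeasure Φ φ).real {x} : ℂ) ≠ 0 :=
    ofReal_ne_zero.2 (ENNReal.toReal_ne_zero.2 ⟨hx, measure_ne_top _ _⟩)
  rw [(mul_eq_zero.1 horth).resolve_left hx', mul_zero, Pi.zero_apply]

end SpectralMeasure

section LinearGrowth

lemma summable_inv_one_add_abs_sq : Summable fun k : ℤ => ((1 + |(k : ℝ)|) ^ 2)⁻¹ := by
  have hnat : Summable fun n : ℕ => ((1 + (n : ℝ)) ^ 2)⁻¹ := by
    simpa [add_comm] using (summable_nat_add_iff 1).2 (Real.summable_nat_pow_inv.2 one_lt_two)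
  refine summable_int_iff_summable_nat_and_neg.2 ⟨?_, ?_⟩ <;> simpa using hnat

lemma ae_hasLinearGrowth {X : Type*} [MeasurableSpace X] {μ : Measure X} {g : ℤ → X → ℂ}
    (hg : ∀ k, AEMeasurable (g k) μ) (hint : ∀ k, ∫⁻ x, ‖g k x‖ₑ ^ 2 ∂μ ≤ 1) :
    ∀ᵐ x ∂μ, HasLinearGrowth fun k => g k x := by
  set w : ℤ → ℝ := fun k => ((1 + |(k : ℝ)|) ^ 2)⁻¹ with hw
  have hmeas (k : ℤ) : AEMeasurable (fun x => ‖g k x‖ₑ ^ 2 * ENNReal.ofReal (w k)) μ :=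
    ((hg k).enorm.pow_const 2).mul_const _
  have hfinite : ∫⁻ x, ∑' k, ‖g k x‖ₑ ^ 2 * ENNReal.ofReal (w k) ∂μ ≠ ⊤ := by
    rw [lintegral_tsum hmeas]
    refine ne_top_of_le_ne_top (b := ∑' k, ENNReal.ofReal (w k)) ?_
      (ENNReal.tsum_le_tsum fun k => ?_)
    · rw [← ENNReal.ofReal_tsum_of_nonneg (fun k => by positivity) summable_inv_one_add_abs_sq]
      exact ENNReal.ofReal_ne_top
    · rw [lintegral_mul_const'' _ ((hg k).enorm.pow_const 2)]
      exact mul_le_of_le_one_left' (hint k)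
  filter_upwards [ae_lt_top' (AEMeasurable.tsum hmeas) hfinite] with x hx
  set S := ∑' k, ‖g k x‖ₑ ^ 2 * ENNReal.ofReal (w k)
  refine ⟨√S.toReal, fun k => ?_⟩
  have hk := ENNReal.toReal_mono hx.ne (ENNReal.le_tsum k)
  rw [ENNReal.toReal_mul, ENNReal.toReal_pow, toReal_enorm, ENNReal.toReal_ofReal (by positivity),
    hw, ← div_eq_mul_inv, div_le_iff₀ (by positivity)] at hk
  refine (pow_le_pow_iff_left₀ (norm_nonneg _) (by positivity) two_ne_zero).1 ?_
  rwa [mul_pow, Real.sq_sqrt ENNReal.toReal_nonneg]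

end LinearGrowth

theorem exists_starAlgHom_fourier_one_eq {H : Type*} [NormedAddCommGroup H]
    [InnerProductSpace ℂ H] [CompleteSpace H] {A : H →L[ℂ] H} (hA : A ∈ unitary (H →L[ℂ] H)) :
    ∃ Φ : C(Torus, ℂ) →⋆ₐ[ℂ] (H →L[ℂ] H), Φ (fourier 1) = A := by
  have hcircle (z : spectrum ℂ A) : ‖z.1‖ = 1 := by
    simpa using spectrum.subset_circle_of_unitary (𝕜 := ℂ) hA z.2
  let angle : C(spectrum ℂ A, Torus) :=
    ⟨fun z => AddCircle.homeomorphCircle'.symm ⟨z.1, mem_sphere_zero_iff_norm.2 (hcircle z)⟩,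
      AddCircle.homeomorphCircle'.symm.continuous.comp (continuous_subtype_val.subtype_mk _)⟩
  have hnormal : IsStarNormal A := isStarNormal_of_mem_unitary hA
  refine ⟨(cfcHom hnormal).comp (ContinuousMap.compStarAlgHom' ℂ ℂ angle), ?_⟩
  rw [StarAlgHom.comp_apply]
  refine (congrArg (cfcHom hnormal) (ContinuousMap.ext fun z => ?_)).trans (cfcHom_id hnormal)
  exact (fourier_eq_ec_zpow 1 _).trans ((zpow_one _).trans (ec_arg (hcircle z)))

lemma map_mem_span_of_forall_exists_smul {R M : Type*} [CommSemiring R] [AddCommMonoid M]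
    [Module R M] {f : M →ₗ[R] M} {s : Set M} (hs : ∀ ψ ∈ s, ∃ c : R, f ψ = c • ψ) :
    ∀ v ∈ Submodule.span R s, f v ∈ Submodule.span R s := by
  refine fun v hv => (Submodule.span_le (p := (Submodule.span R s).comap f)).2 (fun ψ hψ => ?_) hv
  obtain ⟨c, hc⟩ := hs ψ hψ
  exact Submodule.mem_comap.2 (hc ▸ Submodule.smul_mem _ c (Submodule.subset_span hψ))

section EigenvectorsOfUnitaries

variable {H : Type*} [NormedAddCommGroup H] [InnerProductSpace ℂ H] [CompleteSpace H]
  {A : H →L[ℂ] H} (hA : A ∈ unitary (H →L[ℂ] H))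
include hA

lemma exists_ec_eq_of_eigenvector {ψ : H} (hψ : ψ ≠ 0) {c : ℂ} (h : A ψ = c • ψ) :
    ∃ x : Torus, ec x = c :=
  ⟨_, ec_arg (norm_eigenvalue_eq_one_of_mem_unitary hA hψ h)⟩

lemma spectralMeasure_singleton_ne_zero {Φ : C(Torus, ℂ) →⋆ₐ[ℂ] (H →L[ℂ] H)}
    (hΦ : Φ (fourier 1) = A) {φ ψ : H} {x : Torus} (hψ : A ψ = ec x • ψ)
    (hψφ : inner ℂ ψ φ ≠ 0) : spectralMeasure Φ φ {x} ≠ 0 := by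
  have hψ0 : ψ ≠ 0 := fun h => hψφ (by rw [h, inner_zero_left])
  have hpre : fourier 1 ⁻¹' {ec x} = ({x} : Set Torus) := by
    ext y
    rw [Set.mem_preimage, Set.mem_singleton_iff, fourier_eq_ec_zpow, zpow_one,
      ec_injective.eq_iff, Set.mem_singleton_iff]
  rw [← hpre]
  refine spectralMeasure_preimage_ne_zero Φ φ ?_ hψφ
  rw [hΦ, star_apply_eigenvector_of_mem_unitary hA hψ0 hψ]

end EigenvectorsOfUnitaries

section WalkSpectrum

variable {t r : ℝ} {ω : ℤ → Torus} {A : Hz →L[ℂ] Hz} {m : ℤ}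
  {Φ : C(Torus, ℂ) →⋆ₐ[ℂ] (Hz →L[ℂ] Hz)}
  (hA : ∀ k j : ℤ, inner ℂ (ez k) (A (ez j)) = ec (-(ω k)) * Sent t r k j)
  (hΦ : Φ (fourier 1) = A)
include hA hΦ

lemma ae_isGeneralizedEigenfunction_spectralDensity (φ : Hz) : ∀ᵐ x ∂spectralMeasure Φ φ,
    IsGeneralizedEigenfunction t r ω x fun k => spectralDensity Φ φ (ez k) x := by
  refine ae_all_iff.2 fun k => ?_
  have hsum := spectralDensity_sum Φ φ (Finset.Icc (k - 2) (k + 2))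
    (fun j => (starRingEnd ℂ) (ec (-(ω k)) * Sent t r k j)) ez
  rw [← star_apply_ez hA, ← hΦ] at hsum
  filter_upwards [hsum, spectralDensity_star_map_apply Φ φ (fourier 1) (ez k)] with x hx hmul
  simp only [hx, conj_conj, mul_assoc, ← Finset.mul_sum, sum_Sent_mul, fourier_eq_ec_zpow,
    zpow_one, ec_neg] at hmul
  rw [ec_add, mul_right_comm, ← hmul, mul_comm, mul_inv_cancel_left₀ (ec_ne_zero _)]

theorem ae_exists_generalizedEigenfunction (j : ℤ) : ∀ᵐ x ∂spectralMeasure Φ (ez j),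
    ∃ h : ℤ → ℂ, IsGeneralizedEigenfunction t r ω x h ∧ HasLinearGrowth h ∧ h j = 1 := by
  have hgrowth := ae_hasLinearGrowth
    (fun k => (memLp_spectralDensity Φ (ez j) (ez k)).1.aemeasurable)
    fun k => (lintegral_enorm_spectralDensity_sq_le Φ (ez j) (ez k)).trans_eq
      (by rw [← ofReal_norm, norm_ez, ENNReal.ofReal_one, one_pow])
  filter_upwards [ae_isGeneralizedEigenfunction_spectralDensity hA hΦ (ez j), hgrowth,
    spectralDensity_self Φ (ez j)] with x hx hxg hx1
  exact ⟨_, hx, hxg, hx1⟩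

variable (hrt : r ^ 2 + t ^ 2 = 1) (ht : t ≠ 0)
include hrt ht

lemma ae_singleton_ne_zero_of_ae_isRegularEnergy {j : ℤ}
    (hreg : ∀ᵐ x ∂spectralMeasure Φ (ez j), IsRegularEnergy r m ω x) :
    ∀ᵐ x ∂spectralMeasure Φ (ez j), spectralMeasure Φ (ez j) {x} ≠ 0 := by
  filter_upwards [hreg, ae_exists_generalizedEigenfunction hA hΦ j] with x hx ⟨h, hh, hgrowth, hj⟩
  let ψ : Hz := ⟨h, (hh.hasExpDecay hrt ht hgrowth hx).memℓp_two⟩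
  have hψ : A ψ = ec x • ψ := (walk_apply_eq_smul_iff hA).2 hh
  refine spectralMeasure_singleton_ne_zero (walk_mem_unitary hA hrt) hΦ hψ ?_
  rw [← inner_conj_symm, inner_ez, show ψ j = 1 from hj, map_one]
  exact one_ne_zero

variable (hreg : ∀ j ∈ ({2 * m, 2 * m + 1} : Set ℤ),
  ∀ᵐ x ∂spectralMeasure Φ (ez j), IsRegularEnergy r m ω x)
include hreg

theorem closure_span_eigenvectors_eq_top :
    (Submodule.span ℂ {ψ : Hz | ψ ≠ 0 ∧ ∃ c : ℂ, A ψ = c • ψ}).topologicalClosure = ⊤ := by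
  set E := {ψ : Hz | ψ ≠ 0 ∧ ∃ c : ℂ, A ψ = c • ψ}
  have hunitary := walk_mem_unitary hA hrt
  have hmem (j : ℤ) (hj : j ∈ ({2 * m, 2 * m + 1} : Set ℤ)) :
      ez j ∈ (Submodule.span ℂ E).topologicalClosure := by
    have := mem_closure_span_eigenvectors Φ (ez j) (fourier 1)
      (ae_singleton_ne_zero_of_ae_isRegularEnergy hA hΦ hrt ht (hreg j hj))
    rwa [hΦ] at this
  have hvanish (v) (hv : v ∈ (Submodule.span ℂ E)ᗮ) (j : ℤ)
      (hj : j ∈ ({2 * m, 2 * m + 1} : Set ℤ)) : v j = 0 := by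
    rw [← inner_ez]
    rw [← Submodule.orthogonal_closure] at hv
    exact Submodule.inner_right_of_mem_orthogonal (hmem j hj) hv
  rw [Submodule.topologicalClosure_eq_top_iff]
  refine eq_bot_of_forall_mem_eq_zero (m := m) hA hrt ht ?_ ?_
    fun v hv => ⟨hvanish v hv _ (Or.inl rfl), hvanish v hv _ (Or.inr rfl)⟩
  · refine ContinuousLinearMap.orthogonal_mem_invtSubmodule (T := A)
      (map_mem_span_of_forall_exists_smul ?_)
    rintro ψ ⟨hψ0, c, hψ⟩
    exact ⟨_, star_apply_eigenvector_of_mem_unitary hunitary hψ0 hψ⟩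
  · refine ContinuousLinearMap.orthogonal_mem_invtSubmodule (T := star A)
      (map_mem_span_of_forall_exists_smul ?_)
    rintro ψ ⟨-, c, hψ⟩
    exact ⟨c, (congrArg (· ψ) (star_star A)).trans hψ⟩

theorem hasExpDecay_of_eigenvector {ψ : Hz} (hψ0 : ψ ≠ 0) {c : ℂ} (hψ : A ψ = c • ψ) :
    HasExpDecay ψ := by
  have hunitary := walk_mem_unitary hA hrt
  obtain ⟨x, rfl⟩ := exists_ec_eq_of_eigenvector hunitary hψ0 hψ
  obtain ⟨j, hj, hψj⟩ : ∃ j ∈ ({2 * m, 2 * m + 1} : Set ℤ), ψ j ≠ 0 := by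
    by_contra! hzero
    refine hψ0 (Submodule.span_singleton_eq_bot.1 (eq_bot_of_forall_mem_eq_zero (m := m)
      (V := ℂ ∙ ψ) hA hrt ht ?_ ?_ fun v hv => ?_))
    · exact map_mem_span_of_forall_exists_smul (f := A.toLinearMap) (by rintro _ rfl; exact ⟨_, hψ⟩)
    · exact map_mem_span_of_forall_exists_smul (f := (star A).toLinearMap)
        (by rintro _ rfl; exact ⟨_, star_apply_eigenvector_of_mem_unitary hunitary hψ0 hψ⟩)
    · obtain ⟨a, rfl⟩ := Submodule.mem_span_singleton.1 hv
      have hsmul (j : ℤ) (hj : j ∈ ({2 * m, 2 * m + 1} : Set ℤ)) : (a • ψ) j = 0 := by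
        rw [lp.coeFn_smul, Pi.smul_apply, hzero j hj, smul_zero]
      exact ⟨hsmul _ (Or.inl rfl), hsmul _ (Or.inr rfl)⟩
  have hatom : spectralMeasure Φ (ez j) {x} ≠ 0 := by
    refine spectralMeasure_singleton_ne_zero hunitary hΦ hψ ?_
    rw [← inner_conj_symm, inner_ez]
    exact (map_ne_zero _).2 hψj
  have hgrowth : HasLinearGrowth ψ := ⟨‖ψ‖, fun k =>
    (lp.norm_apply_le_norm two_ne_zero ψ k).trans
      (le_mul_of_one_le_right (norm_nonneg _) (le_add_of_nonneg_right (abs_nonneg _)))⟩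
  exact ((walk_apply_eq_smul_iff hA).1 hψ).hasExpDecay hrt ht hgrowth
    (of_ae_of_singleton_ne_zero (hreg j hj) hatom)

end WalkSpectrum

section MeasurableMeasures

theorem measurable_measure_of_measurable_lintegral {α X : Type*} [MeasurableSpace α]
    [TopologicalSpace X] [HasOuterApproxClosed X] [MeasurableSpace X] [BorelSpace X]
    {K : α → Measure X} [∀ a, IsFiniteMeasure (K a)]
    (h : ∀ f : BoundedContinuousFunction X NNReal, Measurable fun a => ∫⁻ x, f x ∂K a) :
    Measurable K := by
  have hclosed (F : Set X) (hF : IsClosed F) : Measurable fun a => K a F :=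
    measurable_of_tendsto_metrizable (fun n => h (hF.apprSeq n))
      (tendsto_pi_nhds.2 fun a => HasOuterApproxClosed.tendsto_lintegral_apprSeq hF (K a))
  exact .measure_of_isPiSystem (BorelSpace.measurable_eq.trans borel_eq_generateFrom_isClosed)
    isPiSystem_isClosed hclosed (hclosed _ isClosed_univ)

lemma integral_fourier_neg {T : ℝ} (μ : Measure (AddCircle T)) (n : ℤ) :
    ∫ x, fourier (-n) x ∂μ = (starRingEnd ℂ) (∫ x, fourier n x ∂μ) := by
  simp only [fourier_neg, integral_conj]

variable {T : ℝ} [Fact (0 < T)]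
variable {α : Type*} [MeasurableSpace α]

theorem measurable_measure_of_measurable_integral_fourier {K : α → Measure (AddCircle T)}
    [∀ a, IsFiniteMeasure (K a)]
    (h : ∀ n : ℕ, Measurable fun a => ∫ x, fourier (n : ℤ) x ∂K a) : Measurable K := by
  have hfourier (n : ℤ) : Measurable fun a => ∫ x, fourier n x ∂K a := by
    obtain ⟨n, rfl | rfl⟩ := n.eq_nat_or_neg
    · exact h n
    · simp only [integral_fourier_neg]
      exact continuous_conj.measurable.comp (h n)
  have hint (a : α) (f : C(AddCircle T, ℂ)) : Integrable f (K a) :=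
    integrable_of_continuous _ f.continuous
  have hcontinuous (f : C(AddCircle T, ℂ)) : Measurable fun a => ∫ x, f x ∂K a := by
    induction f using fourier_induction with
    | zero => simp
    | add f g hf hg =>
      simp only [ContinuousMap.add_apply, integral_add (hint _ f) (hint _ g)]
      exact hf.add hg
    | smul c f hf =>
      simpa only [ContinuousMap.smul_apply, smul_eq_mul, integral_const_mul] using hf.const_mul c
    | fourier n => exact hfourier n
    | closed =>
      refine IsSeqClosed.isClosed fun u f hu hf => ?_
      exact measurable_of_tendsto_metrizable (fun n => hu n) (tendsto_pi_nhds.2 fun a =>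
        ((continuous_integral_continuousMap (K a)).tendsto f).comp hf)
  refine measurable_measure_of_measurable_lintegral fun f => ?_
  have hf (a : α) : ∫⁻ x, f x ∂K a = ENNReal.ofReal (∫ x, ((f x : ℝ) : ℂ) ∂K a).re := by
    rw [integral_complex_ofReal, ofReal_re]
    exact lintegral_coe_eq_integral _ (integrable_of_continuous _ (by fun_prop))
  simp only [hf]
  exact (measurable_re.comp (hcontinuous ⟨fun x => ((f x : ℝ) : ℂ), by fun_prop⟩)).ennreal_ofReal

theorem comp_eq_haarAddCircle_of_integral_fourier_eq_zero {μ : Measure α} [IsProbabilityMeasure μ]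
    {κ : ProbabilityTheory.Kernel α (AddCircle T)} [ProbabilityTheory.IsMarkovKernel κ]
    (h : ∀ n : ℕ, ∫ a, ∫ x, fourier ((n : ℤ) + 1) x ∂κ a ∂μ = 0) :
    μ.bind κ = AddCircle.haarAddCircle := by
  have hneg (n : ℕ) : ∫ a, ∫ x, fourier (-((n : ℤ) + 1)) x ∂κ a ∂μ = 0 := by
    simp only [integral_fourier_neg, integral_conj, h, map_zero]
  refine measure_ext_of_integral_fourier_eq fun n => ?_
  rw [Measure.comp_eq_comp_const_apply, ProbabilityTheory.Kernel.integral_comp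
    (integrable_of_continuous _ (map_continuous _)), ProbabilityTheory.Kernel.const_apply,
    integral_fourier_haarAddCircle]
  rcases n with (_ | n) | n
  · simp
  · exact (h n).trans (if_neg n.cast_add_one_ne_zero).symm
  · exact (hneg n).trans (if_neg (Int.negSucc_ne_zero n)).symm

lemma integral_eval_ec_neg (p : Polynomial ℂ) :
    ∫ a, p.eval (ec (-a)) ∂AddCircle.haarAddCircle = p.coeff 0 := by
  have hpow (i : ℕ) (a : Torus) : ec (-a) ^ i = fourier (-(i : ℤ)) a := by
    rw [fourier_eq_ec_zpow, zpow_neg, zpow_natCast, ec_neg, inv_pow]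
  simp only [Polynomial.eval_eq_sum_range, hpow]
  rw [integral_finsetSum _ fun i _ => integrable_of_continuous _ (by fun_prop)]
  simp only [integral_const_mul, integral_fourier_haarAddCircle, neg_eq_zero, Nat.cast_eq_zero]
  simp

end MeasurableMeasures

lemma integral_fourier_spectralMeasure {H : Type*} [NormedAddCommGroup H] [InnerProductSpace ℂ H]
    [CompleteSpace H] {A : H →L[ℂ] H} {Φ : C(Torus, ℂ) →⋆ₐ[ℂ] (H →L[ℂ] H)}
    (hΦ : Φ (fourier 1) = A) (φ : H) (n : ℕ) :
    ∫ x, fourier (n : ℤ) x ∂spectralMeasure Φ φ = inner ℂ φ ((A ^ n) φ) := by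
  have hpow : (fourier (n : ℤ) : C(Torus, ℂ)) = fourier 1 ^ n := by
    ext x
    rw [ContinuousMap.pow_apply, fourier_eq_ec_zpow, fourier_eq_ec_zpow, zpow_natCast, zpow_one]
  rw [integral_spectralMeasure, hpow, map_pow, hΦ]

section SpectralAveraging

variable {t r : ℝ} {U : (ℤ → Torus) → Hz →L[ℂ] Hz}
  (hU : ∀ (ω : ℤ → Torus) (k j : ℤ),
    inner ℂ (ez k) (U ω (ez j)) = ec (-(ω k)) * Sent t r k j)
include hU

lemma walk_pow_succ_apply (ω : ℤ → Torus) (n : ℕ) (φ : Hz) (k : ℤ) :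
    (U ω ^ (n + 1)) φ k =
      ec (-(ω k)) * ∑ j ∈ Finset.Icc (k - 2) (k + 2), Sent t r k j * (U ω ^ n) φ j := by
  rw [pow_succ', mul_apply_eq_comp, walk_apply (hU ω), sum_Sent_mul]

lemma measurable_walk_pow_apply (n : ℕ) (φ : Hz) (k : ℤ) :
    Measurable fun ω => (U ω ^ n) φ k := by
  induction n generalizing k with
  | zero => simp
  | succ n ih =>
    simp only [walk_pow_succ_apply hU]
    exact (continuous_ec.measurable.comp (measurable_pi_apply k).neg).mul
      (Finset.measurable_sum _ fun j _ => (ih j).const_mul _)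

lemma exists_polynomial_walk_pow_apply (ω : ℤ → Torus) (j : ℤ) (n : ℕ) (φ : Hz) (k : ℤ) :
    ∃ p : Polynomial ℂ, ∀ a, (U (Function.update ω j a) ^ n) φ k = p.eval (ec (-a)) := by
  induction n generalizing k with
  | zero => exact ⟨Polynomial.C (φ k), by simp⟩
  | succ n ih =>
    choose p hp using ih
    refine ⟨(if k = j then Polynomial.X else Polynomial.C (ec (-(ω k)))) *
      ∑ i ∈ Finset.Icc (k - 2) (k + 2), Polynomial.C (Sent t r k i) * p i, fun a => ?_⟩
    simp only [walk_pow_succ_apply hU, hp, Polynomial.eval_mul, Polynomial.eval_finsetSum,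
      Polynomial.eval_C]
    rcases eq_or_ne k j with rfl | hk
    · rw [Function.update_self, if_pos rfl, Polynomial.eval_X]
    · rw [Function.update_of_ne hk, if_neg hk, Polynomial.eval_C]

lemma integral_walk_pow_succ_apply_update (ω : ℤ → Torus) (j : ℤ) (n : ℕ) (φ : Hz) :
    ∫ a, (U (Function.update ω j a) ^ (n + 1)) φ j ∂AddCircle.haarAddCircle = 0 := by
  choose p hp using exists_polynomial_walk_pow_apply hU ω j n φ
  have heval (a : Torus) : (U (Function.update ω j a) ^ (n + 1)) φ j = (Polynomial.X *
      ∑ i ∈ Finset.Icc (j - 2) (j + 2), Polynomial.C (Sent t r j i) * p i).eval (ec (-a)) := by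
    simp only [walk_pow_succ_apply hU, hp, Function.update_self, Polynomial.eval_mul,
      Polynomial.eval_finsetSum, Polynomial.eval_C, Polynomial.eval_X]
  simp only [heval, integral_eval_ec_neg, Polynomial.coeff_X_mul_zero]

variable {Φ : (ℤ → Torus) → C(Torus, ℂ) →⋆ₐ[ℂ] (Hz →L[ℂ] Hz)} (hΦ : ∀ ω, Φ ω (fourier 1) = U ω)
include hΦ

lemma measurable_spectralMeasure_ez (j : ℤ) : Measurable fun ω => spectralMeasure (Φ ω) (ez j) := by
  refine measurable_measure_of_measurable_integral_fourier fun n => ?_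
  simp only [integral_fourier_spectralMeasure (hΦ _), inner_ez]
  exact measurable_walk_pow_apply hU n (ez j) j

/-- The spectral measure of the walk `U ω` at the site `j`, as a kernel in the phases `ω`. -/
def spectralKernel (j : ℤ) : ProbabilityTheory.Kernel (ℤ → Torus) Torus where
  toFun ω := spectralMeasure (Φ ω) (ez j)
  measurable' := measurable_spectralMeasure_ez hU hΦ j

instance (j : ℤ) : ProbabilityTheory.IsMarkovKernel (spectralKernel hU hΦ j) :=
  ⟨fun _ => isProbabilityMeasure_spectralMeasure _ _ (norm_ez j)⟩

theorem bind_spectralKernel_comap_update (ω : ℤ → Torus) (j : ℤ) :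
    AddCircle.haarAddCircle.bind
      ((spectralKernel hU hΦ j).comap (Function.update ω j) (measurable_update ω)) =
    AddCircle.haarAddCircle := by
  refine comp_eq_haarAddCircle_of_integral_fourier_eq_zero fun n => ?_
  rw [← integral_walk_pow_succ_apply_update hU ω j n (ez j)]
  refine integral_congr_ae (.of_forall fun a => ?_)
  exact (integral_fourier_spectralMeasure (hΦ _) (ez j) (n + 1)).trans (inner_ez j _)

theorem ae_ae_spectralKernel_update_of_ae (ω : ℤ → Torus) (j : ℤ) {p : Torus → Prop}
    (hp : ∀ᵐ x ∂AddCircle.haarAddCircle, p x) :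
    ∀ᵐ a ∂AddCircle.haarAddCircle, ∀ᵐ x ∂spectralKernel hU hΦ j (Function.update ω j a), p x := by
  have hcomap := Measure.ae_ae_of_ae_comp
    ((bind_spectralKernel_comap_update hU hΦ ω j).symm ▸ hp)
  simpa only [ProbabilityTheory.Kernel.comap_apply] using hcomap

end SpectralAveraging

section MeasureLemmas

theorem exists_measurableSet_restrict_absolutelyContinuous {X : Type*} [MeasurableSpace X]
    {μ ν : Measure X} [μ.HaveLebesgueDecomposition ν] (h : ¬ μ ⟂ₘ ν) :
    ∃ M, MeasurableSet M ∧ μ M ≠ 0 ∧ μ.restrict M ≪ ν := by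
  obtain ⟨M, hM, hsing, hνM⟩ := Measure.mutuallySingular_singularPart μ ν
  refine ⟨M, hM, fun hμM => h ⟨M, hM, hμM, hνM⟩, ?_⟩
  conv_lhs => rw [← Measure.singularPart_add_rnDeriv μ ν, Measure.restrict_add,
    Measure.restrict_eq_zero.2 hsing, zero_add]
  exact Measure.restrict_le_self.absolutelyContinuous.trans (withDensity_absolutelyContinuous _ _)

theorem measurableSet_ae_kernel {α β : Type*} [MeasurableSpace α] [MeasurableSpace β]
    {κ : ProbabilityTheory.Kernel α β} [ProbabilityTheory.IsSFiniteKernel κ] {p : α → β → Prop}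
    (hp : MeasurableSet {q : α × β | p q.1 q.2}) : MeasurableSet {a | ∀ᵐ b ∂κ a, p a b} :=
  ProbabilityTheory.Kernel.measurable_kernel_prodMk_left hp.compl (measurableSet_singleton 0)

theorem ae_infinitePi_of_ae_ae_update {ι : Type*} [DecidableEq ι] {X : ι → Type*}
    [∀ i, MeasurableSpace (X i)] {μ : ∀ i, Measure (X i)} [∀ i, IsProbabilityMeasure (μ i)] (j : ι)
    {p : (∀ i, X i) → Prop} (hp : MeasurableSet {ω | p ω})
    (h : ∀ᵐ ω ∂Measure.infinitePi μ, ∀ᵐ a ∂μ j, p (Function.update ω j a)) :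
    ∀ᵐ ω ∂Measure.infinitePi μ, p ω := by
  rw [← map_update_infinitePi_prod μ j, ae_map_iff measurable_update'.aemeasurable hp]
  exact (Measure.ae_prod_iff_ae_ae (measurable_update' hp)).2 h

theorem ae_infinitePi_comp_of_ae {ι κ X : Type*} [MeasurableSpace X] {P : Measure X}
    [IsProbabilityMeasure P] {f : κ → ι} (hf : Function.Injective f) {p : (κ → X) → Prop}
    (h : ∀ᵐ ω ∂Measure.infinitePi (fun _ : κ => P), p ω) :
    ∀ᵐ ω ∂Measure.infinitePi (fun _ : ι => P), p (ω ∘ f) := by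
  rw [← Measure.map_infinitePi_infinitePi_of_inj (P := fun _ : ι => P) hf] at h
  exact ae_of_ae_map (measurable_pi_lambda _ fun _ => measurable_pi_apply _).aemeasurable h

theorem ae_exists_mem_infinitePi {X : Type*} [MeasurableSpace X] {P : Measure X}
    [IsProbabilityMeasure P] {B : Set X} (hB : MeasurableSet B) (hPB : P B ≠ 0) :
    ∀ᵐ ω ∂Measure.infinitePi (fun _ : ℕ => P), ∃ n, ω n ∈ B := by
  have hle (N : ℕ) : Measure.infinitePi (fun _ : ℕ => P) {ω | ¬ ∃ n, ω n ∈ B} ≤ P Bᶜ ^ N :=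
    calc
      _ ≤ Measure.infinitePi (fun _ : ℕ => P) (Set.pi (Finset.range N) fun _ => Bᶜ) :=
        measure_mono fun ω (hω : ¬ _) n _ hn => hω ⟨n, hn⟩
      _ = P Bᶜ ^ N := by
        rw [Measure.infinitePi_pi _ fun _ _ => hB.compl, Finset.prod_const, Finset.card_range]
  have hlt : P Bᶜ < 1 := by
    rw [prob_compl_eq_one_sub hB]
    exact ENNReal.sub_lt_self ENNReal.one_ne_top one_ne_zero hPB
  exact le_antisymm (ge_of_tendsto' (ENNReal.tendsto_pow_atTop_nhds_zero_of_lt_one hlt) hle)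
    zero_le

theorem ae_exists_forall_mem_infinitePi {ι κ X : Type*} [Finite κ] [MeasurableSpace X]
    {P : Measure X} [IsProbabilityMeasure P] {B : Set X} (hB : MeasurableSet B) (hPB : P B ≠ 0)
    {f : ℕ → κ → ι} (hf : Function.Injective f.uncurry) :
    ∀ᵐ ω ∂Measure.infinitePi (fun _ : ι => P), ∃ n, ∀ i, ω (f n i) ∈ B := by
  cases nonempty_fintype κ
  have hpos : Measure.infinitePi (fun _ : κ => P) (Set.univ.pi fun _ => B) ≠ 0 := by
    rw [← Finset.coe_univ, Measure.infinitePi_pi _ fun _ _ => hB]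
    exact Finset.prod_ne_zero_iff.2 fun _ _ => hPB
  have hexists := ae_exists_mem_infinitePi (.univ_pi fun _ => hB) hpos
  rw [← Measure.infinitePi_map_curry (fun (_ : ℕ) (_ : κ) => P)] at hexists
  filter_upwards [ae_infinitePi_comp_of_ae hf
    (ae_of_ae_map (MeasurableEquiv.measurable _).aemeasurable hexists)] with ω ⟨n, hn⟩
  exact ⟨n, fun i => hn i (Set.mem_univ i)⟩

end MeasureLemmas

section RegularEnergies

variable {r : ℝ}

lemma isRegularEnergy_update_iff {m j : ℤ} (hj : j ∈ ({2 * m, 2 * m + 1} : Set ℤ))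
    (ω : ℤ → Torus) (a x : Torus) :
    IsRegularEnergy r m (Function.update ω j a) x ↔ IsRegularEnergy r m ω x := by
  rw [Set.mem_insert_iff, Set.mem_singleton_iff] at hj
  have hright (k : ℕ) : Function.update ω j a (2 * m + 2 + k) = ω (2 * m + 2 + k) :=
    Function.update_of_ne (by omega) _ _
  have hleft (k : ℕ) : Function.update ω j a (2 * m - 1 - k) = ω (2 * m - 1 - k) :=
    Function.update_of_ne (by omega) _ _
  simp only [IsRegularEnergy, hright, hleft]

lemma measurableSet_isRegularEnergy (hr : |r| < 1) (m : ℤ) :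
    MeasurableSet {p : (ℤ → Torus) × Torus | IsRegularEnergy r m p.1 p.2} := by
  have hphase (f : ℕ → ℤ) : Measurable fun (p : (ℤ → Torus) × Torus) (k : ℕ) =>
      alternate k (p.2 + p.1 (f k)) :=
    measurable_pi_lambda _ fun k => (continuous_alternate k).measurable.comp (by fun_prop)
  exact (hphase _ (measurableSet_hasDecayingOrbit hr)).inter
    (hphase _ (measurableSet_hasDecayingOrbit hr))

variable {ν : Measure Torus} [IsProbabilityMeasure ν]

theorem ae_isRegularEnergy (hr0 : r ≠ 0) (hr : |r| < 1) (hν : ¬ ν ⟂ₘ AddCircle.haarAddCircle)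
    (m : ℤ) (x : Torus) :
    ∀ᵐ ω ∂Measure.infinitePi (fun _ : ℤ => ν), IsRegularEnergy r m ω x := by
  have hhalf {f : ℕ → ℤ} (hf : Function.Injective f) :
      ∀ᵐ ω ∂Measure.infinitePi (fun _ : ℤ => ν),
        HasDecayingOrbit r fun k => alternate k (x + ω (f k)) := by
    have hdecay := ae_infinitePi_comp_of_ae hf (ae_hasDecayingOrbit_alternate hr0 hr hν x)
    exact hdecay
  exact (hhalf fun i j hij => by simpa using hij).and (hhalf fun i j hij => by simpa using hij)

theorem ae_ae_isRegularEnergy (hr0 : r ≠ 0) (hr : |r| < 1)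
    (hν : ¬ ν ⟂ₘ AddCircle.haarAddCircle) (m : ℤ) :
    ∀ᵐ ω ∂Measure.infinitePi (fun _ : ℤ => ν), ∀ᵐ x ∂AddCircle.haarAddCircle,
      IsRegularEnergy r m ω x :=
  (Measure.ae_ae_comm (measurableSet_isRegularEnergy hr m)).2
    (.of_forall (ae_isRegularEnergy hr0 hr hν m))

variable {t : ℝ} {U : (ℤ → Torus) → Hz →L[ℂ] Hz}
  {Φ : (ℤ → Torus) → C(Torus, ℂ) →⋆ₐ[ℂ] (Hz →L[ℂ] Hz)}
  (hU : ∀ (ω : ℤ → Torus) (k j : ℤ), inner ℂ (ez k) (U ω (ez j)) = ec (-(ω k)) * Sent t r k j)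
  (hΦ : ∀ ω, Φ ω (fourier 1) = U ω)
include hU hΦ

theorem ae_mem_imp_ae_spectralKernel_isRegularEnergy (hr0 : r ≠ 0) (hr : |r| < 1)
    (hν : ¬ ν ⟂ₘ AddCircle.haarAddCircle) {M : Set Torus} (hM : MeasurableSet M)
    (hac : ν.restrict M ≪ AddCircle.haarAddCircle) {m j : ℤ}
    (hj : j ∈ ({2 * m, 2 * m + 1} : Set ℤ)) :
    ∀ᵐ ω ∂Measure.infinitePi (fun _ : ℤ => ν), ω j ∈ M →
      ∀ᵐ x ∂spectralKernel hU hΦ j ω, IsRegularEnergy r m ω x := by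
  have hmeas := (hM.preimage (measurable_pi_apply j)).himp
    (measurableSet_ae_kernel (κ := spectralKernel hU hΦ j) (measurableSet_isRegularEnergy hr m))
  refine ae_infinitePi_of_ae_ae_update j hmeas ?_
  filter_upwards [ae_ae_isRegularEnergy hr0 hr hν m] with ω hω
  simp only [Function.update_self, isRegularEnergy_update_iff hj]
  exact (ae_restrict_iff' hM).1 (hac.ae_le (ae_ae_spectralKernel_update_of_ae hU hΦ ω j hω))

theorem ae_exists_forall_ae_spectralMeasure_isRegularEnergy (hr0 : r ≠ 0) (hr : |r| < 1)
    (hν : ¬ ν ⟂ₘ AddCircle.haarAddCircle) :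
    ∀ᵐ ω ∂Measure.infinitePi (fun _ : ℤ => ν), ∃ m : ℤ, ∀ j ∈ ({2 * m, 2 * m + 1} : Set ℤ),
      ∀ᵐ x ∂spectralMeasure (Φ ω) (ez j), IsRegularEnergy r m ω x := by
  obtain ⟨M, hM, hνM, hac⟩ := exists_measurableSet_restrict_absolutelyContinuous hν
  have hregular : ∀ᵐ ω ∂Measure.infinitePi (fun _ : ℤ => ν), ∀ m : ℤ,
      ∀ j : ({2 * m, 2 * m + 1} : Set ℤ), ω j ∈ M →
        ∀ᵐ x ∂spectralKernel hU hΦ j ω, IsRegularEnergy r m ω x :=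
    ae_all_iff.2 fun m => ae_all_iff.2 fun j =>
      ae_mem_imp_ae_spectralKernel_isRegularEnergy hU hΦ hr0 hr hν hM hac j.2
  have hinj : Function.Injective (fun (n : ℕ) (i : Fin 2) => 2 * (n : ℤ) + (i : ℤ)).uncurry := by
    rintro ⟨n, i⟩ ⟨n', i'⟩ h
    simp only [Function.uncurry_apply_pair] at h
    ext <;> dsimp only <;> omega
  filter_upwards [hregular, ae_exists_forall_mem_infinitePi hM hνM hinj] with ω hω ⟨n, hn⟩
  refine ⟨n, fun j hj => hω n ⟨j, hj⟩ ?_⟩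
  rcases hj with rfl | rfl
  · simpa using hn 0
  · simpa using hn 1

end RegularEnergies

lemma not_mutuallySingular_haarAddCircle {T : ℝ} [Fact (0 < T)] {ν : Measure (AddCircle T)}
    [SFinite ν] (hac : (volume : Measure (AddCircle T)).withDensity (ν.rnDeriv volume) ≠ 0) :
    ¬ ν ⟂ₘ AddCircle.haarAddCircle := by
  rw [ne_eq, Measure.withDensity_rnDeriv_eq_zero, AddCircle.volume_eq_smul_haarAddCircle] at hac
  exact fun h => hac (h.symm.smul _).symm

theorem localization_Z_general
    (t r : ℝ) (ht : t ≠ 0) (hr : r ≠ 0) (hrt : r ^ 2 + t ^ 2 = 1)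
    (ν : Measure Torus) [IsProbabilityMeasure ν]
    (hac : (volume : Measure Torus).withDensity (ν.rnDeriv volume) ≠ 0)
    (ℙ : Measure (ℤ → Torus))
    (hiid : ∀ (s : Finset ℤ) (A : ℤ → Set Torus), (∀ k, MeasurableSet (A k)) →
      ℙ {ω | ∀ k ∈ s, ω k ∈ A k} = ∏ k ∈ s, ν (A k))
    (U : (ℤ → Torus) → (Hz →L[ℂ] Hz))
    (hU : ∀ (ω : ℤ → Torus) (k j : ℤ),
      inner (𝕜 := ℂ) (ez k) (U ω (ez j)) = ec (-(ω k)) * Sent t r k j) :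
    ∀ᵐ ω ∂ℙ,
      (Submodule.span ℂ {ψ : Hz | ψ ≠ 0 ∧ ∃ μ : ℂ, U ω ψ = μ • ψ}).topologicalClosure = ⊤ ∧
      ∀ ψ : Hz, ψ ≠ 0 → (∃ μ : ℂ, U ω ψ = μ • ψ) →
        ∃ C > (0 : ℝ), ∃ lam > (0 : ℝ), ∀ k : ℤ,
          ‖inner (𝕜 := ℂ) (ez k) ψ‖ ≤ C * Real.exp (-lam * |(k : ℝ)|) := by
  have hℙ : ℙ = Measure.infinitePi fun _ => ν := Measure.eq_infinitePi _ fun s A hA => hiid s A hA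
  choose Φ hΦ using fun ω => exists_starAlgHom_fourier_one_eq (walk_mem_unitary (hU ω) hrt)
  have hregular := ae_exists_forall_ae_spectralMeasure_isRegularEnergy hU hΦ hr
    (abs_lt_one_of_sq_add_sq_eq_one hrt ht) (not_mutuallySingular_haarAddCircle hac)
  rw [hℙ]
  filter_upwards [hregular] with ω ⟨m, hm⟩
  refine ⟨closure_span_eigenvectors_eq_top (hU ω) (hΦ ω) hrt ht hm, fun ψ hψ0 ⟨_, hψ⟩ => ?_⟩
  simp only [inner_ez]
  exact hasExpDecay_of_eigenvector (hU ω) (hΦ ω) hrt ht hm hψ0 hψ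

/-- Localization for the random unitary operators `U_ω = D_ω S` on `ℓ²(ℤ)`:
for `ℙ`-a.e. `ω`, `U_ω` has pure point spectrum with exponentially decaying eigenfunctions. -/
theorem localization_Z
    (t r : ℝ) (ht0 : 0 < t) (ht1 : t < 1) (hr0 : 0 < r) (hr1 : r < 1)
    (hrt : r^2 + t^2 = 1)
    (ν : Measure Torus) [IsProbabilityMeasure ν]
    (hac : (volume : Measure Torus).withDensity (ν.rnDeriv volume) ≠ 0)
    (hsupp : (interior (measSupport ν)).Nonempty)
    (ℙ : Measure (ℤ → Torus)) [IsProbabilityMeasure ℙ]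
    (hiid : ∀ (s : Finset ℤ) (A : ℤ → Set Torus), (∀ k, MeasurableSet (A k)) →
      ℙ {ω | ∀ k ∈ s, ω k ∈ A k} = ∏ k ∈ s, ν (A k))
    (U : (ℤ → Torus) → (Hz →L[ℂ] Hz))
    (hU : ∀ (ω : ℤ → Torus) (k j : ℤ),
      inner (𝕜 := ℂ) (ez k) (U ω (ez j)) = ec (-(ω k)) * Sent t r k j) :
    ∀ᵐ ω ∂ℙ,
      (Submodule.span ℂ {ψ : Hz | ψ ≠ 0 ∧ ∃ μ : ℂ, U ω ψ = μ • ψ}).topologicalClosure = ⊤ ∧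
      ∀ ψ : Hz, ψ ≠ 0 → (∃ μ : ℂ, U ω ψ = μ • ψ) →
        ∃ C > (0:ℝ), ∃ lam > (0:ℝ), ∀ k : ℤ,
          ‖inner (𝕜 := ℂ) (ez k) ψ‖ ≤ C * Real.exp (-lam * |(k:ℝ)|) :=
  localization_Z_general t r ht0.ne' hr0.ne' hrt ν hac ℙ hiid U hU

end
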